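/- arXiv:0810.2840 — 2 statements merged into one kernel-verified Lean document; each statement's English description precedes it below -/
import Mathlib

section
/- For all integers d ≥ 1 and n ≥ 1, the second singular homology group H_2(SP^d(ℂP^n); ℤ) is isomorphic to ℤ. -/
open scoped Topology

/-- Complex projective `n`-space `ℂP^n`: the quotient of `ℂ^{n+1} ∖ {0}` by the scalar
action of `ℂ*`, with the quotient topology. -/
def CP (n : ℕ) : Type := Projectivization ℂ (Fin (n + 1) → ℂ)

instance (n : ℕ) : TopologicalSpace (CP n) :=
  inferInstanceAs (TopologicalSpace (Quotient (projectivizationSetoid ℂ (Fin (n + 1) → ℂ))))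

/-- The setoid on `X^d` identifying tuples up to the permutation action of the symmetric
group on `d` letters. -/
def SPSetoid (X : Type) (d : ℕ) : Setoid (Fin d → X) where
  r f g := ∃ σ : Equiv.Perm (Fin d), f ∘ σ = g
  iseqv := by
    refine ⟨fun f => ⟨Equiv.refl _, rfl⟩, ?_, ?_⟩
    · rintro f g ⟨σ, rfl⟩
      exact ⟨σ.symm, by funext i; simp⟩
    · rintro f g h ⟨σ, rfl⟩ ⟨τ, rfl⟩
      exact ⟨τ.trans σ, rfl⟩

/-- The `d`-th symmetric product `SP^d(X)`: the quotient of `X^d` by the permutation action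
of the symmetric group on `d` letters, with the quotient topology. -/
def SP (X : Type) [TopologicalSpace X] (d : ℕ) : Type := Quotient (SPSetoid X d)

instance (X : Type) [TopologicalSpace X] (d : ℕ) : TopologicalSpace (SP X d) :=
  inferInstanceAs (TopologicalSpace (Quotient (SPSetoid X d)))

open CategoryTheory in
/-- Singular homology of a topological space with coefficients in a commutative ring `R`. -/
noncomputable def SingularHomology (R : Type) [CommRing R]
    (X : Type) [TopologicalSpace X] (n : ℕ) : ModuleCat R :=
  ((AlgebraicTopology.alternatingFaceMapComplex (ModuleCat R)).obj
    (((SimplicialObject.whiskering _ _).obj (ModuleCat.free R)).obj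
      (TopCat.toSSet.obj (TopCat.of X)))).homology n


namespace SPH
open Finsupp

/-! ### Linear chains -/

abbrev LC (n : ℕ) (P : Type) := (Fin n → P) →₀ ℤ

noncomputable def ld {n : ℕ} {P : Type} : LC (n+1) P →ₗ[ℤ] LC n P :=
  Finsupp.linearCombination ℤ
    (fun l => ∑ i : Fin (n+1), (-1 : ℤ)^(i : ℕ) • single (l ∘ i.succAbove) (1:ℤ))

noncomputable def cone {n : ℕ} {P : Type} (b : P) : LC n P →ₗ[ℤ] LC (n+1) P :=
  Finsupp.lmapDomain ℤ ℤ (fun l => (Fin.cons b l : Fin (n+1) → P))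

noncomputable def lmap {n : ℕ} {P Q : Type} (g : P → Q) : LC n P →ₗ[ℤ] LC n Q :=
  Finsupp.lmapDomain ℤ ℤ (fun l => g ∘ l)

lemma ld_single {n : ℕ} {P : Type} (l : Fin (n+1) → P) :
    ld (single l 1) = ∑ i : Fin (n+1), (-1 : ℤ)^(i : ℕ) • single (l ∘ i.succAbove) (1:ℤ) := by
  simp [ld]

@[simp] lemma cone_single {n : ℕ} {P : Type} (b : P) (l : Fin n → P) :
    cone b (single l (1:ℤ)) = single (Fin.cons b l : Fin (n+1) → P) 1 := by
  simp [cone]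

@[simp] lemma lmap_single {n : ℕ} {P Q : Type} (g : P → Q) (l : Fin n → P) :
    lmap g (single l (1:ℤ)) = single (g ∘ l) 1 := by
  simp [lmap]

/-- extensionality on basis elements -/
lemma lc_ext {α : Type} {M : Type} [AddCommGroup M] {f g : (α →₀ ℤ) →ₗ[ℤ] M}
    (h : ∀ a, f (single a 1) = g (single a 1)) : f = g := by
  refine Finsupp.lhom_ext' fun a => LinearMap.ext_ring ?_
  simpa using h a

lemma ld_cone_zero {P : Type} (b : P) (c : LC 0 P) : ld (cone b c) = c := by
  have : (ld ∘ₗ cone b : LC 0 P →ₗ[ℤ] LC 0 P) = LinearMap.id := by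
    apply lc_ext
    intro l
    simp only [LinearMap.comp_apply, cone_single, ld_single, LinearMap.id_apply]
    rw [Fin.sum_univ_succ]
    have h : (Fin.cons b l : Fin 1 → P) ∘ (0 : Fin 1).succAbove = l := Subsingleton.elim _ _
    rw [h]
    simp
  exact LinearMap.congr_fun this c

lemma ld_cone_succ {n : ℕ} {P : Type} (b : P) (c : LC (n+1) P) :
    ld (cone b c) = c - cone b (ld c) := by
  have : (ld ∘ₗ cone b : LC (n+1) P →ₗ[ℤ] LC (n+1) P) = LinearMap.id - cone b ∘ₗ ld := by
    apply lc_ext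
    intro l
    simp only [LinearMap.comp_apply, cone_single, ld_single, LinearMap.id_apply,
      LinearMap.sub_apply, map_sum, map_smul]
    rw [Fin.sum_univ_succ]
    have h0 : (Fin.cons b l : Fin (n+2) → P) ∘ (0 : Fin (n+2)).succAbove = l := by
      funext j; simp
    rw [h0, sub_eq_add_neg, ← Finset.sum_neg_distrib]
    congr 1
    · simp
    · refine Finset.sum_congr rfl fun i _ => ?_
      have : (Fin.cons b l : Fin (n+2) → P) ∘ i.succ.succAbove
          = (Fin.cons b (l ∘ i.succAbove) : Fin (n+1) → P) := by
        funext j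
        refine Fin.cases ?_ (fun j => ?_) j <;> simp
      rw [this]
      simp [pow_succ]
  exact LinearMap.congr_fun this c

lemma single_eq_cone {n : ℕ} {P : Type} (l : Fin (n+1) → P) :
    (single l (1:ℤ) : LC (n+1) P) = cone (l 0) (single (Fin.tail l) 1) := by
  rw [cone_single, Fin.cons_self_tail]

lemma ld_ld {n : ℕ} {P : Type} (c : LC (n+2) P) : ld (ld c) = 0 := by
  have : (ld ∘ₗ ld : LC (n+2) P →ₗ[ℤ] LC n P) = 0 := by
    clear c
    apply lc_ext
    intro l
    simp only [LinearMap.comp_apply, LinearMap.zero_apply]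
    induction n with
    | zero =>
      rw [single_eq_cone, ld_cone_succ, map_sub, ld_cone_zero, sub_self]
    | succ n ih =>
      rw [single_eq_cone, ld_cone_succ, map_sub, ld_cone_succ, ih]
      simp
  exact LinearMap.congr_fun this c

lemma lmap_ld {n : ℕ} {P Q : Type} (g : P → Q) (c : LC (n+1) P) :
    lmap g (ld c) = ld (lmap g c) := by
  have : (lmap g ∘ₗ ld : LC (n+1) P →ₗ[ℤ] LC n Q) = ld ∘ₗ lmap g := by
    apply lc_ext
    intro l
    simp only [LinearMap.comp_apply, lmap_single, ld_single, map_sum, map_smul]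
    rfl
  exact LinearMap.congr_fun this c

lemma lmap_cone {n : ℕ} {P Q : Type} (g : P → Q) (b : P) (c : LC n P) :
    lmap g (cone b c) = cone (g b) (lmap g c) := by
  have : (lmap g ∘ₗ cone b : LC n P →ₗ[ℤ] LC (n+1) Q) = cone (g b) ∘ₗ lmap g := by
    apply lc_ext
    intro l
    simp only [LinearMap.comp_apply, lmap_single, cone_single]
    congr 1
    funext j
    refine Fin.cases ?_ (fun j => ?_) j <;> simp
  exact LinearMap.congr_fun this c

lemma lmap_id {n : ℕ} {P : Type} (c : LC n P) : lmap (fun x : P => x) c = c := by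
  have : (lmap (fun x : P => x) : LC n P →ₗ[ℤ] LC n P) = LinearMap.id := by
    apply lc_ext
    intro l
    simp only [lmap_single, LinearMap.id_apply]
    rfl
  exact LinearMap.congr_fun this c

/-- Recursive construction of chain homotopies by coning. -/
noncomputable def DH {P Q : Type} (F G : ∀ n, LC n P →ₗ[ℤ] LC n Q)
    (b : ∀ n, (Fin (n+1) → P) → Q) : ∀ n, LC n P →ₗ[ℤ] LC (n+1) Q
  | 0 => 0
  | n+1 => Finsupp.linearCombination ℤ
      (fun l => cone (b n l) (F _ (single l 1) - G _ (single l 1) - DH F G b n (ld (single l 1))))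

lemma DH_single {P Q : Type} (F G : ∀ n, LC n P →ₗ[ℤ] LC n Q)
    (b : ∀ n, (Fin (n+1) → P) → Q) (n : ℕ) (l : Fin (n+1) → P) :
    DH F G b (n+1) (single l 1) =
      cone (b n l) (F _ (single l 1) - G _ (single l 1) - DH F G b n (ld (single l 1))) := by
  simp [DH]

lemma ld_DH {P Q : Type} (F G : ∀ n, LC n P →ₗ[ℤ] LC n Q)
    (b : ∀ n, (Fin (n+1) → P) → Q)
    (hF : ∀ n c, ld (F (n+1) c) = F n (ld c)) (hG : ∀ n c, ld (G (n+1) c) = G n (ld c))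
    (h0 : F 0 = G 0) (n : ℕ) (c : LC (n+1) P) :
    ld (DH F G b (n+1) c) + DH F G b n (ld c) = F _ c - G _ c := by
  have : (ld ∘ₗ DH F G b (n+1) + DH F G b n ∘ₗ ld : LC (n+1) P →ₗ[ℤ] LC (n+1) Q)
      = F _ - G _ := by
    clear c
    apply lc_ext
    intro l
    simp only [LinearMap.add_apply, LinearMap.comp_apply, LinearMap.sub_apply]
    induction n with
    | zero =>
      rw [DH_single, ld_cone_succ]
      simp only [map_sub]
      rw [hF, hG, h0]
      simp [DH]
    | succ n ih =>
      have ih' : ∀ c : LC (n+1) P,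
          ld (DH F G b (n+1) c) + DH F G b n (ld c) = F _ c - G _ c := by
        intro c
        have : (ld ∘ₗ DH F G b (n+1) + DH F G b n ∘ₗ ld : LC (n+1) P →ₗ[ℤ] LC (n+1) Q)
            = F _ - G _ := by
          apply lc_ext
          intro l
          simpa using ih l
        exact LinearMap.congr_fun this c
      rw [DH_single, ld_cone_succ]
      simp only [map_sub]
      rw [hF, hG]
      have h1 := ih' (ld (single l 1))
      rw [ld_ld, map_zero, add_zero] at h1
      rw [h1]
      simp only [map_sub]
      abel
  exact LinearMap.congr_fun this c

lemma lmap_DH {P Q P' Q' : Type} (F G : ∀ n, LC n P →ₗ[ℤ] LC n Q)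
    (b : ∀ n, (Fin (n+1) → P) → Q)
    (F' G' : ∀ n, LC n P' →ₗ[ℤ] LC n Q')
    (b' : ∀ n, (Fin (n+1) → P') → Q') (g : P → P') (g' : Q → Q')
    (hF : ∀ n c, lmap g' (F n c) = F' n (lmap g c))
    (hG : ∀ n c, lmap g' (G n c) = G' n (lmap g c))
    (hb : ∀ n l, g' (b n l) = b' n (g ∘ l)) (n : ℕ) (c : LC n P) :
    lmap g' (DH F G b n c) = DH F' G' b' n (lmap g c) := by
  induction n with
  | zero => simp [DH]
  | succ n ih =>
    have : (lmap g' ∘ₗ DH F G b (n+1) : LC (n+1) P →ₗ[ℤ] LC (n+2) Q')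
        = DH F' G' b' (n+1) ∘ₗ lmap g := by
      apply lc_ext
      intro l
      simp only [LinearMap.comp_apply, lmap_single]
      rw [DH_single, DH_single, lmap_cone]
      simp only [map_sub]
      rw [hF, hG, hb, ih, lmap_ld, lmap_single]
    exact LinearMap.congr_fun this c

/-- Subdivision. -/
noncomputable def Sd {P : Type} (b : ∀ n, (Fin (n+1) → P) → P) : ∀ n, LC n P →ₗ[ℤ] LC n P
  | 0 => LinearMap.id
  | n+1 => Finsupp.linearCombination ℤ (fun l => cone (b n l) (Sd b n (ld (single l 1))))

lemma Sd_single {P : Type} (b : ∀ n, (Fin (n+1) → P) → P) (n : ℕ) (l : Fin (n+1) → P) :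
    Sd b (n+1) (single l 1) = cone (b n l) (Sd b n (ld (single l 1))) := by
  simp [Sd]

lemma ld_Sd {P : Type} (b : ∀ n, (Fin (n+1) → P) → P) (n : ℕ) (c : LC (n+1) P) :
    ld (Sd b (n+1) c) = Sd b n (ld c) := by
  have : (ld ∘ₗ Sd b (n+1) : LC (n+1) P →ₗ[ℤ] LC n P) = Sd b n ∘ₗ ld := by
    clear c
    induction n with
    | zero =>
      apply lc_ext
      intro l
      simp only [LinearMap.comp_apply]
      rw [Sd_single, ld_cone_zero]
    | succ n ih =>
      apply lc_ext
      intro l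
      simp only [LinearMap.comp_apply]
      rw [Sd_single, ld_cone_succ]
      have h1 := LinearMap.congr_fun ih (ld (single l 1))
      simp only [LinearMap.comp_apply] at h1
      rw [h1, ld_ld]
      simp
  exact LinearMap.congr_fun this c

lemma lmap_Sd {P Q : Type} (b : ∀ n, (Fin (n+1) → P) → P) (b' : ∀ n, (Fin (n+1) → Q) → Q)
    (g : P → Q) (hb : ∀ n l, g (b n l) = b' n (g ∘ l)) (n : ℕ) (c : LC n P) :
    lmap g (Sd b n c) = Sd b' n (lmap g c) := by
  induction n with
  | zero => simp [Sd]
  | succ n ih =>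
    have : (lmap g ∘ₗ Sd b (n+1) : LC (n+1) P →ₗ[ℤ] LC (n+1) Q)
        = Sd b' (n+1) ∘ₗ lmap g := by
      apply lc_ext
      intro l
      simp only [LinearMap.comp_apply, lmap_single]
      rw [Sd_single, Sd_single, lmap_cone, hb, ih, lmap_ld, lmap_single]
    exact LinearMap.congr_fun this c

end SPH


namespace SPH
open Finsupp

/-! ### Convex spaces -/

abbrev Del (n : ℕ) := stdSimplex ℝ (Fin n)

noncomputable def scomb {n k : ℕ} (l : Fin n → Del k) : C(Del n, Del k) where
  toFun t := ⟨fun j => ∑ i, t i * l i j, by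
    refine ⟨fun j => Finset.sum_nonneg fun i _ => mul_nonneg (t.2.1 i) ((l i).2.1 j), ?_⟩
    rw [Finset.sum_comm]
    have : ∀ i, ∑ j, t i * l i j = t i := fun i => by
      rw [← Finset.mul_sum, stdSimplex.sum_eq_one, mul_one]
    simp only [this, stdSimplex.sum_eq_one]⟩
  continuous_toFun := by
    refine Continuous.subtype_mk (continuous_pi fun j => continuous_finsetSum _ fun i _ => ?_) _
    exact (((continuous_apply i).comp continuous_subtype_val)).mul continuous_const

lemma scomb_apply {n k : ℕ} (l : Fin n → Del k) (t : Del n) (j : Fin k) :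
    scomb l t j = ∑ i, t i * l i j := rfl

class Cvx (P : Type) [TopologicalSpace P] where
  comb : ∀ {n : ℕ}, (Fin n → P) → C(Del n, P)
  comb_map : ∀ {m n : ℕ} (f : Fin m → Fin n) (l : Fin n → P) (t : Del m),
    comb l (stdSimplex.map f t) = comb (l ∘ f) t
  comb_vertex : ∀ {n : ℕ} (l : Fin n → P) (i : Fin n), comb l (stdSimplex.vertex i) = l i
  comb_comb : ∀ {m n : ℕ} (l : Fin n → P) (μ : Fin m → Del n) (t : Del m),
    comb l (scomb μ t) = comb (fun i => comb l (μ i)) t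

open Cvx

lemma map_apply' {m n : ℕ} (f : Fin m → Fin n) (t : Del m) (i : Fin n) :
    stdSimplex.map f t i = ∑ a with f a = i, t a := by
  change (stdSimplex.map f t : Fin n → ℝ) i = _
  rw [stdSimplex.map_coe, FunOnFinite.linearMap_apply_apply]

noncomputable instance (k : ℕ) : Cvx (Del k) where
  comb := scomb
  comb_map f l t := by
    apply stdSimplex.ext
    funext j
    change scomb l _ j = scomb _ t j
    simp only [scomb_apply, map_apply', Finset.sum_mul, Function.comp]
    rw [← Finset.sum_fiberwise Finset.univ f]
    refine Finset.sum_congr rfl fun i _ => Finset.sum_congr rfl fun a ha => ?_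
    rw [(Finset.mem_filter.1 ha).2]
  comb_vertex l i := by
    apply stdSimplex.ext
    funext j
    change scomb l _ j = l i j
    rw [scomb_apply, Finset.sum_eq_single i]
    · change (stdSimplex.vertex i : Fin _ → ℝ) i * _ = _
      simp
    · intro b _ hb
      change (stdSimplex.vertex i : Fin _ → ℝ) b * _ = _
      simp [hb]
    · simp
  comb_comb l μ t := by
    apply stdSimplex.ext
    funext j
    change scomb l _ j = scomb _ t j
    simp only [scomb_apply, Finset.sum_mul, Finset.mul_sum]
    rw [Finset.sum_comm]
    simp only [mul_assoc]

noncomputable instance (P Q : Type) [TopologicalSpace P] [TopologicalSpace Q] [Cvx P] [Cvx Q] :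
    Cvx (P × Q) where
  comb l := (comb (fun i => (l i).1)).prodMk (comb (fun i => (l i).2))
  comb_map f l t := by
    ext1
    · exact comb_map f (fun i => (l i).1) t
    · exact comb_map f (fun i => (l i).2) t
  comb_vertex l i := by
    ext1
    · exact comb_vertex (fun i => (l i).1) i
    · exact comb_vertex (fun i => (l i).2) i
  comb_comb l μ t := by
    ext1
    · exact comb_comb (fun i => (l i).1) μ t
    · exact comb_comb (fun i => (l i).2) μ t

section
variable {P Q : Type} [TopologicalSpace P] [TopologicalSpace Q] [Cvx P] [Cvx Q]

def IsAff (g : C(P, Q)) : Prop :=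
  ∀ (n : ℕ) (l : Fin n → P) (t : Del n), g (comb l t) = comb (g ∘ l) t

lemma isAff_comb {n : ℕ} (l : Fin n → P) : IsAff (comb l) := by
  intro m μ t
  exact comb_comb l μ t

noncomputable def bary (n : ℕ) (l : Fin (n+1) → P) : P := comb l stdSimplex.barycenter

lemma IsAff.bary {g : C(P, Q)} (hg : IsAff g) (n : ℕ) (l : Fin (n+1) → P) :
    g (bary n l) = SPH.bary n (g ∘ l) := hg _ l _

lemma comb_vertex_id (n : ℕ) : (comb (fun i : Fin n => (stdSimplex.vertex i : Del n)))
    = ContinuousMap.id (Del n) := by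
  ext1 t
  apply stdSimplex.ext
  funext j
  change scomb _ t j = t j
  rw [scomb_apply, Finset.sum_eq_single j]
  · change t j * (stdSimplex.vertex j : Fin _ → ℝ) j = _
    simp
  · intro b _ hb
    change _ * (stdSimplex.vertex b : Fin _ → ℝ) j = _
    simp [hb.symm]
  · simp
end

/-! ### Singular chains (augmented; index = number of vertices) -/

abbrev Sing (n : ℕ) (X : Type) [TopologicalSpace X] := C(Del n, X)
abbrev Chain (n : ℕ) (X : Type) [TopologicalSpace X] := Sing n X →₀ ℤ

noncomputable def face {n : ℕ} (i : Fin (n+1)) : C(Del n, Del (n+1)) :=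
  ⟨stdSimplex.map i.succAbove, stdSimplex.continuous_map _⟩

section
variable {X Y Z : Type} [TopologicalSpace X] [TopologicalSpace Y] [TopologicalSpace Z]
variable {P Q : Type} [TopologicalSpace P] [TopologicalSpace Q] [Cvx P] [Cvx Q]

noncomputable def d {n : ℕ} : Chain (n+1) X →ₗ[ℤ] Chain n X :=
  Finsupp.linearCombination ℤ
    (fun s => ∑ i : Fin (n+1), (-1 : ℤ)^(i : ℕ) • single (s.comp (face i)) (1:ℤ))

noncomputable def cmap {n : ℕ} (f : C(X, Y)) : Chain n X →ₗ[ℤ] Chain n Y :=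
  Finsupp.lmapDomain ℤ ℤ (fun s => f.comp s)

noncomputable def push {n : ℕ} (τ : C(P, X)) : LC n P →ₗ[ℤ] Chain n X :=
  Finsupp.lmapDomain ℤ ℤ (fun l => τ.comp (comb l))

lemma d_single {n : ℕ} (s : Sing (n+1) X) :
    d (single s 1) = ∑ i : Fin (n+1), (-1 : ℤ)^(i : ℕ) • single (s.comp (face i)) (1:ℤ) := by
  simp [d]

@[simp] lemma cmap_single {n : ℕ} (f : C(X, Y)) (s : Sing n X) :
    cmap f (single s (1:ℤ)) = single (f.comp s) 1 := by simp [cmap]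

@[simp] lemma push_single {n : ℕ} (τ : C(P, X)) (l : Fin n → P) :
    push τ (single l (1:ℤ)) = single (τ.comp (comb l)) 1 := by simp [push]

lemma d_push {n : ℕ} (τ : C(P, X)) (c : LC (n+1) P) : d (push τ c) = push τ (ld c) := by
  have : (d ∘ₗ push τ : LC (n+1) P →ₗ[ℤ] Chain n X) = push τ ∘ₗ ld := by
    apply lc_ext
    intro l
    simp only [LinearMap.comp_apply, push_single, ld_single, d_single, map_sum, map_smul]
    refine Finset.sum_congr rfl fun i _ => ?_
    congr 2
    ext t
    exact congrArg τ (comb_map i.succAbove l t)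
  exact LinearMap.congr_fun this c

lemma push_comp {n : ℕ} (τ : C(P, X)) (g : C(Q, P)) (hg : IsAff g) (c : LC n Q) :
    push (τ.comp g) c = push τ (lmap g c) := by
  have : (push (τ.comp g) : LC n Q →ₗ[ℤ] Chain n X) = push τ ∘ₗ lmap g := by
    apply lc_ext
    intro l
    simp only [LinearMap.comp_apply, push_single, lmap_single]
    congr 1
    ext t
    exact congrArg τ (hg _ l t)
  exact LinearMap.congr_fun this c

lemma cmap_push {n : ℕ} (f : C(X, Y)) (τ : C(P, X)) (c : LC n P) :
    cmap f (push τ c) = push (f.comp τ) c := by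
  have : (cmap f ∘ₗ push τ : LC n P →ₗ[ℤ] Chain n Y) = push (f.comp τ) := by
    apply lc_ext
    intro l
    simp only [LinearMap.comp_apply, push_single, cmap_single]
    rfl
  exact LinearMap.congr_fun this c

lemma cmap_d {n : ℕ} (f : C(X, Y)) (c : Chain (n+1) X) : cmap f (d c) = d (cmap f c) := by
  have : (cmap f ∘ₗ d : Chain (n+1) X →ₗ[ℤ] Chain n Y) = d ∘ₗ cmap f := by
    apply lc_ext
    intro l
    simp only [LinearMap.comp_apply, cmap_single, d_single, map_sum, map_smul]
    rfl
  exact LinearMap.congr_fun this c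

lemma cmap_comp {n : ℕ} (f : C(Y, Z)) (g : C(X, Y)) (c : Chain n X) :
    cmap (f.comp g) c = cmap f (cmap g c) := by
  have : (cmap (f.comp g) : Chain n X →ₗ[ℤ] Chain n Z) = cmap f ∘ₗ cmap g := by
    apply lc_ext
    intro l
    simp only [LinearMap.comp_apply, cmap_single]
    rfl
  exact LinearMap.congr_fun this c

lemma cmap_id {n : ℕ} (c : Chain n X) : cmap (ContinuousMap.id X) c = c := by
  have : (cmap (ContinuousMap.id X) : Chain n X →ₗ[ℤ] Chain n X) = LinearMap.id := by
    apply lc_ext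
    intro l
    simp
  exact LinearMap.congr_fun this c

/-- The identity simplex as a linear chain. -/
noncomputable def iot (n : ℕ) : LC n (Del n) := single (fun i => stdSimplex.vertex i) 1

lemma push_iot {n : ℕ} (s : Sing n X) : push s (iot n) = single s 1 := by
  rw [iot, push_single, comb_vertex_id, ContinuousMap.comp_id]

lemma lmap_comb_iot {n : ℕ} (l : Fin n → P) : lmap (comb l) (iot n) = single l 1 := by
  rw [iot, lmap_single]
  congr 1
  funext i
  exact comb_vertex l i

lemma d_d {n : ℕ} (c : Chain (n+2) X) : d (d c) = 0 := by
  have : (d ∘ₗ d : Chain (n+2) X →ₗ[ℤ] Chain n X) = 0 := by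
    apply lc_ext
    intro s
    simp only [LinearMap.comp_apply, LinearMap.zero_apply]
    rw [← push_iot, d_push, d_push, ld_ld, map_zero]
  exact LinearMap.congr_fun this c

/-- Linear operator `T`. -/
noncomputable def LT (n : ℕ) : LC n P →ₗ[ℤ] LC (n+1) P :=
  DH (fun _ => LinearMap.id) (Sd bary) bary n

noncomputable def sd (n : ℕ) : Chain n X →ₗ[ℤ] Chain n X :=
  Finsupp.linearCombination ℤ (fun s => push s (Sd bary n (iot n)))

noncomputable def tt (n : ℕ) : Chain n X →ₗ[ℤ] Chain (n+1) X :=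
  Finsupp.linearCombination ℤ (fun s => push s (LT n (iot n)))

@[simp] lemma sd_single (n : ℕ) (s : Sing n X) :
    sd n (single s 1) = push s (Sd bary n (iot n)) := by simp [sd]

@[simp] lemma tt_single (n : ℕ) (s : Sing n X) :
    tt n (single s 1) = push s (LT n (iot n)) := by simp [tt]

lemma lmap_Sd_bary {n : ℕ} (g : C(P, Q)) (hg : IsAff g) (c : LC n P) :
    lmap g (Sd bary n c) = Sd bary n (lmap g c) :=
  lmap_Sd _ _ g hg.bary n c

lemma lmap_LT {n : ℕ} (g : C(P, Q)) (hg : IsAff g) (c : LC n P) :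
    lmap g (LT n c) = LT n (lmap g c) :=
  lmap_DH _ _ _ _ _ _ g g (fun _ _ => rfl) (fun _ c => lmap_Sd_bary g hg c) hg.bary n c

lemma sd_push {n : ℕ} (τ : C(P, X)) (c : LC n P) : sd n (push τ c) = push τ (Sd bary n c) := by
  have : (sd n ∘ₗ push τ : LC n P →ₗ[ℤ] Chain n X) = push τ ∘ₗ Sd bary n := by
    apply lc_ext
    intro l
    simp only [LinearMap.comp_apply, push_single, sd_single]
    rw [push_comp _ _ (isAff_comb l), lmap_Sd_bary _ (isAff_comb l), lmap_comb_iot]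
  exact LinearMap.congr_fun this c

lemma tt_push {n : ℕ} (τ : C(P, X)) (c : LC n P) : tt n (push τ c) = push τ (LT n c) := by
  have : (tt n ∘ₗ push τ : LC n P →ₗ[ℤ] Chain (n+1) X) = push τ ∘ₗ LT n := by
    apply lc_ext
    intro l
    simp only [LinearMap.comp_apply, push_single, tt_single]
    rw [push_comp _ _ (isAff_comb l), lmap_LT _ (isAff_comb l), lmap_comb_iot]
  exact LinearMap.congr_fun this c

lemma d_sd {n : ℕ} (c : Chain (n+1) X) : d (sd (n+1) c) = sd n (d c) := by
  have : (d ∘ₗ sd (n+1) : Chain (n+1) X →ₗ[ℤ] Chain n X) = sd n ∘ₗ d := by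
    apply lc_ext
    intro s
    simp only [LinearMap.comp_apply]
    rw [← push_iot, sd_push, d_push, d_push, sd_push, ld_Sd]
  exact LinearMap.congr_fun this c

lemma ld_LT {n : ℕ} (c : LC (n+1) P) :
    ld (LT (n+1) c) + LT n (ld c) = c - Sd bary (n+1) c :=
  ld_DH (fun _ => LinearMap.id) (Sd bary) bary (fun _ _ => rfl) (fun n c => ld_Sd _ n c) rfl n c

lemma d_tt {n : ℕ} (c : Chain (n+1) X) :
    d (tt (n+1) c) + tt n (d c) = c - sd (n+1) c := by
  have : (d ∘ₗ tt (n+1) + tt n ∘ₗ d : Chain (n+1) X →ₗ[ℤ] Chain (n+1) X)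
      = LinearMap.id - sd (n+1) := by
    apply lc_ext
    intro s
    simp only [LinearMap.comp_apply, LinearMap.add_apply, LinearMap.sub_apply, LinearMap.id_apply]
    rw [← push_iot, sd_push, d_push, tt_push, tt_push, d_push, ← map_add, ld_LT, map_sub]
  exact LinearMap.congr_fun this c

lemma sd_zero (c : Chain 0 X) : sd 0 c = c := by
  have : (sd 0 : Chain 0 X →ₗ[ℤ] Chain 0 X) = LinearMap.id := by
    apply lc_ext
    intro s
    rw [← push_iot, sd_push]
    rfl
  exact LinearMap.congr_fun this c

lemma cmap_sd {n : ℕ} (f : C(X, Y)) (c : Chain n X) : cmap f (sd n c) = sd n (cmap f c) := by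
  have : (cmap f ∘ₗ sd n : Chain n X →ₗ[ℤ] Chain n Y) = sd n ∘ₗ cmap f := by
    apply lc_ext
    intro s
    simp only [LinearMap.comp_apply, sd_single, cmap_push, cmap_single]
  exact LinearMap.congr_fun this c

lemma cmap_tt {n : ℕ} (f : C(X, Y)) (c : Chain n X) : cmap f (tt n c) = tt n (cmap f c) := by
  have : (cmap f ∘ₗ tt n : Chain n X →ₗ[ℤ] Chain (n+1) Y) = tt n ∘ₗ cmap f := by
    apply lc_ext
    intro s
    simp only [LinearMap.comp_apply, tt_single, cmap_push, cmap_single]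
  exact LinearMap.congr_fun this c

/-! ### Homotopy invariance -/

noncomputable def v0 : Del 2 := stdSimplex.vertex 0
noncomputable def v1 : Del 2 := stdSimplex.vertex 1

noncomputable def LP (n : ℕ) : LC n P →ₗ[ℤ] LC (n+1) (P × Del 2) :=
  DH (fun _ => lmap (fun x => (x, v0))) (fun _ => lmap (fun x => (x, v1)))
    (fun n l => (bary n l, v0)) n

lemma lmap_lmap {n : ℕ} {A B C : Type} (f : B → C) (g : A → B) (c : LC n A) :
    lmap f (lmap g c) = lmap (fun x => f (g x)) c := by
  have : (lmap f ∘ₗ lmap g : LC n A →ₗ[ℤ] LC n C) = lmap (fun x => f (g x)) := by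
    apply lc_ext
    intro s
    simp only [LinearMap.comp_apply, lmap_single]
    rfl
  exact LinearMap.congr_fun this c

lemma lmap_LP {n : ℕ} (g : C(P, Q)) (hg : IsAff g) (c : LC n P) :
    lmap (g.prodMap (ContinuousMap.id (Del 2))) (LP n c) = LP n (lmap g c) := by
  refine lmap_DH _ _ _ _ _ _ g _ (fun _ c => ?_) (fun _ c => ?_) (fun n l => ?_) n c
  · rw [lmap_lmap, lmap_lmap]; rfl
  · rw [lmap_lmap, lmap_lmap]; rfl
  · change (g _, _) = (_, _)
    rw [hg.bary]
    rfl

lemma isAff_prod (g : C(P, Q)) (hg : IsAff g) :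
    IsAff (g.prodMap (ContinuousMap.id (Del 2))) := by
  intro n l t
  change (g _, _) = (_, _)
  ext1
  · exact hg n _ t
  · rfl

noncomputable def hp (H : C(X × Del 2, Y)) (n : ℕ) : Chain n X →ₗ[ℤ] Chain (n+1) Y :=
  Finsupp.linearCombination ℤ
    (fun s => push (H.comp (s.prodMap (ContinuousMap.id (Del 2)))) (LP n (iot n)))

lemma hp_push {n : ℕ} (H : C(X × Del 2, Y)) (τ : C(P, X)) (c : LC n P) :
    hp H n (push τ c) = push (H.comp (τ.prodMap (ContinuousMap.id (Del 2)))) (LP n c) := by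
  have : (hp H n ∘ₗ push τ : LC n P →ₗ[ℤ] Chain (n+1) Y) =
      push (H.comp (τ.prodMap (ContinuousMap.id (Del 2)))) ∘ₗ LP n := by
    apply lc_ext
    intro l
    simp only [LinearMap.comp_apply, push_single]
    rw [← lmap_comb_iot l, ← lmap_LP _ (isAff_comb l),
      ← push_comp _ _ (isAff_prod _ (isAff_comb l))]
    simp only [hp, linearCombination_single, one_smul]
    rfl
  exact LinearMap.congr_fun this c

lemma push_lmap_v {n : ℕ} (H : C(X × Del 2, Y)) (τ : C(P, X)) (v : Del 2) (c : LC n P) :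
    push (H.comp (τ.prodMap (ContinuousMap.id (Del 2)))) (lmap (fun x => (x, v)) c) =
      cmap (H.comp ((ContinuousMap.id X).prodMk (ContinuousMap.const X v))) (push τ c) := by
  have hv : ∀ n (t : Del n), comb (fun _ => v) t = v := by
    intro n t
    apply stdSimplex.ext
    funext j
    change scomb _ t j = v j
    rw [scomb_apply, ← Finset.sum_mul, stdSimplex.sum_eq_one, one_mul]
  have : (push (H.comp (τ.prodMap (ContinuousMap.id (Del 2)))) ∘ₗ lmap (fun x => (x, v)) :
      LC n P →ₗ[ℤ] Chain n Y) =
      cmap (H.comp ((ContinuousMap.id X).prodMk (ContinuousMap.const X v))) ∘ₗ push τ := by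
    apply lc_ext
    intro l
    simp only [LinearMap.comp_apply, push_single, lmap_single, cmap_single]
    congr 1
    ext t
    change H (τ (comb l t), comb (fun _ => v) t) = H (τ (comb l t), v)
    rw [hv]
  exact LinearMap.congr_fun this c

lemma ld_LP {n : ℕ} (c : LC (n+1) P) :
    ld (LP (n+1) c) + LP n (ld c) = lmap (fun x => (x, v0)) c - lmap (fun x => (x, v1)) c := by
  refine ld_DH (fun _ => lmap (fun x => (x, v0))) (fun _ => lmap (fun x => (x, v1)))
    (fun n l => (bary n l, v0))
    (fun _ _ => (lmap_ld _ _).symm) (fun _ _ => (lmap_ld _ _).symm) ?_ n c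
  apply lc_ext
  intro l
  simp only [lmap_single]
  congr 1
  exact Subsingleton.elim _ _

lemma d_hp {n : ℕ} (H : C(X × Del 2, Y)) (c : Chain (n+1) X) :
    d (hp H (n+1) c) + hp H n (d c) =
      cmap (H.comp ((ContinuousMap.id X).prodMk (ContinuousMap.const X v0))) c -
      cmap (H.comp ((ContinuousMap.id X).prodMk (ContinuousMap.const X v1))) c := by
  have : (d ∘ₗ hp H (n+1) + hp H n ∘ₗ d : Chain (n+1) X →ₗ[ℤ] Chain (n+1) Y)
      = cmap (H.comp ((ContinuousMap.id X).prodMk (ContinuousMap.const X v0))) -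
      cmap (H.comp ((ContinuousMap.id X).prodMk (ContinuousMap.const X v1))) := by
    apply lc_ext
    intro s
    simp only [LinearMap.comp_apply, LinearMap.add_apply, LinearMap.sub_apply]
    rw [← push_iot, hp_push, d_push, d_push, hp_push, ← push_lmap_v, ← push_lmap_v, ← map_add,
      ld_LP, map_sub]
  exact LinearMap.congr_fun this c
end
end SPH


namespace SPH
open Finsupp Cvx

section
variable {X Y Z : Type} [TopologicalSpace X] [TopologicalSpace Y] [TopologicalSpace Z]
variable {P Q : Type} [TopologicalSpace P] [TopologicalSpace Q] [Cvx P] [Cvx Q]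

/-! ### Supports -/

def Ch (A : Set X) (n : ℕ) : Submodule ℤ (Chain n X) :=
  Finsupp.supported ℤ ℤ {s : Sing n X | ∀ t, s t ∈ A}

lemma single_mem_supp {α : Type} {S : Set α} {a : α} (h : a ∈ S) :
    (single a (1:ℤ)) ∈ Finsupp.supported ℤ ℤ S := Finsupp.single_mem_supported ℤ 1 h

lemma supp_le {α M : Type} [AddCommGroup M] {S : Set α} (L : (α →₀ ℤ) →ₗ[ℤ] M)
    (N : Submodule ℤ M) (h : ∀ a ∈ S, L (single a 1) ∈ N) {c : α →₀ ℤ}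
    (hc : c ∈ Finsupp.supported ℤ ℤ S) : L c ∈ N := by
  rw [Finsupp.supported_eq_span_single] at hc
  have : Submodule.span ℤ ((fun i => single i (1:ℤ)) '' S) ≤ N.comap L := by
    rw [Submodule.span_le]
    rintro _ ⟨a, ha, rfl⟩
    exact h a ha
  exact this hc

lemma single_mem_Ch {A : Set X} {n : ℕ} {s : Sing n X} (h : ∀ t, s t ∈ A) :
    (single s (1:ℤ)) ∈ Ch A n := single_mem_supp h

lemma Ch_le {M : Type} [AddCommGroup M] {A : Set X} {n : ℕ} (L : Chain n X →ₗ[ℤ] M)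
    (N : Submodule ℤ M) (h : ∀ s : Sing n X, (∀ t, s t ∈ A) → L (single s 1) ∈ N) {c : Chain n X}
    (hc : c ∈ Ch A n) : L c ∈ N := supp_le L N h hc

lemma Ch_univ {n : ℕ} (c : Chain n X) : c ∈ Ch (Set.univ : Set X) n := by
  simp [Ch, Finsupp.supported]

lemma Ch_mono {A B : Set X} (h : A ⊆ B) {n : ℕ} : Ch A n ≤ Ch B n :=
  Finsupp.supported_mono fun _ hs t => h (hs t)

lemma Ch_inter {A B : Set X} {n : ℕ} {c : Chain n X} (hA : c ∈ Ch A n) (hB : c ∈ Ch B n) :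
    c ∈ Ch (A ∩ B) n := by
  rw [Ch, Finsupp.mem_supported] at *
  intro s hs t
  exact ⟨hA hs t, hB hs t⟩

lemma d_mem {A : Set X} {n : ℕ} {c : Chain (n+1) X} (hc : c ∈ Ch A (n+1)) : d c ∈ Ch A n := by
  refine Ch_le d (Ch A n) (fun s hs => ?_) hc
  rw [d_single]
  exact Submodule.sum_mem _ fun i _ => Submodule.smul_mem _ _ (single_mem_Ch fun t => hs _)

lemma push_mem {A : Set X} {n : ℕ} (τ : C(P, X)) (h : ∀ p, τ p ∈ A) (c : LC n P) :
    push τ c ∈ Ch A n := by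
  have : c ∈ Finsupp.supported ℤ ℤ (Set.univ : Set (Fin n → P)) := by simp
  refine supp_le (push τ) (Ch A n) (fun l _ => ?_) this
  rw [push_single]
  exact single_mem_Ch fun t => h _

lemma sd_mem {A : Set X} {n : ℕ} {c : Chain n X} (hc : c ∈ Ch A n) : sd n c ∈ Ch A n := by
  refine Ch_le (sd n) (Ch A n) (fun s hs => ?_) hc
  rw [sd_single]
  exact push_mem s hs _

lemma tt_mem {A : Set X} {n : ℕ} {c : Chain n X} (hc : c ∈ Ch A n) : tt n c ∈ Ch A (n+1) := by
  refine Ch_le (tt n) (Ch A (n+1)) (fun s hs => ?_) hc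
  rw [tt_single]
  exact push_mem s hs _

lemma cmap_mem {A : Set X} {B : Set Y} {n : ℕ} (f : C(X, Y)) (h : ∀ x ∈ A, f x ∈ B)
    {c : Chain n X} (hc : c ∈ Ch A n) : cmap f c ∈ Ch B n := by
  refine Ch_le (cmap f) (Ch B n) (fun s hs => ?_) hc
  rw [cmap_single]
  exact single_mem_Ch fun t => h _ (hs t)

/-! ### Mesh -/

lemma del_dist_le {k : ℕ} {x y : Del k} {r : ℝ} (hr : 0 ≤ r) (h : ∀ j, |x j - y j| ≤ r) :
    dist x y ≤ r := by
  rw [Subtype.dist_eq, dist_pi_le_iff hr]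
  intro j
  rw [Real.dist_eq]
  exact h j

lemma del_abs_le {k : ℕ} (x y : Del k) (j : Fin k) : |x j - y j| ≤ dist x y := by
  rw [Subtype.dist_eq, ← Real.dist_eq]
  exact dist_le_pi_dist (x : Fin k → ℝ) y j

lemma dist_comb_le {n k : ℕ} (l : Fin n → Del k) (t : Del n) (x : Del k) (r : ℝ) (hr : 0 ≤ r)
    (h : ∀ i, dist (l i) x ≤ r) : dist (comb l t) x ≤ r := by
  refine del_dist_le hr fun j => ?_
  have h1 : comb l t j - x j = ∑ i, t i * (l i j - x j) := by
    change scomb l t j - x j = _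
    simp only [scomb_apply, mul_sub, Finset.sum_sub_distrib, ← Finset.sum_mul,
      stdSimplex.sum_eq_one, one_mul]
  rw [h1]
  calc |∑ i, t i * (l i j - x j)| ≤ ∑ i, |t i * (l i j - x j)| := Finset.abs_sum_le_sum_abs _ _
    _ ≤ ∑ i, t i * r := by
        refine Finset.sum_le_sum fun i _ => ?_
        rw [abs_mul, abs_of_nonneg (stdSimplex.zero_le t i)]
        exact mul_le_mul_of_nonneg_left ((del_abs_le _ _ _).trans (h i)) (stdSimplex.zero_le t i)
    _ = r := by rw [← Finset.sum_mul, stdSimplex.sum_eq_one, one_mul]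

lemma dist_bary_le {n k : ℕ} (l : Fin (n+1) → Del k) (r : ℝ) (hr : 0 ≤ r)
    (h : ∀ i j, dist (l i) (l j) ≤ r) (j : Fin (n+1)) :
    dist (l j) (bary n l) ≤ (n / (n+1) : ℝ) * r := by
  have hn : (0:ℝ) < n + 1 := by positivity
  refine del_dist_le (by positivity) fun a => ?_
  rw [abs_sub_comm]
  have h1 : bary n l a - l j a = ∑ i, (1 / (n+1) : ℝ) * (l i a - l j a) := by
    change scomb l _ a - l j a = _
    rw [scomb_apply]
    have hb : ∀ i : Fin (n+1), (stdSimplex.barycenter : Del (n+1)) i = 1 / ((n:ℝ)+1) := by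
      intro i
      change (Fintype.card (Fin (n+1)) : ℝ)⁻¹ = _
      simp
    simp only [mul_sub, Finset.sum_sub_distrib, hb]
    simp
    field_simp
  rw [h1]
  calc |∑ i, (1 / (n+1) : ℝ) * (l i a - l j a)|
      ≤ ∑ i, |(1 / (n+1) : ℝ) * (l i a - l j a)| := Finset.abs_sum_le_sum_abs _ _
    _ ≤ ∑ i, (1 / (n+1) : ℝ) * (if i = j then 0 else r) := by
        refine Finset.sum_le_sum fun i _ => ?_
        rw [abs_mul, abs_of_nonneg (by positivity)]
        refine mul_le_mul_of_nonneg_left ?_ (by positivity)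
        split_ifs with hij
        · simp [hij]
        · exact (del_abs_le _ _ _).trans (h i j)
    _ = (n / (n+1) : ℝ) * r := by
        rw [← Finset.mul_sum]
        have : ∑ i : Fin (n+1), (if i = j then (0:ℝ) else r) = n * r := by
          have : ∀ i : Fin (n+1), (if i = j then (0:ℝ) else r) = r - if i = j then r else 0 := by
            intro i; split_ifs <;> simp
          simp only [this, Finset.sum_sub_distrib, Finset.sum_ite_eq', Finset.mem_univ, if_true]
          simp
          ring
        rw [this]
        field_simp

def Msh (k n : ℕ) (r : ℝ) : Set (Fin n → Del k) := {l | ∀ i j, dist (l i) (l j) ≤ r}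

lemma mesh_Sd_aux {k : ℕ} (n : ℕ) (l : Fin n → Del k) (r : ℝ) (hr : 0 ≤ r)
    (h : ∀ i j, dist (l i) (l j) ≤ r) :
    Sd bary n (single l 1) ∈ Finsupp.supported ℤ ℤ
      {μ : Fin n → Del k | (∀ x ρ, 0 ≤ ρ → (∀ j, dist (l j) x ≤ ρ) → ∀ i, dist (μ i) x ≤ ρ) ∧
        ∀ i j, dist (μ i) (μ j) ≤ (n / (n+1) : ℝ) * r} := by
  induction n with
  | zero =>
    refine single_mem_supp ⟨fun x ρ _ h i => h i, fun i => i.elim0⟩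
  | succ n ih =>
    rw [Sd_single, ld_single]
    simp only [map_sum, map_smul]
    refine Submodule.sum_mem _ fun a _ => Submodule.smul_mem _ _ ?_
    have h1 := ih (l ∘ a.succAbove) (fun i j => h _ _)
    refine supp_le (cone (bary n l)) _ (fun μ hμ => ?_) h1
    rw [cone_single]
    have hq : (n / (n+1) : ℝ) * r ≤ ((n+1 : ℕ) / ((n+1 : ℕ)+1) : ℝ) * r := by
      refine mul_le_mul_of_nonneg_right ?_ hr
      rw [div_le_div_iff₀ (by positivity) (by positivity)]
      push_cast
      nlinarith
    have hb : ∀ i, dist (μ i) (bary n l) ≤ (n / (n+1) : ℝ) * r := fun i =>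
      hμ.1 (bary n l) _ (by positivity) (fun j => dist_bary_le l r hr h _) i
    refine single_mem_supp ⟨fun x ρ hρ hx i => ?_, fun i j => ?_⟩
    · refine Fin.cases ?_ (fun i => ?_) i
      · rw [Fin.cons_zero]
        exact dist_comb_le l _ x ρ hρ hx
      · rw [Fin.cons_succ]
        exact hμ.1 x ρ hρ (fun j => hx _) i
    · refine le_trans ?_ hq
      refine Fin.cases ?_ (fun i => ?_) i <;> refine Fin.cases ?_ (fun j => ?_) j <;>
        simp only [Fin.cons_zero, Fin.cons_succ]
      · rw [dist_self]; positivity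
      · rw [dist_comm]; exact hb j
      · exact hb i
      · exact hμ.2 i j

lemma mesh_Sd {k n : ℕ} {r : ℝ} (hr : 0 ≤ r) {c : LC n (Del k)}
    (hc : c ∈ Finsupp.supported ℤ ℤ (Msh k n r)) :
    Sd bary n c ∈ Finsupp.supported ℤ ℤ (Msh k n ((n / (n+1) : ℝ) * r)) := by
  refine supp_le (Sd bary n) _ (fun l hl => ?_) hc
  exact Finsupp.supported_mono (fun μ hμ => hμ.2) (mesh_Sd_aux n l r hr hl)

lemma mesh_iter {k n : ℕ} (N : ℕ) (c : LC n (Del k)) :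
    (Sd bary n ^ N) c ∈ Finsupp.supported ℤ ℤ (Msh k n ((n / (n+1) : ℝ) ^ N)) := by
  induction N with
  | zero =>
    have : (Msh k n ((n / (n+1) : ℝ) ^ 0)) = Set.univ := by
      ext l
      simp only [Msh, pow_zero, Set.mem_ofPred_eq, Set.mem_univ, iff_true]
      intro i j
      refine del_dist_le zero_le_one fun a => ?_
      have h1 := stdSimplex.zero_le (l i) a
      have h2 := stdSimplex.zero_le (l j) a
      have h3 := stdSimplex.le_one (l i) a
      have h4 := stdSimplex.le_one (l j) a
      rw [abs_le]; constructor <;> linarith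
    rw [this]
    simp
  | succ N ih =>
    rw [pow_succ', pow_succ']
    exact mesh_Sd (by positivity) ih

lemma sd_pow_push {n : ℕ} (N : ℕ) (τ : C(P, X)) (c : LC n P) :
    (sd n ^ N) (push τ c) = push τ ((Sd bary n ^ N) c) := by
  induction N with
  | zero => rfl
  | succ N ih => rw [pow_succ', pow_succ', Module.End.mul_apply, ih, sd_push]; rfl

lemma small_single {A B : Set X} (hA : IsOpen A) (hB : IsOpen B) {n : ℕ} (s : Sing n X)
    (hs : ∀ t, s t ∈ A ∪ B) : ∃ N : ℕ, (sd n ^ N) (single s 1) ∈ Ch A n ⊔ Ch B n := by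
  cases n with
  | zero =>
    refine ⟨0, Submodule.mem_sup_left (single_mem_Ch fun t => ?_)⟩
    have := stdSimplex.sum_eq_one t
    simp at this
  | succ n =>
    obtain ⟨δ, hδ, hleb⟩ := lebesgue_number_lemma_of_metric (s := (Set.univ : Set (Del (n+1))))
      (c := fun b : Bool => if b then s ⁻¹' A else s ⁻¹' B) isCompact_univ
      (by rintro (_ | _)
          · exact hB.preimage s.continuous
          · exact hA.preimage s.continuous)
      (by intro t _
          rcases hs t with h | h
          · exact Set.mem_iUnion.2 ⟨true, h⟩
          · exact Set.mem_iUnion.2 ⟨false, h⟩)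
    have hq : ((n+1 : ℕ) / ((n+1 : ℕ)+1) : ℝ) < 1 := by
      rw [div_lt_one (by positivity)]; linarith
    obtain ⟨N, hN⟩ := exists_pow_lt_of_lt_one hδ hq
    refine ⟨N, ?_⟩
    rw [← push_iot, sd_pow_push]
    refine supp_le (push s) _ (fun μ hμ => ?_) (mesh_iter N (iot (n+1)))
    rw [push_single]
    obtain ⟨b, hb⟩ := hleb (μ 0) (Set.mem_univ _)
    have key : ∀ t, comb μ t ∈ Metric.ball (μ 0) δ := fun t =>
      lt_of_le_of_lt (dist_comb_le μ t (μ 0) _ (by positivity) (fun i => hμ i 0)) hN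
    cases b with
    | false => exact Submodule.mem_sup_right (single_mem_Ch fun t => hb (key t))
    | true => exact Submodule.mem_sup_left (single_mem_Ch fun t => hb (key t))

lemma sd_mem_sup {A B : Set X} {n : ℕ} {c : Chain n X} (hc : c ∈ Ch A n ⊔ Ch B n) :
    sd n c ∈ Ch A n ⊔ Ch B n := by
  obtain ⟨a, ha, b, hb, rfl⟩ := Submodule.mem_sup.1 hc
  rw [map_add]
  exact Submodule.add_mem_sup (sd_mem ha) (sd_mem hb)

lemma tt_mem_sup {A B : Set X} {n : ℕ} {c : Chain n X} (hc : c ∈ Ch A n ⊔ Ch B n) :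
    tt n c ∈ Ch A (n+1) ⊔ Ch B (n+1) := by
  obtain ⟨a, ha, b, hb, rfl⟩ := Submodule.mem_sup.1 hc
  rw [map_add]
  exact Submodule.add_mem_sup (tt_mem ha) (tt_mem hb)

lemma sd_pow_mem_sup {A B : Set X} {n : ℕ} {c : Chain n X} (N : ℕ)
    (hc : c ∈ Ch A n ⊔ Ch B n) : (sd n ^ N) c ∈ Ch A n ⊔ Ch B n := by
  induction N with
  | zero => exact hc
  | succ N ih => rw [pow_succ', Module.End.mul_apply]; exact sd_mem_sup ih

lemma small_chain {A B : Set X} (hA : IsOpen A) (hB : IsOpen B) {n : ℕ} (c : Chain n X)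
    (hc : c ∈ Ch (A ∪ B) n) : ∃ N : ℕ, (sd n ^ N) c ∈ Ch A n ⊔ Ch B n := by
  rw [Ch, Finsupp.supported_eq_span_single] at hc
  induction hc using Submodule.span_induction with
  | mem x hx =>
    obtain ⟨s, hs, rfl⟩ := hx
    exact small_single hA hB s hs
  | zero => exact ⟨0, Submodule.zero_mem _⟩
  | add x y _ _ hx hy =>
    obtain ⟨N, hN⟩ := hx
    obtain ⟨M, hM⟩ := hy
    refine ⟨N + M, ?_⟩
    rw [map_add]
    refine Submodule.add_mem _ ?_ ?_
    · rw [add_comm, pow_add, Module.End.mul_apply]; exact sd_pow_mem_sup _ hN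
    · rw [pow_add, Module.End.mul_apply]; exact sd_pow_mem_sup _ hM
  | smul a x _ hx =>
    obtain ⟨N, hN⟩ := hx
    exact ⟨N, by rw [map_smul]; exact Submodule.smul_mem _ _ hN⟩

/-! ### Cycles -/

def IsCyc : ∀ {n : ℕ}, Chain n X → Prop
  | 0, _ => True
  | _+1, c => d c = 0

lemma isCyc_d {n : ℕ} (c : Chain (n+1) X) : IsCyc (d c) := by
  cases n with
  | zero => trivial
  | succ n => exact d_d c

lemma IsCyc.add {n : ℕ} {a b : Chain n X} (ha : IsCyc a) (hb : IsCyc b) : IsCyc (a + b) := by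
  cases n with
  | zero => trivial
  | succ n => change d _ = 0; rw [map_add, show d a = 0 from ha, show d b = 0 from hb, add_zero]

lemma IsCyc.smul {n : ℕ} {a : Chain n X} (ha : IsCyc a) (m : ℤ) : IsCyc (m • a) := by
  cases n with
  | zero => trivial
  | succ n => change d _ = 0; rw [map_smul, show d a = 0 from ha, smul_zero]

lemma IsCyc.sub {n : ℕ} {a b : Chain n X} (ha : IsCyc a) (hb : IsCyc b) : IsCyc (a - b) := by
  cases n with
  | zero => trivial
  | succ n => change d _ = 0; rw [map_sub, show d a = 0 from ha, show d b = 0 from hb, sub_zero]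

lemma IsCyc.sd {n : ℕ} {a : Chain n X} (ha : IsCyc a) : IsCyc (sd n a) := by
  cases n with
  | zero => trivial
  | succ n => change d _ = 0; rw [d_sd, show d a = 0 from ha, map_zero]

lemma IsCyc.cmap {n : ℕ} {a : Chain n X} (ha : IsCyc a) (f : C(X, Y)) : IsCyc (cmap f a) := by
  cases n with
  | zero => trivial
  | succ n => change d _ = 0; rw [← cmap_d, show d a = 0 from ha, map_zero]

lemma IsCyc.tt {n : ℕ} {a : Chain n X} (ha : IsCyc a) : a - SPH.sd n a = d (SPH.tt n a) := by
  cases n with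
  | zero =>
    rw [sd_zero, sub_self]
    have : (SPH.tt 0 : Chain 0 X →ₗ[ℤ] Chain 1 X) = 0 := by
      apply lc_ext
      intro s
      simp [LT, DH]
    rw [this]
    simp
  | succ n =>
    rw [← d_tt, show d a = 0 from ha, map_zero, add_zero]

lemma sd_pow_homotopic {A B : Set X} {n : ℕ} (N : ℕ) {c : Chain n X}
    (hc : c ∈ Ch A n ⊔ Ch B n) (h : IsCyc c) :
    ∃ e ∈ Ch A (n+1) ⊔ Ch B (n+1), c - (sd n ^ N) c = d e := by
  induction N generalizing c with
  | zero => exact ⟨0, Submodule.zero_mem _, by simp⟩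
  | succ N ih =>
    obtain ⟨e, he, h1⟩ := ih (sd_mem_sup hc) h.sd
    refine ⟨e + tt n c, Submodule.add_mem _ he (tt_mem_sup hc), ?_⟩
    rw [map_add, ← h1, ← h.tt, pow_succ, Module.End.mul_apply]
    abel

lemma small_cycle {A B : Set X} (hA : IsOpen A) (hB : IsOpen B) {n : ℕ} {z : Chain n X}
    (hz : z ∈ Ch (A ∪ B) n) (h : IsCyc z) :
    ∃ a ∈ Ch A n, ∃ b ∈ Ch B n, ∃ e ∈ Ch (A ∪ B) (n+1), z = a + b + d e := by
  obtain ⟨N, hN⟩ := small_chain hA hB z hz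
  obtain ⟨a, ha, b, hb, hab⟩ := Submodule.mem_sup.1 hN
  obtain ⟨e, he, h1⟩ := sd_pow_homotopic (A := A ∪ B) (B := A ∪ B) N
    (Submodule.mem_sup_left hz) h
  rw [sup_idem] at he
  refine ⟨a, ha, b, hb, e, he, ?_⟩
  rw [← h1, hab]
  abel

lemma d_sd_pow {n : ℕ} (N : ℕ) (c : Chain (n+1) X) :
    d ((sd (n+1) ^ N) c) = (sd n ^ N) (d c) := by
  induction N with
  | zero => rfl
  | succ N ih => rw [pow_succ', pow_succ', Module.End.mul_apply, Module.End.mul_apply, d_sd, ih]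

lemma small_boundary {A B : Set X} (hA : IsOpen A) (hB : IsOpen B) {n : ℕ} {w : Chain (n+1) X}
    (hw : w ∈ Ch (A ∪ B) (n+1)) (h : d w ∈ Ch A n ⊔ Ch B n) :
    ∃ a ∈ Ch A (n+1), ∃ b ∈ Ch B (n+1), d w = d a + d b := by
  obtain ⟨N, hN⟩ := small_chain hA hB w hw
  obtain ⟨e, he, h1⟩ := sd_pow_homotopic N h (isCyc_d w)
  obtain ⟨a, ha, b, hb, hab⟩ := Submodule.mem_sup.1 (Submodule.add_mem _ hN he)
  refine ⟨a, ha, b, hb, ?_⟩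
  rw [← map_add, hab, map_add, ← h1, d_sd_pow]
  abel
end
end SPH


namespace SPH
open Finsupp Cvx

section
variable {X Y Z : Type} [TopologicalSpace X] [TopologicalSpace Y] [TopologicalSpace Z]

/-! ### Vanishing, infinite cyclicity -/

def Bd (A : Set X) {n : ℕ} (z : Chain n X) : Prop := ∃ w ∈ Ch A (n+1), d w = z

def HZ (X : Type) [TopologicalSpace X] (n : ℕ) : Prop :=
  ∀ z : Chain n X, IsCyc z → ∃ w, d w = z

def IC (X : Type) [TopologicalSpace X] (n : ℕ) : Prop :=
  ∃ ζ : Chain n X, IsCyc ζ ∧ (∀ z : Chain n X, IsCyc z → ∃ m : ℤ, ∃ w, z = m • ζ + d w) ∧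
    ∀ (m : ℤ) (w : Chain (n+1) X), m • ζ = d w → m = 0

lemma Bd.add {A : Set X} {n : ℕ} {z z' : Chain n X} (h : Bd A z) (h' : Bd A z') :
    Bd A (z + z') := by
  obtain ⟨w, hw, rfl⟩ := h
  obtain ⟨w', hw', rfl⟩ := h'
  exact ⟨w + w', Submodule.add_mem _ hw hw', map_add _ _ _⟩

lemma Bd.sub {A : Set X} {n : ℕ} {z z' : Chain n X} (h : Bd A z) (h' : Bd A z') :
    Bd A (z - z') := by
  obtain ⟨w, hw, rfl⟩ := h
  obtain ⟨w', hw', rfl⟩ := h'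
  exact ⟨w - w', Submodule.sub_mem _ hw hw', map_sub _ _ _⟩

lemma Bd.mono {A B : Set X} (hAB : A ⊆ B) {n : ℕ} {z : Chain n X} (h : Bd A z) : Bd B z := by
  obtain ⟨w, hw, rfl⟩ := h
  exact ⟨w, Ch_mono hAB hw, rfl⟩

lemma bd_d {A : Set X} {n : ℕ} {w : Chain (n+1) X} (h : w ∈ Ch A (n+1)) : Bd A (d w) := ⟨w, h, rfl⟩

lemma Bd.cmap {A : Set X} {B : Set Y} {n : ℕ} {z : Chain n X} (h : Bd A z) (f : C(X, Y))
    (hf : ∀ x ∈ A, f x ∈ B) : Bd B (SPH.cmap f z) := by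
  obtain ⟨w, hw, rfl⟩ := h
  exact ⟨SPH.cmap f w, cmap_mem f hf hw, (cmap_d f w).symm⟩

def inc (A : Set X) : C(A, X) := ⟨Subtype.val, continuous_subtype_val⟩

lemma cmap_inc_inj (A : Set X) {n : ℕ} : Function.Injective (cmap (n := n) (inc A)) := by
  have : Function.Injective fun s : Sing n A => (inc A).comp s := by
    intro s t h
    ext x
    exact congrArg (fun g : Sing n X => g x) h
  have h2 : (cmap (n := n) (inc A)) = Finsupp.lmapDomain ℤ ℤ (fun s : Sing n A => (inc A).comp s) := by
    apply lc_ext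
    intro s
    rw [cmap_single]
    simp
  rw [h2]
  exact Finsupp.mapDomain_injective this

lemma inc_mem (A : Set X) {n : ℕ} (c : Chain n A) : cmap (inc A) c ∈ Ch A n :=
  cmap_mem (A := Set.univ) _ (fun x _ => x.2) (Ch_univ c)

lemma exists_lift {A : Set X} {n : ℕ} {c : Chain n X} (hc : c ∈ Ch A n) :
    ∃ c' : Chain n A, cmap (inc A) c' = c := by
  have := Ch_le LinearMap.id (LinearMap.range (cmap (n := n) (inc A))) (fun s hs => ?_) hc
  · exact this
  · exact ⟨single ⟨fun t => ⟨s t, hs t⟩, by fun_prop⟩ 1, by rw [cmap_single]; rfl⟩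

lemma isCyc_inc {A : Set X} {n : ℕ} {c : Chain n A} : IsCyc (cmap (inc A) c) ↔ IsCyc c := by
  refine ⟨fun h => ?_, fun h => h.cmap _⟩
  cases n with
  | zero => trivial
  | succ n =>
    change d _ = 0 at h
    rw [← cmap_d] at h
    exact cmap_inc_inj A (h.trans (map_zero _).symm)

lemma bd_inc {A : Set X} {n : ℕ} {c : Chain n A} : Bd A (cmap (inc A) c) ↔ ∃ w, d w = c := by
  constructor
  · rintro ⟨w, hw, h⟩
    obtain ⟨w, rfl⟩ := exists_lift hw
    rw [← cmap_d] at h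
    exact ⟨w, cmap_inc_inj A h⟩
  · rintro ⟨w, rfl⟩
    exact ⟨_, inc_mem A w, (cmap_d _ _).symm⟩

lemma HZ_iff {A : Set X} {n : ℕ} : HZ A n ↔ ∀ z ∈ Ch A n, IsCyc z → Bd A z := by
  constructor
  · intro h z hz hc
    obtain ⟨z, rfl⟩ := exists_lift hz
    exact bd_inc.2 (h z (isCyc_inc.1 hc))
  · intro h z hz
    exact bd_inc.1 (h _ (inc_mem A z) (isCyc_inc.2 hz))

lemma IC_iff {A : Set X} {n : ℕ} : IC A n ↔ ∃ ζ ∈ Ch A n, IsCyc ζ ∧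
    (∀ z ∈ Ch A n, IsCyc z → ∃ m : ℤ, Bd A (z - m • ζ)) ∧
    ∀ m : ℤ, Bd A (m • ζ) → m = 0 := by
  constructor
  · rintro ⟨ζ, h1, h2, h3⟩
    refine ⟨_, inc_mem A ζ, isCyc_inc.2 h1, ?_, ?_⟩
    · intro z hz hc
      obtain ⟨z, rfl⟩ := exists_lift hz
      obtain ⟨m, w, h⟩ := h2 z (isCyc_inc.1 hc)
      refine ⟨m, ?_⟩
      rw [← map_smul, ← map_sub, bd_inc]
      exact ⟨w, by rw [h]; abel⟩
    · intro m h
      rw [← map_smul, bd_inc] at h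
      obtain ⟨w, h⟩ := h
      exact h3 m w h.symm
  · rintro ⟨ζ, h0, h1, h2, h3⟩
    obtain ⟨ζ, rfl⟩ := exists_lift h0
    refine ⟨ζ, isCyc_inc.1 h1, ?_, ?_⟩
    · intro z hz
      obtain ⟨m, h⟩ := h2 _ (inc_mem A z) (isCyc_inc.2 hz)
      rw [← map_smul, ← map_sub, bd_inc] at h
      obtain ⟨w, hw⟩ := h
      exact ⟨m, w, by rw [hw]; abel⟩
    · intro m w h
      apply h3 m
      rw [← map_smul, bd_inc]
      exact ⟨w, h.symm⟩

/-! ### Mayer-Vietoris -/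

lemma mv_split {A B : Set X} (hA : IsOpen A) (hB : IsOpen B) {n : ℕ} (h : HZ ↥(A ∩ B) n)
    {z : Chain (n+1) X} (hz : z ∈ Ch (A ∪ B) (n+1)) (hc : IsCyc z) :
    ∃ a ∈ Ch A (n+1), ∃ b ∈ Ch B (n+1), IsCyc a ∧ IsCyc b ∧ Bd (A ∪ B) (z - a - b) := by
  obtain ⟨a, ha, b, hb, e, he, rfl⟩ := small_cycle hA hB hz hc
  have hab : d a = - d b := by
    change d _ = 0 at hc
    rw [map_add, map_add, d_d, add_zero] at hc
    exact eq_neg_of_add_eq_zero_left hc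
  have h1 : d a ∈ Ch (A ∩ B) n := by
    refine Ch_inter (d_mem ha) ?_
    rw [hab]
    exact Submodule.neg_mem _ (d_mem hb)
  obtain ⟨y, hy, hy'⟩ := HZ_iff.1 h _ h1 (isCyc_d a)
  refine ⟨a - y, Submodule.sub_mem _ ha (Ch_mono Set.inter_subset_left hy), b + y,
    Submodule.add_mem _ hb (Ch_mono Set.inter_subset_right hy), ?_, ?_, e, he, by abel⟩
  · change d _ = 0
    rw [map_sub, hy', sub_self]
  · change d _ = 0
    rw [map_add, hy', hab, add_neg_cancel]

lemma sus_vanish {A B : Set X} (hA : IsOpen A) (hB : IsOpen B) {n : ℕ} (h : HZ ↥(A ∩ B) n)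
    (h1 : HZ A (n+1)) (h2 : HZ B (n+1)) : HZ ↥(A ∪ B) (n+1) := by
  rw [HZ_iff]
  intro z hz hc
  obtain ⟨a, ha, b, hb, hca, hcb, hbd⟩ := mv_split hA hB h hz hc
  have := ((HZ_iff.1 h1 a ha hca).mono (Set.subset_union_left (t := B))).add
    ((HZ_iff.1 h2 b hb hcb).mono (Set.subset_union_right (s := A)))
  have := this.add hbd
  convert this using 1
  abel

lemma sus_inf {A B : Set X} (hA : IsOpen A) (hB : IsOpen B) {n : ℕ} (h : IC ↥(A ∩ B) n)
    (hA0 : HZ A n) (hB0 : HZ B n) (hA1 : HZ A (n+1)) (hB1 : HZ B (n+1)) :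
    IC ↥(A ∪ B) (n+1) := by
  rw [IC_iff] at h ⊢
  obtain ⟨ζ, hζ, hc, hg, hi⟩ := h
  obtain ⟨a, ha, hda⟩ := HZ_iff.1 hA0 ζ (Ch_mono Set.inter_subset_left hζ) hc
  obtain ⟨b, hb, hdb⟩ := HZ_iff.1 hB0 ζ (Ch_mono Set.inter_subset_right hζ) hc
  have iA : A ⊆ A ∪ B := Set.subset_union_left
  have iB : B ⊆ A ∪ B := Set.subset_union_right
  refine ⟨a - b, Submodule.sub_mem _ (Ch_mono iA ha) (Ch_mono iB hb), ?_, ?_, ?_⟩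
  · change d _ = 0
    rw [map_sub, hda, hdb, sub_self]
  · intro z hz hcz
    obtain ⟨a1, ha1, b1, hb1, e, he, rfl⟩ := small_cycle hA hB hz hcz
    have hab : d a1 = - d b1 := by
      change d _ = 0 at hcz
      rw [map_add, map_add, d_d, add_zero] at hcz
      exact eq_neg_of_add_eq_zero_left hcz
    have h1 : d a1 ∈ Ch (A ∩ B) n := by
      refine Ch_inter (d_mem ha1) ?_
      rw [hab]
      exact Submodule.neg_mem _ (d_mem hb1)
    obtain ⟨m, y, hy, hy'⟩ := hg _ h1 (isCyc_d a1)
    have k1 : Bd A (a1 - m • a - y) := by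
      refine HZ_iff.1 hA1 _ ?_ ?_
      · exact Submodule.sub_mem _ (Submodule.sub_mem _ ha1 (Submodule.smul_mem _ _ ha))
          (Ch_mono Set.inter_subset_left hy)
      · change d _ = 0
        rw [map_sub, map_sub, map_smul, hda, hy', sub_self]
    have k2 : Bd B (b1 + m • b + y) := by
      refine HZ_iff.1 hB1 _ ?_ ?_
      · exact Submodule.add_mem _ (Submodule.add_mem _ hb1 (Submodule.smul_mem _ _ hb))
          (Ch_mono Set.inter_subset_right hy)
      · change d _ = 0
        rw [map_add, map_add, map_smul, hdb, hy', hab]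
        abel
    refine ⟨m, ?_⟩
    have := ((k1.mono iA).add (k2.mono iB)).add (bd_d he)
    convert this using 1
    rw [smul_sub]
    abel
  · rintro m ⟨w, hw, h⟩
    have h0 : d w ∈ Ch A (n+1) ⊔ Ch B (n+1) := by
      rw [h, smul_sub]
      exact Submodule.sub_mem _ (Submodule.mem_sup_left (Submodule.smul_mem _ _ ha))
        (Submodule.mem_sup_right (Submodule.smul_mem _ _ hb))
    obtain ⟨a', ha', b', hb', h'⟩ := small_boundary hA hB hw h0
    apply hi m
    have e : m • a - d a' = m • b + d b' := by
      rw [h, smul_sub] at h'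
      rw [sub_eq_iff_eq_add, add_assoc, add_comm (d b'), ← h']
      abel
    refine ⟨m • a - d a', Ch_inter ?_ ?_, ?_⟩
    · exact Submodule.sub_mem _ (Submodule.smul_mem _ _ ha) (d_mem ha')
    · rw [e]
      exact Submodule.add_mem _ (Submodule.smul_mem _ _ hb) (d_mem hb')
    · rw [map_sub, map_smul, hda, d_d, sub_zero]

/-- injectivity of `H(A) → H(A ∪ B)` when `H(A ∩ B) = 0`. -/
lemma mv_inj {A B : Set X} (hA : IsOpen A) (hB : IsOpen B) {n : ℕ} (h : HZ ↥(A ∩ B) n)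
    {z : Chain n X} (hz : z ∈ Ch A n) (hbd : Bd (A ∪ B) z) : Bd A z := by
  obtain ⟨w, hw, rfl⟩ := hbd
  obtain ⟨a, ha, b, hb, e⟩ := small_boundary hA hB hw (Submodule.mem_sup_left hz)
  have h1 : d b ∈ Ch (A ∩ B) n := by
    refine Ch_inter ?_ (d_mem hb)
    rw [← sub_eq_iff_eq_add'.2 e]
    exact Submodule.sub_mem _ hz (d_mem ha)
  rw [e]
  exact (bd_d ha).add ((HZ_iff.1 h _ h1 (isCyc_d b)).mono Set.inter_subset_left)

lemma mv_five {A B : Set X} {A' B' : Set Y} (hA : IsOpen A) (hB : IsOpen B)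
    (hA' : IsOpen A') (hB' : IsOpen B') {n : ℕ} (f : C(X, Y))
    (fA : ∀ x ∈ A, f x ∈ A') (fB : ∀ x ∈ B, f x ∈ B')
    (hi : ∀ x ∈ Ch (A ∩ B) n, IsCyc x → Bd (A' ∩ B') (cmap f x) → Bd (A ∩ B) x)
    (h1 : HZ A (n+1)) (h2 : HZ B (n+1))
    {z : Chain (n+1) X} (hz : z ∈ Ch (A ∪ B) (n+1)) (hc : IsCyc z)
    (hbd : Bd (A' ∪ B') (cmap f z)) : Bd (A ∪ B) z := by
  obtain ⟨a, ha, b, hb, e, he, rfl⟩ := small_cycle hA hB hz hc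
  have hab : d a = - d b := by
    change d _ = 0 at hc
    rw [map_add, map_add, d_d, add_zero] at hc
    exact eq_neg_of_add_eq_zero_left hc
  have hx : d a ∈ Ch (A ∩ B) n := by
    refine Ch_inter (d_mem ha) ?_
    rw [hab]
    exact Submodule.neg_mem _ (d_mem hb)
  have hU : ∀ x ∈ A ∪ B, f x ∈ A' ∪ B' := fun x h => h.elim (fun h => .inl (fA x h))
    (fun h => .inr (fB x h))
  have hbd' : Bd (A' ∪ B') (cmap f a + cmap f b) := by
    have := hbd.sub ((bd_d he).cmap f hU)
    convert this using 1
    simp only [map_add]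
    abel
  obtain ⟨w, hw, hwe⟩ := hbd'
  obtain ⟨a', ha', b', hb', e'⟩ := small_boundary hA' hB' hw (by
    rw [hwe]; exact Submodule.add_mem_sup (cmap_mem f fA ha) (cmap_mem f fB hb))
  rw [hwe] at e'
  have e2 : cmap f a - d a' = d b' - cmap f b := by
    rw [sub_eq_sub_iff_add_eq_add, e']
    abel
  have h3 : Bd (A' ∩ B') (cmap f (d a)) := by
    refine ⟨cmap f a - d a', Ch_inter ?_ ?_, ?_⟩
    · exact Submodule.sub_mem _ (cmap_mem f fA ha) (d_mem ha')
    · rw [e2]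
      exact Submodule.sub_mem _ (d_mem hb') (cmap_mem f fB hb)
    · rw [map_sub, d_d, sub_zero, cmap_d]
  obtain ⟨y, hy, hy'⟩ := hi _ hx (isCyc_d a) h3
  have k1 : Bd A (a - y) := by
    refine HZ_iff.1 h1 _ (Submodule.sub_mem _ ha (Ch_mono Set.inter_subset_left hy)) ?_
    change d _ = 0
    rw [map_sub, hy', sub_self]
  have k2 : Bd B (b + y) := by
    refine HZ_iff.1 h2 _ (Submodule.add_mem _ hb (Ch_mono Set.inter_subset_right hy)) ?_
    change d _ = 0
    rw [map_add, hy', hab, add_neg_cancel]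
  have := ((k1.mono (Set.subset_union_left (t := B))).add
    (k2.mono (Set.subset_union_right (s := A)))).add (bd_d he)
  convert this using 1
  abel

/-! ### Homotopy invariance -/

lemma homotopic_cyc {f g : C(X, Y)} (h : f.Homotopic g) {n : ℕ} {z : Chain n X} (hz : IsCyc z) :
    ∃ w, cmap f z - cmap g z = d w := by
  cases n with
  | zero =>
    refine ⟨0, ?_⟩
    have : (cmap f : Chain 0 X →ₗ[ℤ] Chain 0 Y) = cmap g := by
      apply lc_ext
      intro s
      rw [cmap_single, cmap_single]
      congr 1
      ext t
      exact (Finset.sum_empty.symm.trans (stdSimplex.sum_eq_one t) |> zero_ne_one).elim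
    rw [this, sub_self, map_zero]
  | succ n =>
    obtain ⟨H⟩ := h
    let e : C(X × Del 2, Y) :=
      ⟨fun p => H (stdSimplexHomeomorphUnitInterval p.2, p.1), by fun_prop⟩
    have h := d_hp e z
    rw [show d z = 0 from hz, map_zero, add_zero] at h
    have e0 : e.comp ((ContinuousMap.id X).prodMk (.const X v0)) = f := by
      ext x
      exact (congrArg (fun t => H (t, x)) stdSimplexHomeomorphUnitInterval_zero).trans (H.map_zero_left x)
    have e1 : e.comp ((ContinuousMap.id X).prodMk (.const X v1)) = g := by
      ext x
      exact (congrArg (fun t => H (t, x)) stdSimplexHomeomorphUnitInterval_one).trans (H.map_one_left x)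
    rw [e0, e1] at h
    exact ⟨_, h.symm⟩

lemma HZ_of_dom (f : C(X, Y)) (g : C(Y, X)) (h : (g.comp f).Homotopic (.id X)) {n : ℕ}
    (hY : HZ Y n) : HZ X n := by
  intro z hz
  obtain ⟨w, hw⟩ := homotopic_cyc h hz
  obtain ⟨y, hy⟩ := hY (cmap f z) (hz.cmap f)
  refine ⟨cmap g y - w, ?_⟩
  rw [map_sub, ← hw, ← cmap_d, hy, cmap_id, cmap_comp]
  abel

lemma IC_of_equiv (f : C(X, Y)) (g : C(Y, X)) (h : (g.comp f).Homotopic (.id X))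
    (h' : (f.comp g).Homotopic (.id Y)) {n : ℕ} (hY : IC Y n) : IC X n := by
  obtain ⟨ζ, hc, hg, hi⟩ := hY
  refine ⟨cmap g ζ, hc.cmap g, fun z hz => ?_, fun m w hw => ?_⟩
  · obtain ⟨m, y, hy⟩ := hg (cmap f z) (hz.cmap f)
    obtain ⟨w, hw⟩ := homotopic_cyc h hz
    refine ⟨m, cmap g y - w, ?_⟩
    rw [map_sub, ← hw, ← cmap_d, ← map_smul, cmap_id, cmap_comp, hy]
    simp only [map_add]
    abel
  · obtain ⟨v, hv⟩ := homotopic_cyc h' hc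
    refine hi m (cmap f w - m • v) ?_
    rw [map_sub, map_smul, ← hv, ← cmap_d, ← hw, cmap_id, smul_sub, map_smul, cmap_comp]
    abel

lemma HZ_of_homeo (e : X ≃ₜ Y) {n : ℕ} (hY : HZ Y n) : HZ X n := by
  refine HZ_of_dom (e : C(X, Y)) (e.symm : C(Y, X)) ?_ hY
  convert ContinuousMap.Homotopic.refl _
  ext x
  simp

lemma IC_of_homeo (e : X ≃ₜ Y) {n : ℕ} (hY : IC Y n) : IC X n := by
  refine IC_of_equiv (e : C(X, Y)) (e.symm : C(Y, X)) ?_ ?_ hY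
  · convert ContinuousMap.Homotopic.refl _
    ext x
    simp
  · convert ContinuousMap.Homotopic.refl _
    ext x
    simp

lemma HZ_unit (n : ℕ) : HZ Unit n := by
  have hs : ∀ n, ∀ s t : Sing n Unit, s = t := fun n s t => by ext
  let c : ∀ n, Sing n Unit := fun n => .const _ ()
  let D : ∀ n, Chain n Unit →ₗ[ℤ] Chain (n+1) Unit := fun n =>
    Finsupp.lmapDomain ℤ ℤ (fun _ => c (n+1))
  have hD0 : ∀ n s, D n (single s 1) = single (c (n+1)) 1 := by
    intro n s
    simp [D]
  have key : ∀ n (z : Chain (n+1) Unit), d (D (n+1) z) = z - D n (d z) := by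
    intro n z
    have : d ∘ₗ D (n+1) = LinearMap.id - D n ∘ₗ d := by
      apply lc_ext
      intro s
      simp only [LinearMap.comp_apply, LinearMap.sub_apply, LinearMap.id_apply]
      rw [hD0, d_single, d_single, Fin.sum_univ_succ]
      simp only [map_sum, map_smul, hD0, Fin.val_zero, pow_zero, one_smul, Fin.val_succ, pow_succ]
      rw [hs _ (ContinuousMap.comp _ _) s, sub_eq_add_neg, ← Finset.sum_neg_distrib]
      congr 1
      refine Finset.sum_congr rfl fun i _ => ?_
      rw [hs _ (ContinuousMap.comp _ _) (c (n+1))]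
      simp
    exact LinearMap.congr_fun this z
  intro z hz
  cases n with
  | zero =>
    refine ⟨D 0 z, ?_⟩
    have : d ∘ₗ D 0 = LinearMap.id := by
      apply lc_ext
      intro s
      simp only [LinearMap.comp_apply, LinearMap.id_apply]
      rw [hD0, d_single]
      rw [Fin.sum_univ_one]
      rw [hs _ (ContinuousMap.comp _ _) s]
      simp
    exact LinearMap.congr_fun this z
  | succ n =>
    exact ⟨D (n+1) z, by rw [key, show d z = 0 from hz, map_zero, sub_zero]⟩

lemma HZ_of_contr (x : X) (h : (ContinuousMap.id X).Homotopic (.const X x)) (n : ℕ) : HZ X n :=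
  HZ_of_dom (.const X ()) (.const Unit x) h.symm (HZ_unit n)

lemma HZ_zero [Nonempty X] : HZ X 0 := by
  intro z _
  obtain ⟨x⟩ := ‹Nonempty X›
  refine ⟨cmap (.const _ x) (single (.const (Del 1) ()) (z (⟨fun t => x, by fun_prop⟩))), ?_⟩
  have hs : ∀ s t : Sing 0 X, s = t := fun s t => by
    ext t
    exact (Finset.sum_empty.symm.trans (stdSimplex.sum_eq_one t) |> zero_ne_one).elim
  ext s
  have : (single (ContinuousMap.const (Del 1) ()) (z (⟨fun t => x, by fun_prop⟩)) : Chain 1 Unit)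
    = z s • single (ContinuousMap.const (Del 1) ()) 1 := by
    simp [hs _ s]
  rw [this, map_smul, cmap_single, map_smul, d_single]
  simp [hs _ s]

lemma IC_empty [IsEmpty X] : IC X 0 := by
  have hs : ∀ s t : Sing 0 X, s = t := fun s t => by
    ext t
    exact isEmptyElim (s t)
  have he : ∀ t : Del 0, False := fun t =>
    (Finset.sum_empty.symm.trans (stdSimplex.sum_eq_one t) |> zero_ne_one).elim
  let s : Sing 0 X := ⟨fun t => (he t).elim, continuous_iff_continuousAt.2 fun t => (he t).elim⟩
  refine ⟨single s 1, trivial, fun z _ => ⟨z s, 0, ?_⟩, fun m w h => ?_⟩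
  · ext t
    simp [hs t s]
  · have : w = 0 := by
      ext t
      exact isEmptyElim (t (stdSimplex.vertex 0))
    rw [this, map_zero] at h
    simpa using DFunLike.congr_fun h s

lemma HZ_one (h : ∀ x y : X, Joined x y) : HZ X 1 := by
  rcases isEmpty_or_nonempty X with hX | ⟨⟨b⟩⟩
  · intro z _
    refine ⟨0, ?_⟩
    ext t
    exact isEmptyElim (t (stdSimplex.vertex 0))
  let v : Del 1 := stdSimplex.vertex 0
  have hv : ∀ t : Del 1, t = v := fun t => Subsingleton.elim _ _
  let pth : ∀ x, Sing 2 X := fun x =>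
    ⟨fun t => (h b x).somePath (stdSimplexHomeomorphUnitInterval t), by fun_prop⟩
  have p0 : ∀ x, pth x v0 = b := fun x =>
    (congrArg (fun t => (h b x).somePath t) stdSimplexHomeomorphUnitInterval_zero).trans
      (h b x).somePath.source
  have p1 : ∀ x, pth x v1 = x := fun x =>
    (congrArg (fun t => (h b x).somePath t) stdSimplexHomeomorphUnitInterval_one).trans
      (h b x).somePath.target
  let W : Chain 1 X →ₗ[ℤ] Chain 2 X := Finsupp.lmapDomain ℤ ℤ fun s => pth (s v)
  let B : Chain 0 X →ₗ[ℤ] Chain 1 X := Finsupp.lmapDomain ℤ ℤ fun _ => .const _ b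
  have key : d ∘ₗ W = LinearMap.id - B ∘ₗ d := by
    apply lc_ext
    intro s
    simp only [LinearMap.comp_apply, LinearMap.sub_apply, LinearMap.id_apply]
    have hW : W (single s 1) = single (pth (s v)) 1 := by simp [W]
    rw [hW, d_single, d_single, Fin.sum_univ_two, Fin.sum_univ_one]
    have f0 : (pth (s v)).comp (face 0) = s := by
      ext t
      rw [hv t]
      have : face (n := 1) 0 v = v1 := by
        exact (stdSimplex.map_vertex (S := ℝ) _ _).trans rfl
      rw [ContinuousMap.comp_apply, this, p1]
    have f1 : (pth (s v)).comp (face 1) = .const _ b := by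
      ext t
      rw [hv t]
      have : face (n := 1) 1 v = v0 := by
        exact (stdSimplex.map_vertex (S := ℝ) _ _).trans rfl
      rw [ContinuousMap.comp_apply, this, p0]
      rfl
    rw [f0, f1]
    simp [B, sub_eq_add_neg]
  intro z hz
  refine ⟨W z, ?_⟩
  have := LinearMap.congr_fun key z
  simp only [LinearMap.comp_apply, LinearMap.sub_apply, LinearMap.id_apply] at this
  rw [this, show d z = 0 from hz, map_zero, sub_zero]

end
end SPH


namespace SPH
open scoped unitInterval
open Finsupp Cvx
set_option linter.unusedSectionVars false

section
variable {X Y Z : Type} [TopologicalSpace X] [TopologicalSpace Y] [TopologicalSpace Z]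

lemma HZ_set_of_contr {A : Set X} (x : X) (hx : x ∈ A) (H : I × X → X)
    (hH : ContinuousOn H (Set.univ ×ˢ A)) (hm : ∀ t, ∀ y ∈ A, H (t, y) ∈ A)
    (h0 : ∀ y ∈ A, H (0, y) = y) (h1 : ∀ y ∈ A, H (1, y) = x) (n : ℕ) : HZ A n := by
  refine HZ_of_contr (⟨x, hx⟩ : A) ⟨⟨⟨fun p => ⟨H (p.1, p.2.1), hm _ _ p.2.2⟩, ?_⟩, ?_, ?_⟩⟩ n
  · refine Continuous.subtype_mk ?_ _
    exact hH.comp_continuous (f := fun p : I × A => (p.1, p.2.1)) (by fun_prop)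
      (fun p => ⟨trivial, p.2.2⟩)
  · intro y
    ext
    exact h0 _ y.2
  · intro y
    ext
    exact h1 _ y.2

abbrev Nz (E : Type) [Zero E] := {x : E // x ≠ 0}

section sus
variable (E : Type) [NormedAddCommGroup E] [NormedSpace ℝ E]

def susA : Set (Nz (E × ℝ)) := {p | p.1.1 ≠ 0 ∨ 0 < p.1.2}
def susB : Set (Nz (E × ℝ)) := {p | p.1.1 ≠ 0 ∨ p.1.2 < 0}

lemma susA_open : IsOpen (susA E) :=
  (isOpen_ne.preimage (by fun_prop : Continuous fun p : Nz (E × ℝ) => p.1.1)).union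
    (isOpen_Ioi.preimage (by fun_prop : Continuous fun p : Nz (E × ℝ) => p.1.2))
lemma susB_open : IsOpen (susB E) :=
  (isOpen_ne.preimage (by fun_prop : Continuous fun p : Nz (E × ℝ) => p.1.1)).union
    (isOpen_Iio.preimage (by fun_prop : Continuous fun p : Nz (E × ℝ) => p.1.2))

lemma susAB : susA E ∪ susB E = Set.univ := by
  ext p
  simp only [Set.mem_union, Set.mem_univ, iff_true, susA, susB, Set.mem_ofPred_eq]
  by_contra! h
  exact p.2 (Prod.ext h.1.1 (le_antisymm h.1.2 h.2.2))

lemma HZ_susA (n : ℕ) : HZ (susA E) n := by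
  have key : ∀ (t : I) (y : susA E), ((1 - t : ℝ) • y.1.1.1 ≠ 0) ∨
      0 < (1 - t : ℝ) * y.1.1.2 + t := by
    intro t y
    rcases eq_or_ne (1 - t : ℝ) 0 with h | h
    · right
      rw [h]
      linarith
    · rcases y.2 with hy | hy
      · exact .inl (smul_ne_zero h hy)
      · right
        have := lt_of_le_of_ne (sub_nonneg.2 t.2.2) h.symm
        have := t.2.1
        positivity
  refine HZ_of_contr (⟨⟨(0, 1), by simp⟩, by simp [susA]⟩ : susA E)
    ⟨⟨⟨fun p => ⟨⟨((1 - p.1 : ℝ) • p.2.1.1.1, (1 - p.1 : ℝ) * p.2.1.1.2 + p.1), ?_⟩, ?_⟩, ?_⟩, ?_, ?_⟩⟩ n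
  · intro h
    rw [Prod.mk_eq_zero] at h
    rcases key p.1 p.2 with h' | h'
    · exact h' h.1
    · exact h'.ne' h.2
  · exact key p.1 p.2
  · fun_prop
  · intro y
    ext <;> simp
  · intro y
    ext <;> simp

lemma HZ_susB (n : ℕ) : HZ (susB E) n := by
  let e : susB E → susA E := fun p => ⟨⟨(p.1.1.1, -p.1.1.2), fun h => p.1.2 (by
    rw [Prod.mk_eq_zero] at h
    exact Prod.ext h.1 (neg_eq_zero.1 h.2))⟩, p.2.elim .inl fun h => .inr (neg_pos.2 h)⟩
  let e' : susA E → susB E := fun p => ⟨⟨(p.1.1.1, -p.1.1.2), fun h => p.1.2 (by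
    rw [Prod.mk_eq_zero] at h
    exact Prod.ext h.1 (neg_eq_zero.1 h.2))⟩, p.2.elim .inl fun h => .inr (neg_lt_zero.2 h)⟩
  refine HZ_of_homeo (⟨⟨e, e', ?_, ?_⟩, ?_, ?_⟩ : susB E ≃ₜ susA E) (HZ_susA E n)
  · intro p; ext <;> simp [e, e']
  · intro p; ext <;> simp [e, e']
  · simp only [e]; fun_prop
  · simp only [e']; fun_prop

def susf : C(↥(susA E ∩ susB E), Nz E) := ⟨fun p => ⟨p.1.1.1, fun h => by
    have h1 := p.2.1.resolve_left (not_not.2 h)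
    have h2 := p.2.2.resolve_left (not_not.2 h)
    exact lt_asymm h1 h2⟩, by fun_prop⟩
def susg : C(Nz E, ↥(susA E ∩ susB E)) := ⟨fun x => ⟨⟨(x.1, 0), fun h => x.2 (by
    rw [Prod.mk_eq_zero] at h; exact h.1)⟩, .inl x.2, .inl x.2⟩, by fun_prop⟩

lemma susgf : ((susg E).comp (susf E)).Homotopic (.id _) := by
  refine ⟨⟨⟨fun p => ⟨⟨(p.2.1.1.1, (p.1 : ℝ) * p.2.1.1.2), fun h => ?_⟩, .inl ?_, .inl ?_⟩, ?_⟩, ?_, ?_⟩⟩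
  · rw [Prod.mk_eq_zero] at h
    exact (susf E p.2).2 h.1
  · exact (susf E p.2).2
  · exact (susf E p.2).2
  · fun_prop
  · intro y
    ext <;> simp [susf, susg]
  · intro y
    ext <;> simp

lemma susfg : ((susf E).comp (susg E)).Homotopic (.id _) := by
  exact ContinuousMap.Homotopic.refl _

lemma HZ_sus {n : ℕ} (h : HZ (Nz E) n) : HZ (Nz (E × ℝ)) (n+1) := by
  have := sus_vanish (susA_open E) (susB_open E) (HZ_of_dom (susf E) (susg E) (susgf E) h)
    (HZ_susA E _) (HZ_susB E _)
  rw [susAB] at this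
  exact HZ_of_homeo (Homeomorph.Set.univ _).symm this

lemma IC_sus {n : ℕ} (h : IC (Nz E) n) : IC (Nz (E × ℝ)) (n+1) := by
  have := sus_inf (susA_open E) (susB_open E)
    (IC_of_equiv (susf E) (susg E) (susgf E) (susfg E) h)
    (HZ_susA E _) (HZ_susB E _) (HZ_susA E _) (HZ_susB E _)
  rw [susAB] at this
  exact IC_of_homeo (Homeomorph.Set.univ _).symm this

end sus

def nzHomeo {E F : Type} [NormedAddCommGroup E] [NormedSpace ℝ E] [NormedAddCommGroup F]
    [NormedSpace ℝ F] (e : E ≃L[ℝ] F) : Nz E ≃ₜ Nz F where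
  toFun x := ⟨e x.1, by simpa using x.2⟩
  invFun x := ⟨e.symm x.1, by simpa using x.2⟩
  left_inv x := by simp
  right_inv x := by simp
  continuous_toFun := by fun_prop
  continuous_invFun := by fun_prop

/-- `H_1(ℂ^*) ≅ ℤ`. -/
lemma IC_Cstar : IC (Nz ℂ) 2 := by
  have : IsEmpty (Nz PUnit.{1}) := ⟨fun x => x.2 rfl⟩
  have h0 : IC (Nz PUnit.{1}) 0 := IC_empty
  have h2 := IC_sus _ (IC_sus _ h0)
  refine IC_of_homeo (nzHomeo ?_) h2
  have : Module.finrank ℝ ℂ = Module.finrank ℝ ((PUnit.{1} × ℝ) × ℝ) := by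
    rw [Complex.finrank_real_complex]
    simp [Module.finrank_zero_of_subsingleton]
  exact ContinuousLinearEquiv.ofFinrankEq this

/-- `H_2(ℂ^m ∖ 0) = 0` for `m ≥ 2`. -/
lemma HZ_Cm (m : ℕ) (hm : 2 ≤ m) : HZ (Nz (Fin m → ℂ)) 3 := by
  obtain ⟨k, rfl⟩ := Nat.exists_eq_add_of_le hm
  have : Nonempty (Nz ((Fin k → ℂ) × ℝ)) := ⟨⟨(0, 1), by simp⟩⟩
  have h0 : HZ (Nz ((Fin k → ℂ) × ℝ)) 0 := HZ_zero
  have h2 := HZ_sus _ (HZ_sus _ (HZ_sus _ h0))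
  refine HZ_of_homeo (nzHomeo ?_) h2
  refine ContinuousLinearEquiv.ofFinrankEq ?_
  have h : ∀ j, Module.finrank ℝ (Fin j → ℂ) = j * 2 := by
    intro j
    rw [Module.finrank_pi_fintype]
    simp
  simp only [Module.finrank_prod, Module.finrank_self, h]
  omega

end
end SPH


namespace SPH
open Finsupp Cvx

section
open CategoryTheory

lemma homology_equiv_ring (R : Type) [CommRing R] (S : ShortComplex (ModuleCat.{0} R)) (ζ : S.X₂)
    (h0 : S.g.hom ζ = 0) (h1 : ∀ z : S.X₂, S.g.hom z = 0 → ∃ (m : R) (w : S.X₁), z = m • ζ + S.f.hom w)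
    (h2 : ∀ (m : R) (w : S.X₁), m • ζ = S.f.hom w → m = 0) :
    Nonempty (S.homology ≃ₗ[R] R) := by
  let Q := LinearMap.ker S.g.hom ⧸ LinearMap.range S.moduleCatToCycles
  have e1 : S.homology ≃ₗ[R] Q := S.moduleCatHomologyIso.toLinearEquiv
  let ζ' : LinearMap.ker S.g.hom := ⟨ζ, h0⟩
  let q : Q := (LinearMap.range S.moduleCatToCycles).mkQ ζ'
  have e2 : R ≃ₗ[R] Q := by
    refine LinearEquiv.ofBijective (LinearMap.toSpanSingleton R Q q) ⟨?_, ?_⟩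
    · rw [← LinearMap.ker_eq_bot, LinearMap.ker_eq_bot']
      intro m hm
      rw [LinearMap.toSpanSingleton_apply] at hm
      have : (LinearMap.range S.moduleCatToCycles).mkQ (m • ζ') = 0 := by
        rw [map_smul]; exact hm
      rw [Submodule.mkQ_apply, Submodule.Quotient.mk_eq_zero] at this
      obtain ⟨w, hw⟩ := this
      exact h2 m w (congrArg Subtype.val hw).symm
    · intro x
      obtain ⟨⟨z, hz⟩, rfl⟩ := Submodule.mkQ_surjective _ x
      obtain ⟨m, w, h⟩ := h1 z hz
      refine ⟨m, ?_⟩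
      rw [LinearMap.toSpanSingleton_apply]
      have : (LinearMap.range S.moduleCatToCycles).mkQ (m • ζ') =
        (LinearMap.range S.moduleCatToCycles).mkQ ⟨z, hz⟩ := by
        rw [Submodule.mkQ_apply, Submodule.mkQ_apply, Submodule.Quotient.eq]
        refine ⟨-w, ?_⟩
        ext
        change S.f.hom (-w) = m • ζ - z
        rw [h, map_neg]
        abel
      rw [map_smul] at this
      exact this
  exact ⟨e1.trans e2.symm⟩

lemma homology_equiv_transport (R : Type) [CommRing R] (S : ShortComplex (ModuleCat.{0} R))
    {C1 C2 C3 : Type} [AddCommGroup C1] [AddCommGroup C2] [AddCommGroup C3]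
    [Module R C1] [Module R C2] [Module R C3] (e1 : S.X₁ ≃ₗ[R] C1) (e2 : S.X₂ ≃ₗ[R] C2)
    (e3 : S.X₃ ≃ₗ[R] C3) (f : C1 →ₗ[R] C2) (g : C2 →ₗ[R] C3)
    (hf : ∀ x, e2 (S.f.hom x) = f (e1 x)) (hg : ∀ x, e3 (S.g.hom x) = g (e2 x))
    (ζ : C2) (h0 : g ζ = 0) (h1 : ∀ z, g z = 0 → ∃ (m : R) (w : C1), z = m • ζ + f w)
    (h2 : ∀ (m : R) (w : C1), m • ζ = f w → m = 0) :
    Nonempty (S.homology ≃ₗ[R] R) := by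
  refine homology_equiv_ring R S (e2.symm ζ) ?_ ?_ ?_
  · apply e3.injective
    rw [hg, e2.apply_symm_apply, h0, map_zero]
  · intro z hz
    obtain ⟨m, w, h⟩ := h1 (e2 z) (by rw [← hg, hz, map_zero])
    refine ⟨m, e1.symm w, ?_⟩
    apply e2.injective
    rw [map_add, map_smul, hf, e1.apply_symm_apply, e2.apply_symm_apply, h]
  · intro m w h
    refine h2 m (e1 w) ?_
    rw [← hf, ← h, map_smul, e2.apply_symm_apply]

lemma hom_alt_sum {A B : ModuleCat.{0} ℤ} {C : Type} [AddCommGroup C] (e : B →ₗ[ℤ] C) {k : ℕ}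
    (φ : Fin k → (A ⟶ B)) (a : A) :
    e ((∑ i : Fin k, (-1 : ℤ) ^ (i : ℕ) • φ i : A ⟶ B).hom a) = ∑ i : Fin k, (-1 : ℤ) ^ (i : ℕ) • e ((φ i).hom a) := by
  rw [ModuleCat.hom_sum, LinearMap.sum_apply, map_sum]
  refine Finset.sum_congr rfl fun i _ => ?_
  let ev : (A ⟶ B) →+ C := ⟨⟨fun f => e (f.hom a), by simp⟩, fun f g => by simp⟩
  exact (map_zsmul ev ((-1 : ℤ) ^ (i : ℕ)) (φ i)).trans rfl

variable (X : Type) [TopologicalSpace X]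

noncomputable abbrev KX : ChainComplex (ModuleCat ℤ) ℕ :=
  ((AlgebraicTopology.alternatingFaceMapComplex (ModuleCat ℤ)).obj
    (((SimplicialObject.whiskering _ _).obj (ModuleCat.free ℤ)).obj
      (TopCat.toSSet.obj (TopCat.of X))))

noncomputable def EE (n : ℕ) : (KX X).X n ≃ₗ[ℤ] Chain (n+1) X :=
  Finsupp.domLCongr (TopCat.toSSetObjEquiv (TopCat.of X) (Opposite.op (SimplexCategory.mk n)))

lemma EE_d (n : ℕ) (c : (KX X).X (n+1)) :
    EE X n ((KX X).d (n+1) n c) = d (EE X (n+1) c) := by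
  have : (EE X n).toLinearMap ∘ₗ ((KX X).d (n+1) n).hom = d ∘ₗ (EE X (n+1)).toLinearMap := by
    refine Finsupp.lhom_ext' fun s => LinearMap.ext_ring ?_
    have h1 : EE X (n+1) (single s 1) = single (TopCat.toSSetObjEquiv _ _ s) 1 :=
      Finsupp.domLCongr_single _ _ _
    change EE X n (((KX X).d (n+1) n).hom (single s 1)) = d (EE X (n+1) (single s 1))
    rw [h1, d_single]
    have h2 : (KX X).d (n+1) n = _ := AlgebraicTopology.AlternatingFaceMapComplex.obj_d_eq _ n
    refine Eq.trans (congrArg (fun φ : (KX X).X (n+1) ⟶ (KX X).X n => EE X n (φ.hom (single s 1))) h2) ?_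
    refine (hom_alt_sum (EE X n).toLinearMap _ _).trans ?_
    refine Finset.sum_congr rfl fun i _ => ?_
    congr 1
    have h3 : ∀ t, EE X n (single t 1) = single (TopCat.toSSetObjEquiv _ _ t) 1 := fun t =>
      Finsupp.domLCongr_single _ _ _
    refine Eq.trans ?_ ((h3 ((TopCat.toSSet.obj (TopCat.of X)).δ i s)).trans ?_)
    · refine congrArg (EE X n) ?_
      exact ModuleCat.free_map_apply _ _
    · congr 1
  exact LinearMap.congr_fun this c

lemma final_of_IC (h : IC X 3) : Nonempty ((SingularHomology ℤ X 2) ≃ₗ[ℤ] ℤ) := by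
  obtain ⟨ζ, hc, hg, hi⟩ := h
  have hp : (ComplexShape.down ℕ).prev 2 = 3 := by simp
  have hn : (ComplexShape.down ℕ).next 2 = 1 := by
    exact ComplexShape.next_eq' _ (by simp)
  have e : SingularHomology ℤ X 2 ≅ ((KX X).sc' 3 2 1).homology :=
    ShortComplex.homologyMapIso ((KX X).isoSc' 3 2 1 hp hn)
  obtain ⟨e2⟩ := homology_equiv_transport ℤ ((KX X).sc' 3 2 1) (EE X 3) (EE X 2) (EE X 1) d d
    (EE_d X 2) (EE_d X 1) ζ hc hg hi
  exact ⟨e.toLinearEquiv.trans e2⟩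

end
end SPH


namespace SPH
open scoped unitInterval

section descend
variable {W Y Z T : Type} [TopologicalSpace W] [TopologicalSpace Y] [TopologicalSpace Z]
  [TopologicalSpace T]

lemma descend {q : W → Y} (hq : IsOpenQuotientMap q) (S : Set Y) (F : T × (q ⁻¹' S) → Z)
    (hF : Continuous F) (hinv : ∀ t x y, q x.1 = q y.1 → F (t, x) = F (t, y)) :
    ∃ G : C(T × S, Z), ∀ t x (hx : q x ∈ S), G (t, ⟨q x, hx⟩) = F (t, ⟨x, hx⟩) := by
  have h1 := IsOpenQuotientMap.prodMap (IsOpenQuotientMap.id (X := T)) (hq.restrictPreimage S)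
  let Q : C(T × (q ⁻¹' S), T × S) := ⟨Prod.map id (S.restrictPreimage q), h1.continuous⟩
  have hQ : Topology.IsQuotientMap Q := h1.isQuotientMap
  have h2 : Function.FactorsThrough (⟨F, hF⟩ : C(_, Z)) Q := by
    rintro ⟨t, x⟩ ⟨t', y⟩ h
    obtain ⟨rfl, h⟩ := Prod.ext_iff.1 h
    exact hinv t x y (congrArg Subtype.val h)
  refine ⟨hQ.lift ⟨F, hF⟩ h2, fun t x hx => ?_⟩
  exact ContinuousMap.congr_fun (hQ.lift_comp ⟨F, hF⟩ h2) (t, (⟨x, hx⟩ : q ⁻¹' S))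

lemma descend' {q : W → Y} (hq : IsOpenQuotientMap q) (S : Set Y) (F : (q ⁻¹' S) → Z)
    (hF : Continuous F) (hinv : ∀ x y, q x.1 = q y.1 → F x = F y) :
    ∃ G : C(S, Z), ∀ x (hx : q x ∈ S), G ⟨q x, hx⟩ = F ⟨x, hx⟩ := by
  obtain ⟨G, hG⟩ := descend (T := Unit) hq S (fun p => F p.2) (by fun_prop)
    (fun _ x y h => hinv x y h)
  exact ⟨G.comp ⟨fun s => ((), s), by fun_prop⟩, fun x hx => hG () x hx⟩

lemma homotopic_of_descend {q : W → Y} (hq : IsOpenQuotientMap q) (S : Set Y) (f g : C(S, Z))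
    (F : I × (q ⁻¹' S) → Z)
    (hF : Continuous F) (hinv : ∀ t x y, q x.1 = q y.1 → F (t, x) = F (t, y))
    (h0 : ∀ x : q ⁻¹' S, F (0, x) = f ⟨q x, x.2⟩) (h1 : ∀ x : q ⁻¹' S, F (1, x) = g ⟨q x, x.2⟩) :
    f.Homotopic g := by
  obtain ⟨G, hG⟩ := descend hq S F hF hinv
  refine ⟨⟨G, ?_, ?_⟩⟩
  · rintro ⟨y, hy⟩
    obtain ⟨x, rfl⟩ := hq.surjective y
    exact (hG 0 x hy).trans (h0 ⟨x, hy⟩)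
  · rintro ⟨y, hy⟩
    obtain ⟨x, rfl⟩ := hq.surjective y
    exact (hG 1 x hy).trans (h1 ⟨x, hy⟩)

end descend

section quot

abbrev V (n : ℕ) := Fin (n+1) → ℂ

noncomputable def cpq (n : ℕ) : Nz (V n) → CP n := fun v => Quotient.mk (projectivizationSetoid ℂ (V n)) v

lemma cpq_eq {n : ℕ} {v w : Nz (V n)} : cpq n v = cpq n w ↔ ∃ c : ℂ, c ≠ 0 ∧ w.1 = c • v.1 := by
  rw [eq_comm]
  refine Quotient.eq.trans ⟨?_, ?_⟩
  · rintro ⟨c, hc⟩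
    exact ⟨c, c.ne_zero, hc.symm⟩
  · rintro ⟨c, hc, h⟩
    exact ⟨Units.mk0 c hc, h.symm⟩

lemma cpq_open (n : ℕ) : IsOpenQuotientMap (cpq n) := by
  refine ⟨Quotient.mk_surjective, continuous_quotient_mk', fun U hU => ?_⟩
  have hq : Topology.IsQuotientMap (cpq n) := isQuotientMap_quotient_mk'
  rw [← hq.isOpen_preimage]
  have : cpq n ⁻¹' (cpq n '' U) = ⋃ c : {c : ℂ // c ≠ 0},
      (fun v : Nz (V n) => (⟨c.1 • v.1, smul_ne_zero c.2 v.2⟩ : Nz (V n))) ⁻¹' U := by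
    ext v
    simp only [Set.mem_preimage, Set.mem_image, Set.mem_iUnion]
    constructor
    · rintro ⟨w, hw, h⟩
      obtain ⟨c, hc, h⟩ := cpq_eq.1 h.symm
      refine ⟨⟨c, hc⟩, ?_⟩
      have : w = ⟨c • v.1, smul_ne_zero hc v.2⟩ := Subtype.ext h
      rwa [← this]
    · rintro ⟨c, hc⟩
      exact ⟨_, hc, (cpq_eq.2 ⟨c.1, c.2, rfl⟩).symm⟩
  rw [this]
  exact isOpen_iUnion fun c => hU.preimage (by fun_prop)

def spq (X : Type) [TopologicalSpace X] (d : ℕ) : (Fin d → X) → SP X d :=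
  fun x => Quotient.mk (SPSetoid X d) x

lemma spq_eq {X : Type} [TopologicalSpace X] {d : ℕ} {x y : Fin d → X} :
    spq X d x = spq X d y ↔ ∃ e : Equiv.Perm (Fin d), x ∘ e = y := Quotient.eq

lemma spq_open (X : Type) [TopologicalSpace X] (d : ℕ) : IsOpenQuotientMap (spq X d) := by
  refine ⟨Quotient.mk_surjective, continuous_quotient_mk', fun U hU => ?_⟩
  have hq : Topology.IsQuotientMap (spq X d) := isQuotientMap_quotient_mk'
  rw [← hq.isOpen_preimage]
  have : spq X d ⁻¹' (spq X d '' U) = ⋃ e : Equiv.Perm (Fin d), (fun x => x ∘ e) ⁻¹' U := by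
    ext v
    simp only [Set.mem_preimage, Set.mem_image, Set.mem_iUnion]
    constructor
    · rintro ⟨w, hw, h⟩
      obtain ⟨e, rfl⟩ := spq_eq.1 h.symm
      exact ⟨e, hw⟩
    · rintro ⟨e, h⟩
      exact ⟨_, h, (spq_eq.2 ⟨e, rfl⟩).symm⟩
  rw [this]
  exact isOpen_iUnion fun c => hU.preimage (by fun_prop)

abbrev WW (d n : ℕ) := Fin d → Nz (V n)
abbrev YY (d n : ℕ) := SP (CP n) d

noncomputable def pq (d n : ℕ) : WW d n → YY d n := fun x => spq (CP n) d fun a => cpq n (x a)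

lemma pq_open (d n : ℕ) : IsOpenQuotientMap (pq d n) :=
  (spq_open (CP n) d).comp (IsOpenQuotientMap.piMap fun _ => cpq_open n)

lemma pq_eq {d n : ℕ} {x y : WW d n} : pq d n x = pq d n y ↔
    ∃ e : Equiv.Perm (Fin d), ∃ c : Fin d → ℂ, (∀ a, c a ≠ 0) ∧ ∀ a, (y a).1 = c a • (x (e a)).1 := by
  rw [pq, pq, spq_eq]
  refine exists_congr fun e => ?_
  constructor
  · intro h
    choose c hc h' using fun a => cpq_eq.1 (congrFun h a)
    exact ⟨c, hc, h'⟩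
  · rintro ⟨c, hc, h⟩
    funext a
    exact cpq_eq.2 ⟨c a, hc a, h a⟩

lemma pq_continuous (d n : ℕ) : Continuous (pq d n) := (pq_open d n).continuous

end quot

section lin

noncomputable def ell {n : ℕ} (t : ℕ) : V n →ₗ[ℂ] ℂ := ∑ i : Fin (n+1), (t : ℂ) ^ (i : ℕ) • LinearMap.proj i

lemma ell_apply {n : ℕ} (t : ℕ) (v : V n) : ell t v = ∑ i : Fin (n+1), (t : ℂ) ^ (i : ℕ) * v i := by
  simp [ell]

@[fun_prop]
lemma ell_continuous {n : ℕ} (t : ℕ) : Continuous (ell (n := n) t) := LinearMap.continuous_of_finiteDimensional _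

/-- The vector `(a, b, 0, …, 0)`. -/
def vab (n : ℕ) (a b : ℂ) : V n := fun i => if (i : ℕ) = 0 then a else if (i : ℕ) = 1 then b else 0

lemma ell_vab {n : ℕ} (hn : 1 ≤ n) (t : ℕ) (a b : ℂ) : ell t (vab n a b) = a + t * b := by
  obtain ⟨k, rfl⟩ := Nat.exists_eq_add_of_le' hn
  rw [ell_apply, Fin.sum_univ_succ, Fin.sum_univ_succ]
  simp [vab]

@[fun_prop]
lemma vab_continuous {X : Type} [TopologicalSpace X] {n : ℕ} {f g : X → ℂ} (hf : Continuous f)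
    (hg : Continuous g) : Continuous fun x => vab n (f x) (g x) := by
  refine continuous_pi fun i => ?_
  unfold vab
  split_ifs <;> fun_prop

lemma ne_zero_of_ell {n : ℕ} {t : ℕ} {v : V n} (h : ell t v ≠ 0) : v ≠ 0 := by
  rintro rfl
  simp at h

variable (d n : ℕ)

def UU (t : ℕ) : Set (YY d n) := pq d n '' {x | ∀ a, ell t (x a).1 ≠ 0}

variable {d n}

lemma mem_UU {t : ℕ} {x : WW d n} : pq d n x ∈ UU d n t ↔ ∀ a, ell t (x a).1 ≠ 0 := by
  constructor
  · rintro ⟨y, hy, h⟩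
    obtain ⟨e, c, hc, h⟩ := pq_eq.1 h
    intro a
    rw [h, map_smul]
    exact smul_ne_zero (hc a) (hy _)
  · intro h
    exact ⟨x, h, rfl⟩

lemma UU_open (t : ℕ) : IsOpen (UU d n t) := by
  refine (pq_open d n).isOpenMap _ ?_
  simp only [Set.ofPred_forall]
  refine isOpen_iInter_of_finite fun a => isOpen_ne.preimage (by fun_prop)

/-- finitely many of the hyperplane complements cover -/
lemma cover (y : YY d n) : ∃ t < n * d + 1, y ∈ UU d n t := by
  obtain ⟨x, rfl⟩ := (pq_open d n).surjective y
  simp only [mem_UU]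
  by_contra! h
  have key : ∀ a, (((Finset.range (n * d + 1)).filter fun t => ell t (x a).1 = 0)).card ≤ n := by
    intro a
    let P : Polynomial ℂ := ∑ i : Fin (n+1), Polynomial.monomial (i : ℕ) ((x a).1 i)
    have hP : P ≠ 0 := by
      intro h0
      apply (x a).2
      funext i
      have := congrArg (fun p => Polynomial.coeff p i) h0
      simpa [P, Polynomial.finsetSum_coeff, Polynomial.coeff_monomial, Fin.val_inj] using this
    have hdeg : P.natDegree ≤ n := by
      refine Polynomial.natDegree_sum_le_of_forall_le _ _ fun i _ => ?_
      exact (Polynomial.natDegree_monomial_le _).trans (Nat.lt_succ_iff.1 i.2)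
    have hev : ∀ t : ℕ, P.eval (t : ℂ) = ell t (x a).1 := by
      intro t
      rw [ell_apply]
      simp [P, Polynomial.eval_finsetSum, mul_comm]
    refine le_trans ?_ ((Polynomial.card_roots' P).trans hdeg)
    have : (((Finset.range (n * d + 1)).filter fun t => ell t (x a).1 = 0)).card =
      (((Finset.range (n * d + 1)).filter fun t => ell t (x a).1 = 0).image (fun t : ℕ => (t : ℂ))).card := by
      rw [Finset.card_image_of_injective _ Nat.cast_injective]
    rw [this]
    refine le_trans (Finset.card_le_card (t := P.roots.toFinset) ?_) (Multiset.toFinset_card_le _)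
    intro z hz
    obtain ⟨t, ht, rfl⟩ := Finset.mem_image.1 hz
    rw [Multiset.mem_toFinset, Polynomial.mem_roots hP, Polynomial.IsRoot, hev]
    exact (Finset.mem_filter.1 ht).2
  have h2 : Finset.range (n * d + 1) ⊆ (Finset.univ : Finset (Fin d)).biUnion
      fun a => (Finset.range (n * d + 1)).filter fun t => ell t (x a).1 = 0 := by
    intro t ht
    obtain ⟨a, ha⟩ := h t (Finset.mem_range.1 ht)
    exact Finset.mem_biUnion.2 ⟨a, Finset.mem_univ _, Finset.mem_filter.2 ⟨ht, ha⟩⟩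
  have h3 := (Finset.card_le_card h2).trans (Finset.card_biUnion_le.trans
    (Finset.sum_le_sum fun a _ => key a))
  simp at h3
  nlinarith

end lin
end SPH


namespace SPH
open scoped unitInterval

section roots
open Polynomial

lemma perm_of_map_eq {ι : Type} [Fintype ι] {w w' : ι → ℂ}
    (h : (Finset.univ : Finset ι).val.map w = (Finset.univ : Finset ι).val.map w') :
    ∃ e : Equiv.Perm ι, w ∘ e = w' := by
  classical
  have h1 : ∀ c : ℂ, Nonempty ({a // w' a = c} ≃ {a // w a = c}) := by
    intro c
    have := congrArg (Multiset.count c) h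
    rw [Multiset.count_map, Multiset.count_map] at this
    refine ⟨Fintype.equivOfCardEq ?_⟩
    rw [Fintype.card_subtype, Fintype.card_subtype]
    simp only [eq_comm (a := c)] at this
    exact this.symm
  let E := fun c => (h1 c).some
  refine ⟨Equiv.ofFiberEquiv E, ?_⟩
  funext a
  exact Equiv.ofFiberEquiv_map E a

noncomputable def pw {d : ℕ} (w : Fin d → ℂ) : ℂ[X] := ∏ a, (X - C (w a))

lemma pw_monic {d : ℕ} (w : Fin d → ℂ) : (pw w).Monic := monic_prod_of_monic _ _ fun a _ => monic_X_sub_C _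

lemma pw_natDegree {d : ℕ} (w : Fin d → ℂ) : (pw w).natDegree = d := by
  rw [pw, natDegree_prod_of_monic _ _ fun a _ => monic_X_sub_C _]
  simp

lemma pw_roots {d : ℕ} (w : Fin d → ℂ) : (pw w).roots = (Finset.univ : Finset (Fin d)).val.map w := by
  rw [← roots_multiset_prod_X_sub_C ((Finset.univ : Finset (Fin d)).val.map w), Multiset.map_map]
  rfl

noncomputable def ee {d : ℕ} (w : Fin d → ℂ) : Fin d → ℂ := fun i => (pw w).coeff i

lemma coeff_cont {d : ℕ} (s : Finset (Fin d)) : ∀ k, Continuous fun w : Fin d → ℂ =>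
    (∏ a ∈ s, (X - C (w a))).coeff k := by
  classical
  induction s using Finset.induction_on with
  | empty => intro k; simpa using continuous_const
  | insert b s hb ih =>
    intro k
    simp only [Finset.prod_insert hb, sub_mul, coeff_sub, coeff_C_mul]
    have := ih k
    rcases k with _ | k
    · simp only [coeff_X_mul_zero]
      fun_prop
    · simp only [coeff_X_mul]
      have := ih k
      fun_prop

lemma ee_cont {d : ℕ} : Continuous (ee (d := d)) := continuous_pi fun i => coeff_cont _ _

lemma pw_eq {d : ℕ} {w w' : Fin d → ℂ} (h : ee w = ee w') : pw w = pw w' := by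
  ext k
  rcases lt_trichotomy k d with hk | rfl | hk
  · exact congrFun h ⟨k, hk⟩
  · have h1 := (pw_monic w).coeff_natDegree
    have h2 := (pw_monic w').coeff_natDegree
    rw [pw_natDegree] at h1 h2
    rw [h1, h2]
  · rw [coeff_eq_zero_of_natDegree_lt, coeff_eq_zero_of_natDegree_lt] <;> rwa [pw_natDegree]

lemma ee_eq {d : ℕ} {w w' : Fin d → ℂ} (h : ee w = ee w') : ∃ e : Equiv.Perm (Fin d), w ∘ e = w' := by
  apply perm_of_map_eq
  rw [← pw_roots, ← pw_roots, pw_eq h]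

lemma ee_perm {d : ℕ} (w : Fin d → ℂ) (e : Equiv.Perm (Fin d)) : ee (w ∘ e) = ee w := by
  have : pw (w ∘ e) = pw w := Equiv.prod_comp e fun a => (X - C (w a))
  unfold ee
  rw [this]

lemma ee_zero {k : ℕ} (w : Fin (k+1) → ℂ) : ee w 0 = (-1) ^ (k+1) * ∏ a, w a := by
  simp only [ee, pw, Fin.val_zero, coeff_zero_eq_eval_zero, eval_prod]
  simp [Finset.prod_neg]

lemma exists_index {d : ℕ} (s : Multiset ℂ) (hs : s.card = d) :
    ∃ w : Fin d → ℂ, (Finset.univ : Finset (Fin d)).val.map w = s := by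
  induction s using Quotient.inductionOn with
  | h l =>
    obtain rfl : l.length = d := hs
    exact ⟨l.get, by rw [Fin.univ_val_map, List.ofFn_get]; rfl⟩

lemma ee_surj {d : ℕ} (c : Fin d → ℂ) : ∃ w, ee w = c := by
  let p : ℂ[X] := X ^ d + ∑ i : Fin d, C (c i) * X ^ (i : ℕ)
  have hdeg : (∑ i : Fin d, C (c i) * X ^ (i : ℕ)).degree < ((d : ℕ) : WithBot ℕ) := by
    refine (degree_sum_le _ _).trans_lt ?_
    rw [Finset.sup_lt_iff (WithBot.bot_lt_coe _)]
    intro i _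
    exact (degree_C_mul_X_pow_le _ _).trans_lt (by exact_mod_cast i.2)
  have hm : p.Monic := monic_X_pow_add hdeg
  have hnd : p.natDegree = d := by
    apply natDegree_eq_of_degree_eq_some
    show (X ^ d + _ : ℂ[X]).degree = _
    rw [degree_add_eq_left_of_degree_lt] <;> rw [degree_X_pow]
    exact hdeg
  have hs := IsAlgClosed.splits p
  have hp : p = (p.roots.map fun a => X - C a).prod := by
    simpa [hm.leadingCoeff] using hs.eq_prod_roots
  obtain ⟨w, hw⟩ := exists_index p.roots (hs.natDegree_eq_card_roots.symm.trans hnd)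
  refine ⟨w, ?_⟩
  have : pw w = p := by
    rw [hp, ← hw, Multiset.map_map]
    rfl
  unfold ee
  rw [this]
  funext i
  simp [p, finsetSum_coeff, coeff_X_pow, Fin.val_inj, i.2.ne]

lemma ee_bound {d : ℕ} (w : Fin d → ℂ) : ‖w‖ ≤ ‖ee w‖ + 1 := by
  rw [pi_norm_le_iff_of_nonneg (by positivity)]
  intro a
  have hr : (pw w).IsRoot (w a) := by
    rw [IsRoot, pw, eval_prod]
    exact Finset.prod_eq_zero (Finset.mem_univ a) (by simp)
  have := hr.norm_lt_cauchyBound (pw_monic w).ne_zero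
  have h2 : cauchyBound (pw w) ≤ ‖ee w‖₊ + 1 := by
    rw [cauchyBound, (pw_monic w).leadingCoeff, nnnorm_one, div_one]
    gcongr
    refine Finset.sup_le fun i hi => ?_
    rw [Finset.mem_range, pw_natDegree] at hi
    exact nnnorm_le_pi_nnnorm (ee w) ⟨i, hi⟩
  have h3 : ((cauchyBound (pw w) : NNReal) : ℝ) ≤ ‖ee w‖ + 1 := by exact_mod_cast h2
  have h4 : ‖w a‖ < (cauchyBound (pw w) : ℝ) := by exact_mod_cast this
  linarith

lemma ee_proper {d : ℕ} : IsProperMap (ee (d := d)) := by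
  rw [isProperMap_iff_tendsto_cocompact]
  refine ⟨ee_cont, ?_⟩
  rw [← Metric.cobounded_eq_cocompact, ← tendsto_norm_atTop_iff_cobounded]
  refine Filter.tendsto_atTop_mono (f := fun w => ‖w‖ - 1) (fun w => ?_) ?_
  · linarith [ee_bound w]
  · exact Filter.tendsto_atTop_add_const_right _ _ tendsto_norm_cobounded_atTop

abbrev DD (k : ℕ) := {w : Fin (k+1) → ℂ // ∀ a, w a ≠ 0}
abbrev DC (k : ℕ) := {c : Fin (k+1) → ℂ // c 0 ≠ 0}

lemma ee_ne {k : ℕ} {w : Fin (k+1) → ℂ} : ee w 0 ≠ 0 ↔ ∀ a, w a ≠ 0 := by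
  rw [ee_zero]
  simp [Finset.prod_eq_zero_iff]

variable {Z : Type} [TopologicalSpace Z]

lemma exists_Q {k : ℕ} (F : C(DD k, Z)) (hF : ∀ (w w' : DD k) (e : Equiv.Perm (Fin (k+1))),
    w.1 ∘ e = w'.1 → F w = F w') :
    ∃ Q : C(DC k, Z), ∀ w : DD k, Q ⟨ee w.1, ee_ne.2 w.2⟩ = F w := by
  have h1 := (ee_proper (d := k+1)).isClosedMap
  let q : C(DD k, DC k) := ⟨fun w => ⟨ee w.1, ee_ne.2 w.2⟩, by
    exact Continuous.subtype_mk (ee_cont.comp continuous_subtype_val) _⟩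
  have hq : Topology.IsQuotientMap q := by
    refine IsClosedMap.isQuotientMap ?_ q.continuous ?_
    · intro T hT
      obtain ⟨T', hT', rfl⟩ := isClosed_induced_iff.1 hT
      refine isClosed_induced_iff.2 ⟨_, h1 T' hT', ?_⟩
      ext ⟨c, hc⟩
      constructor
      · rintro ⟨w, hw, h⟩
        have h : ee w = c := h
        subst h
        exact ⟨⟨w, ee_ne.1 hc⟩, hw, rfl⟩
      · rintro ⟨w, hw, h⟩
        exact ⟨w.1, hw, congrArg Subtype.val h⟩
    · rintro ⟨c, hc⟩
      obtain ⟨w, rfl⟩ := ee_surj c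
      exact ⟨⟨w, ee_ne.1 hc⟩, rfl⟩
  have h2 : Function.FactorsThrough F q := by
    intro w w' h
    obtain ⟨e, he⟩ := ee_eq (congrArg Subtype.val h)
    exact hF w w' e he
  exact ⟨hq.lift F h2, fun w => ContinuousMap.congr_fun (hq.lift_comp F h2) w⟩

def conc {k : ℕ} (z : ℂ) : Fin (k+1) → ℂ := fun a => if a = 0 then z else 1

lemma conc_ne {k : ℕ} {z : ℂ} (hz : z ≠ 0) (a : Fin (k+1)) : conc z a ≠ 0 := by
  unfold conc; split_ifs <;> simp [hz]

lemma conc_prod {k : ℕ} (z : ℂ) : ∏ a : Fin (k+1), conc z a = z := by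
  simp [conc]

lemma sp_homotopy {k : ℕ} (F : C(DD k, Z)) (hF : ∀ (w w' : DD k) (e : Equiv.Perm (Fin (k+1))),
    w.1 ∘ e = w'.1 → F w = F w') :
    ∃ K : C(I × DD k, Z), (∀ w, K (0, w) = F w) ∧
      (∀ w, K (1, w) = F ⟨conc (∏ a, w.1 a), conc_ne (Finset.prod_ne_zero_iff.2 fun a _ => w.2 a)⟩) ∧
      ∀ t (w w' : DD k) (e : Equiv.Perm (Fin (k+1))), w.1 ∘ e = w'.1 → K (t, w) = K (t, w') := by
  obtain ⟨Q, hQ⟩ := exists_Q F hF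
  let G : I × DD k → Fin (k+1) → ℂ := fun p =>
    ((1 - (p.1 : ℝ) : ℝ) : ℂ) • ee p.2.1 + ((p.1 : ℝ) : ℂ) • ee (conc (∏ a, p.2.1 a))
  have hG0 : ∀ p, G p 0 = ee p.2.1 0 := by
    intro p
    simp only [G, Pi.add_apply, Pi.smul_apply, ee_zero, conc_prod, smul_eq_mul]
    push_cast
    ring
  have hGc : Continuous G := by
    have h1 : Continuous fun p : I × DD k => ee p.2.1 := ee_cont.comp (by fun_prop)
    have h2 : Continuous fun p : I × DD k => ee (conc (k := k) (∏ a, p.2.1 a)) := by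
      refine ee_cont.comp (continuous_pi fun i => ?_)
      unfold conc
      split_ifs <;> fun_prop
    fun_prop
  refine ⟨⟨fun p => Q ⟨G p, by rw [hG0]; exact ee_ne.2 p.2.2⟩, by fun_prop⟩, fun w => ?_, fun w => ?_, ?_⟩
  · rw [← hQ]
    simp [G]
  · rw [← hQ]
    simp [G]
  · intro t w w' e he
    have : G (t, w) = G (t, w') := by
      simp only [G, ← he, ee_perm]
      rw [← Equiv.prod_comp e (fun a => w.1 a)]
      rfl
    simp only [ContinuousMap.coe_mk, this]

end roots
end SPH


namespace SPH
open scoped unitInterval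

section line
variable {d n : ℕ}

/-- The set `S` is the locus where the linear forms `ell j`, `j ∈ J`, do not vanish. -/
def IsLoc (S : Set (YY d n)) (J : Finset ℕ) : Prop :=
  ∀ x : WW d n, pq d n x ∈ S ↔ ∀ j ∈ J, ∀ a, ell j (x a).1 ≠ 0

lemma isLoc_UU (t : ℕ) : IsLoc (UU d n t) {t} := by
  intro x
  simp [mem_UU]

lemma isLoc_inter {S T : Set (YY d n)} {J K : Finset ℕ} (hS : IsLoc S J) (hT : IsLoc T K) :
    IsLoc (S ∩ T) (J ∪ K) := by
  intro x
  rw [Set.mem_inter_iff, hS x, hT x]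
  simp only [Finset.mem_union]
  constructor
  · rintro ⟨h1, h2⟩ j (hj | hj)
    exacts [h1 j hj, h2 j hj]
  · intro h
    exact ⟨fun j hj => h j (.inl hj), fun j hj => h j (.inr hj)⟩

lemma line_homotopy {S : Set (YY d n)} {J : Finset ℕ} (hS : IsLoc S J) {j₀ : ℕ} (hj : j₀ ∈ J)
    (P : V n →ₗ[ℂ] V n) (hP : ∀ j ∈ J, ∀ v, ell j (P v) = ell j v) :
    ∃ f : C(S, S), (ContinuousMap.id S).Homotopic f ∧
      ∀ (x : WW d n) (hx : pq d n x ∈ S) (y : WW d n), (∀ a, (y a).1 = P (x a).1) →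
        (f ⟨pq d n x, hx⟩).1 = pq d n y := by
  let L : ℝ → V n → V n := fun r v => ((1 - r : ℝ) : ℂ) • v + (r : ℂ) • P v
  have hL : ∀ r, ∀ j ∈ J, ∀ v, ell j (L r v) = ell j v := by
    intro r j hj v
    simp only [L, map_add, map_smul, hP j hj, smul_eq_mul]
    push_cast
    ring
  have hPc : Continuous P := P.continuous_of_finiteDimensional
  let A : I × (pq d n ⁻¹' S) → WW d n := fun p a => ⟨L p.1 (p.2.1 a).1,
    ne_zero_of_ell (t := j₀) (by rw [hL _ _ hj]; exact (hS _).1 p.2.2 j₀ hj a)⟩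
  have hA : Continuous A := by
    refine continuous_pi fun a => Continuous.subtype_mk ?_ _
    have hp : Continuous fun p : I × (pq d n ⁻¹' S) => (p.2.1 a).1 :=
      continuous_subtype_val.comp ((continuous_apply a).comp
        (continuous_subtype_val.comp continuous_snd))
    simp only [L]
    fun_prop
  have hm : ∀ p, pq d n (A p) ∈ S := fun p => (hS _).2 fun j hj a => by
    show ell j (L _ _) ≠ 0
    rw [hL _ j hj]
    exact (hS _).1 p.2.2 j hj a
  obtain ⟨G, hG⟩ := descend (pq_open d n) S (fun p => (⟨pq d n (A p), hm p⟩ : S))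
    (((pq_continuous d n).comp hA).subtype_mk _) (by
      rintro t ⟨x, hx⟩ ⟨y, hy⟩ h
      obtain ⟨e, c, hc, h⟩ := pq_eq.1 h
      refine Subtype.ext (pq_eq.2 ⟨e, c, hc, fun a => ?_⟩)
      simp only at h
      simp only [A, L, h a, map_smul]
      module)
  refine ⟨⟨fun s => G (1, s), by fun_prop⟩, ⟨⟨G, ?_, fun _ => rfl⟩⟩, ?_⟩
  · rintro ⟨y, hy⟩
    obtain ⟨x, rfl⟩ := (pq_open d n).surjective y
    refine (hG 0 x hy).trans (Subtype.ext ?_)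
    show pq d n (A _) = pq d n x
    congr 1
    funext a
    exact Subtype.ext (by simp [A, L])
  · intro x hx y h
    refine (congrArg Subtype.val (hG 1 x hx)).trans ?_
    show pq d n (A _) = pq d n y
    congr 1
    funext a
    exact Subtype.ext (by simp [A, L, h])

noncomputable def e0 (hn : 1 ≤ n) : Nz (V n) := ⟨vab n 1 0, ne_zero_of_ell (t := 0) (by rw [ell_vab hn]; simp)⟩

lemma ell_e0 (hn : 1 ≤ n) (t : ℕ) : ell t (e0 hn).1 = 1 := by
  simp [e0, ell_vab hn]

lemma HZ_UU (hn : 1 ≤ n) (t m : ℕ) : HZ (UU d n t) m := by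
  obtain ⟨f, hf, hf'⟩ := line_homotopy (isLoc_UU (d := d) (n := n) t) (Finset.mem_singleton_self t)
    ((ell t).smulRight (e0 hn).1) (by
      intro j hj v
      obtain rfl := Finset.mem_singleton.1 hj
      simp [ell_e0])
  have hp : pq d n (fun _ => e0 hn) ∈ UU d n t := mem_UU.2 fun a => by rw [ell_e0]; exact one_ne_zero
  refine HZ_of_contr ⟨_, hp⟩ (?_ : ContinuousMap.Homotopic _ _) m
  convert hf
  ext ⟨y, hy⟩
  obtain ⟨x, rfl⟩ := (pq_open d n).surjective y
  have hx := mem_UU.1 hy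
  refine Eq.symm ((hf' x hy (fun a => ⟨ell t (x a).1 • (e0 hn).1, smul_ne_zero (hx a) (e0 hn).2⟩)
    (fun a => rfl)).trans ?_)
  refine pq_eq.2 ⟨1, fun a => (ell t (x a).1)⁻¹, fun a => inv_ne_zero (hx a), fun a => ?_⟩
  simp [smul_smul, hx a]

end line

section ug
variable {k n : ℕ}

/-- A vector on which `ell s` is `1` and `ell t` is `z`. -/
noncomputable def pz (n s t : ℕ) (z : ℂ) : V n := vab n 1 0 + ((z - 1) / ((t : ℂ) - s)) • vab n (-s) 1

lemma ell_pz_s (hn : 1 ≤ n) (s t : ℕ) (z : ℂ) : ell s (pz n s t z) = 1 := by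
  simp [pz, ell_vab hn]

lemma ell_pz_t (hn : 1 ≤ n) {s t : ℕ} (h : s ≠ t) (z : ℂ) : ell t (pz n s t z) = z := by
  have : (t : ℂ) - s ≠ 0 := sub_ne_zero.2 (by exact_mod_cast h.symm)
  simp only [pz, map_add, map_smul, ell_vab hn, smul_eq_mul]
  field_simp
  ring

lemma ug (hn : 1 ≤ n) {s t : ℕ} (hst : s ≠ t) :
    ∃ (u : C(↥(UU (k+1) n s ∩ UU (k+1) n t), Nz ℂ)) (g : C(Nz ℂ, ↥(UU (k+1) n s ∩ UU (k+1) n t))),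
      (∀ x hx, (u ⟨pq (k+1) n x, hx⟩).1 = ∏ a, ell t (x a).1 / ell s (x a).1) ∧
      u.comp g = .id _ ∧ (g.comp u).Homotopic (.id _) := by
  have hts : (t : ℂ) - s ≠ 0 := sub_ne_zero.2 (by exact_mod_cast hst.symm)
  set S := UU (k+1) n s ∩ UU (k+1) n t with hSdef
  have hS : IsLoc S ({s} ∪ {t}) := isLoc_inter (isLoc_UU s) (isLoc_UU t)
  have hs : ∀ x : pq (k+1) n ⁻¹' S, ∀ a, ell s (x.1 a).1 ≠ 0 := fun x => mem_UU.1 x.2.1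
  have ht : ∀ x : pq (k+1) n ⁻¹' S, ∀ a, ell t (x.1 a).1 ≠ 0 := fun x => mem_UU.1 x.2.2
  -- the map `w`
  let w : pq (k+1) n ⁻¹' S → DD k := fun x =>
    ⟨fun a => ell t (x.1 a).1 / ell s (x.1 a).1, fun a => div_ne_zero (ht x a) (hs x a)⟩
  have hw : Continuous w := by
    refine Continuous.subtype_mk (continuous_pi fun a => ?_) _
    have hp : Continuous fun x : (pq (k+1) n ⁻¹' S) => (x.1 a).1 :=
      continuous_subtype_val.comp ((continuous_apply a).comp continuous_subtype_val)
    exact Continuous.div ((ell_continuous t).comp hp) ((ell_continuous s).comp hp) fun x => hs x a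
  have hwe : ∀ x y : pq (k+1) n ⁻¹' S, pq (k+1) n x.1 = pq (k+1) n y.1 →
      ∃ e : Equiv.Perm (Fin (k+1)), (w x).1 ∘ e = (w y).1 := by
    intro x y h
    obtain ⟨e, c, hc, h⟩ := pq_eq.1 h
    refine ⟨e, ?_⟩
    funext a
    simp only [w, h a, map_smul, smul_eq_mul, Function.comp]
    rw [mul_div_mul_left _ _ (hc a)]
  obtain ⟨u, hu⟩ := descend' (pq_open (k+1) n) S
    (fun x => (⟨∏ a, (w x).1 a, Finset.prod_ne_zero_iff.2 fun a _ => (w x).2 a⟩ : Nz ℂ))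
    (by fun_prop) (by
      intro x y h
      obtain ⟨e, he⟩ := hwe x y h
      refine Subtype.ext ?_
      simp only [← he]
      exact (Equiv.prod_comp e fun a => (w x).1 a).symm)
  have hpz : Continuous (pz n s t) := by unfold pz; fun_prop
  let pp : DD k → WW (k+1) n := fun v a => ⟨pz n s t (v.1 a),
    ne_zero_of_ell (t := s) (by rw [ell_pz_s hn]; exact one_ne_zero)⟩
  have hpp : Continuous pp := by
    refine continuous_pi fun a => Continuous.subtype_mk ?_ _
    exact hpz.comp ((continuous_apply a).comp continuous_subtype_val)
  have hpS : ∀ v, pq (k+1) n (pp v) ∈ S := by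
    intro v
    refine ⟨mem_UU.2 fun a => ?_, mem_UU.2 fun a => ?_⟩
    · show ell s (pz n s t (v.1 a)) ≠ 0
      rw [ell_pz_s hn]; exact one_ne_zero
    · show ell t (pz n s t (v.1 a)) ≠ 0
      rw [ell_pz_t hn hst]; exact v.2 a
  let F : C(DD k, S) := ⟨fun v => ⟨pq (k+1) n (pp v), hpS v⟩, ((pq_continuous _ _).comp hpp).subtype_mk _⟩
  have hF : ∀ (w w' : DD k) (e : Equiv.Perm (Fin (k+1))), w.1 ∘ e = w'.1 → F w = F w' := by
    intro w w' e he
    refine Subtype.ext (pq_eq.2 ⟨e, fun _ => 1, fun _ => one_ne_zero, fun a => ?_⟩)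
    simp [pp, ← he]
  obtain ⟨K, hK0, hK1, hKe⟩ := sp_homotopy F hF
  let cc : C(Nz ℂ, DD k) := ⟨fun z => ⟨conc z.1, conc_ne z.2⟩, by
    refine Continuous.subtype_mk (continuous_pi fun a => ?_) _
    unfold conc
    split_ifs <;> fun_prop⟩
  refine ⟨u, F.comp cc, fun x hx => congrArg Subtype.val (hu x hx), ?_, ?_⟩
  · ext z
    refine (congrArg Subtype.val (hu (pp (cc z)) (hpS _))).trans ?_
    show ∏ a, ell t (pz n s t (conc z.1 a)) / ell s (pz n s t (conc z.1 a)) = z.1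
    simp only [ell_pz_s hn, ell_pz_t hn hst, div_one, conc_prod]
  · obtain ⟨f, hf, hf'⟩ := line_homotopy hS (j₀ := s) (by simp)
      ((ell s).smulRight (vab n 1 0) + (((t : ℂ) - s)⁻¹ • (ell t - ell s)).smulRight (vab n (-s) 1)) (by
        intro j hj v
        simp only [Finset.mem_union, Finset.mem_singleton] at hj
        rcases hj with rfl | rfl
        · simp [ell_vab hn]
        · simp [ell_vab hn]
          field_simp
          ring)
    refine ContinuousMap.Homotopic.symm (hf.trans ?_)
    refine homotopic_of_descend (pq_open (k+1) n) S _ _ (fun p => K (p.1, w p.2)) (by fun_prop) ?_ ?_ ?_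
    · intro r x y h
      obtain ⟨e, he⟩ := hwe x y h
      exact hKe r _ _ e he
    · intro x
      simp only [hK0]
      refine Subtype.ext ?_
      have hne : ∀ a, ell s (x.1 a).1 • (pp (w x) a).1 ≠ 0 := fun a => smul_ne_zero (hs x a) (pp (w x) a).2
      rw [hf' x.1 x.2 (fun a => ⟨_, hne a⟩)]
      · refine pq_eq.2 ⟨1, fun a => ell s (x.1 a).1, hs x, fun a => rfl⟩
      · intro a
        have := hs x a
        simp [pp, w, pz, smul_smul]
        congr 1
        field_simp
    · intro x
      simp only [hK1]
      show F _ = F _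
      congr 1
      refine Subtype.ext ?_
      show conc _ = conc _
      congr 1
      exact (congrArg Subtype.val (hu x.1 x.2)).symm

lemma IC_UU01 (hn : 1 ≤ n) : IC ↥(UU (k+1) n 0 ∩ UU (k+1) n 1) 2 := by
  obtain ⟨u, g, -, h1, h2⟩ := ug (k := k) hn (s := 0) (t := 1) (by norm_num)
  refine IC_of_equiv u g h2 ?_ IC_Cstar
  rw [h1]

lemma IC_Y2 (hn : 1 ≤ n) : IC ↥(UU (k+1) n 0 ∪ UU (k+1) n 1) 3 :=
  sus_inf (UU_open 0) (UU_open 1) (IC_UU01 hn) (HZ_UU hn 0 2) (HZ_UU hn 1 2) (HZ_UU hn 0 3) (HZ_UU hn 1 3)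

end ug
end SPH


namespace SPH
open scoped unitInterval

section paths
variable {d n : ℕ}

lemma joined_loc (hn : 1 ≤ n) {S : Set (YY d n)} {J : Finset ℕ} (hS : IsLoc S J) {j₀ : ℕ} (hj : j₀ ∈ J)
    (x : WW d n) (hx : pq d n x ∈ S) : JoinedIn S (pq d n x) (pq d n fun _ => e0 hn) := by
  have hx' := (hS x).1 hx
  let B : Set ℂ := ⋃ j ∈ J, ⋃ a : Fin d, {z : ℂ | (1 - z) * ell j (x a).1 + z = 0}
  have hB : B.Countable := by
    refine J.countable_toSet.biUnion fun j hj => Set.countable_iUnion fun a => ?_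
    refine Set.Subsingleton.countable ?_
    intro z hz z' hz'
    simp only [Set.mem_ofPred_eq] at hz hz'
    by_contra hne
    have h1 : (z - z') * (1 - ell j (x a).1) = 0 := by linear_combination hz - hz'
    have h2 : 1 - ell j (x a).1 = 0 := (mul_eq_zero.1 h1).resolve_left (sub_ne_zero.2 hne)
    have h3 : ell j (x a).1 = 1 := by linear_combination -h2
    rw [h3] at hz
    norm_num at hz
  have hmem : ∀ z, z ∉ B → ∀ j ∈ J, ∀ a, (1 - z) * ell j (x a).1 + z ≠ 0 := by
    intro z hz j hj a h
    exact hz (Set.mem_biUnion hj (Set.mem_iUnion.2 ⟨a, h⟩))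
  have hpc := hB.isPathConnected_compl_of_one_lt_rank (E := ℂ) (by
    rw [Complex.rank_real_complex]; norm_num)
  have h0 : (0 : ℂ) ∈ Bᶜ := by
    intro h
    simp only [B, Set.mem_iUnion, Set.mem_ofPred_eq] at h
    obtain ⟨j, hj, a, h⟩ := h
    exact hx' j hj a (by simpa using h)
  have h1 : (1 : ℂ) ∈ Bᶜ := by
    intro h
    simp [B] at h
  obtain ⟨γ, hγ⟩ := hpc.joinedIn 0 h0 1 h1
  have hell : ∀ t, ∀ j ∈ J, ∀ a, ell j ((1 - γ t) • (x a).1 + γ t • (e0 hn).1) ≠ 0 := by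
    intro t j hj a
    have := hmem _ (hγ t) j hj a
    simpa [ell_e0] using this
  let A : I → WW d n := fun t a => ⟨(1 - γ t) • (x a).1 + γ t • (e0 hn).1, ne_zero_of_ell (hell t j₀ hj a)⟩
  have hA : Continuous A := by
    refine continuous_pi fun a => Continuous.subtype_mk ?_ _
    fun_prop
  refine ⟨⟨⟨fun t => pq d n (A t), (pq_continuous d n).comp hA⟩, ?_, ?_⟩, fun t => ?_⟩
  · show pq d n (A 0) = _
    congr 1
    funext a
    exact Subtype.ext (by simp [A])
  · show pq d n (A 1) = _
    congr 1
    funext a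
    exact Subtype.ext (by simp [A])
  · exact (hS _).2 fun j hj a => hell t j hj a

lemma HZ_loc (hn : 1 ≤ n) (T : Set (YY d n)) (hT : ∀ y ∈ T, ∃ (S : Set (YY d n)) (J : Finset ℕ) (j : ℕ),
    S ⊆ T ∧ IsLoc S J ∧ j ∈ J ∧ y ∈ S) : HZ T 1 := by
  have key : ∀ y ∈ T, JoinedIn T y (pq d n fun _ => e0 hn) := by
    intro y hy
    obtain ⟨S, J, j, hST, hS, hj, hyS⟩ := hT y hy
    obtain ⟨x, rfl⟩ := (pq_open d n).surjective y
    exact (joined_loc hn hS hj x hyS).mono hST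
  refine HZ_one fun x y => ?_
  exact ((key x x.2).trans (key y y.2).symm).joined_subtype

end paths

section loops

lemma bound_of_loop {X Z Z' : Type} [TopologicalSpace X] [TopologicalSpace Z] [TopologicalSpace Z']
    {A C : Set X} (r : C(A, Z)) (γ : C(Z, A)) (h : (γ.comp r).Homotopic (.id A)) (Γ : C(Z', X))
    (hΓ : ∀ z, Γ z ∈ C) (j : C(Z, Z')) (hj : ∀ z, Γ (j z) = (γ z).1) {n : ℕ} (hZ : HZ Z' n)
    {x : Chain n X} (hx : x ∈ Ch A n) (hc : IsCyc x) : Bd (A ∪ C) x := by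
  obtain ⟨x, rfl⟩ := exists_lift hx
  have hc' := isCyc_inc.1 hc
  obtain ⟨w, hw⟩ := homotopic_cyc h hc'
  obtain ⟨w', hw'⟩ := hZ _ ((hc'.cmap r).cmap j)
  have e : (inc A).comp γ = Γ.comp j := by
    ext z
    exact (hj z).symm
  have h1 : cmap (inc A) x = d (cmap Γ w') - d (cmap (inc A) w) := by
    rw [← cmap_d, ← cmap_d, ← hw, hw', map_sub, cmap_id, cmap_comp, ← cmap_comp, ← e, cmap_comp]
    abel
  rw [h1]
  refine Bd.sub (bd_d ?_) (bd_d ?_)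
  · exact cmap_mem (A := Set.univ) Γ (fun z _ => .inr (hΓ z)) (Ch_univ _)
  · exact Ch_mono Set.subset_union_left (inc_mem A w)

variable {k n : ℕ}

noncomputable def rho (z : ℂ) : ℂ := z / (1 + ‖z‖ : ℝ)

lemma rho_den (z : ℂ) : ((1 + ‖z‖ : ℝ) : ℂ) ≠ 0 := by
  have : (0 : ℝ) < 1 + ‖z‖ := by positivity
  exact_mod_cast this.ne'

@[fun_prop]
lemma rho_cont : Continuous rho := by
  unfold rho
  exact Continuous.div (by fun_prop) (by fun_prop) rho_den

lemma rho_lt (z : ℂ) : ‖rho z‖ < 1 := by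
  have : (0 : ℝ) < 1 + ‖z‖ := by positivity
  rw [rho, norm_div, Complex.norm_real, Real.norm_of_nonneg this.le, div_lt_one this]
  linarith

lemma ne_of_small {z : ℂ} (hz : ‖z‖ < 1) {i m : ℕ} (h : i ≠ m) : z - i + m ≠ 0 := by
  intro h0
  have h1 : z = ((i - m : ℤ) : ℂ) := by push_cast; linear_combination h0
  rw [h1, Complex.norm_intCast] at hz
  have : (i - m : ℤ) = 0 := by
    have : |(i - m : ℤ)| < 1 := by exact_mod_cast hz
    rwa [Int.abs_lt_one_iff] at this
  omega

lemma rho_ne {z : ℂ} (hz : z ≠ 0) : rho z ≠ 0 := div_ne_zero hz (rho_den z)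

noncomputable def gvec (n i : ℕ) (hn : 1 ≤ n) (z : ℂ) : Nz (V n) := ⟨vab n (rho z - i) 1, by
  intro h
  have h1 := ell_vab hn i (rho z - i) 1
  have h2 := ell_vab hn (i+1) (rho z - i) 1
  rw [h, map_zero] at h1 h2
  push_cast at h2
  have : (1 : ℂ) = 0 := by linear_combination h1 - h2
  exact one_ne_zero this⟩

noncomputable def gW (k n i : ℕ) (hn : 1 ≤ n) (z : ℂ) : WW (k+1) n :=
  fun a => if a = 0 then gvec n i hn z else e0 hn

lemma gW_cont (i : ℕ) (hn : 1 ≤ n) : Continuous (gW k n i hn) := by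
  refine continuous_pi fun a => ?_
  unfold gW
  split_ifs
  · exact Continuous.subtype_mk (vab_continuous (by fun_prop) continuous_const) _
  · exact continuous_const

lemma gW_ell (i m : ℕ) (hn : 1 ≤ n) (z : ℂ) (a : Fin (k+1)) :
    ell m (gW k n i hn z a).1 = if a = 0 then rho z - i + m else 1 := by
  unfold gW
  split_ifs
  · simp [gvec, ell_vab hn]
  · exact ell_e0 hn m

lemma gW_mem {i m : ℕ} (hn : 1 ≤ n) (h : i ≠ m) (z : ℂ) : pq (k+1) n (gW k n i hn z) ∈ UU (k+1) n m := by
  refine mem_UU.2 fun a => ?_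
  rw [gW_ell]
  split_ifs
  · exact ne_of_small (rho_lt z) h
  · exact one_ne_zero

lemma gW_mem' (i : ℕ) (hn : 1 ≤ n) {z : ℂ} (hz : z ≠ 0) :
    pq (k+1) n (gW k n i hn z) ∈ UU (k+1) n i := by
  refine mem_UU.2 fun a => ?_
  rw [gW_ell]
  split_ifs
  · simpa using rho_ne hz
  · exact one_ne_zero

lemma HZ_C (m : ℕ) : HZ ℂ m := by
  refine HZ_of_contr 0 ⟨⟨⟨fun p => ((1 - p.1 : ℝ) : ℂ) * p.2, by fun_prop⟩, ?_, ?_⟩⟩ m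
  · intro x; simp
  · intro x; simp

lemma loop_bound (hn : 1 ≤ n) {m i j : ℕ} (hmi : m ≠ i) (hij : i ≠ j)
    {x : Chain 2 (YY (k+1) n)} (hx : x ∈ Ch (UU (k+1) n m ∩ UU (k+1) n i) 2) (hc : IsCyc x) :
    Bd ((UU (k+1) n m ∩ UU (k+1) n i) ∪ (UU (k+1) n m ∩ UU (k+1) n j)) x := by
  obtain ⟨u, g, hu, -, hgu⟩ := ug (k := k) hn hmi
  have hmi0 : (m : ℂ) - i ≠ 0 := sub_ne_zero.2 (by exact_mod_cast hmi)
  let Γ : C(ℂ, YY (k+1) n) := ⟨fun z => pq (k+1) n (gW k n i hn z), (pq_continuous _ _).comp (gW_cont i hn)⟩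
  let γ : C(Nz ℂ, ↥(UU (k+1) n m ∩ UU (k+1) n i)) :=
    ⟨fun z => ⟨Γ z.1, gW_mem hn hmi.symm _, gW_mem' i hn z.2⟩,
      (Γ.continuous.comp continuous_subtype_val).subtype_mk _⟩
  let κ : C(Nz ℂ, Nz ℂ) := ⟨fun z => ⟨(m - i) * z.1, mul_ne_zero hmi0 z.2⟩, by fun_prop⟩
  let η : C(Nz ℂ, Nz ℂ) := ⟨fun z => ⟨z.1 / (m - i), div_ne_zero z.2 hmi0⟩, by fun_prop⟩
  have hηκ : η.comp κ = .id _ := by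
    ext z
    show ((m : ℂ) - i) * z.1 / (m - i) = z.1
    field_simp
  have hγ : (u.comp γ).Homotopic η := by
    have hden : ∀ p : I × Nz ℂ, ((1 - p.1 : ℝ) : ℂ) * rho p.2.1 - i + m ≠ 0 := by
      intro p
      refine ne_of_small ?_ hmi.symm
      rw [norm_mul, Complex.norm_real, Real.norm_of_nonneg (sub_nonneg.2 p.1.2.2)]
      have h1 := rho_lt p.2.1
      have h2 := p.1.2.1
      have h3 := p.1.2.2
      nlinarith [norm_nonneg (rho p.2.1)]
    have hnum : ∀ p : I × Nz ℂ, (((1 - p.1) * (1 + ‖p.2.1‖)⁻¹ + p.1 : ℝ) : ℂ) ≠ 0 := by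
      intro p
      have h1 : (0 : ℝ) < (1 + ‖p.2.1‖)⁻¹ := by positivity
      have h2 := p.1.2.1
      have h3 := p.1.2.2
      have : (0 : ℝ) < (1 - p.1) * (1 + ‖p.2.1‖)⁻¹ + p.1 := by
        rcases h2.eq_or_lt with h | h
        · rw [← h]; simpa using h1
        · have := mul_nonneg (sub_nonneg.2 h3) h1.le
          linarith
      exact_mod_cast this.ne'
    refine ⟨⟨⟨fun p => ⟨p.2.1 * (((1 - p.1) * (1 + ‖p.2.1‖)⁻¹ + p.1 : ℝ) : ℂ) /
      (((1 - p.1 : ℝ) : ℂ) * rho p.2.1 - i + m),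
        div_ne_zero (mul_ne_zero p.2.2 (hnum p)) (hden p)⟩, ?_⟩, ?_, ?_⟩⟩
    · refine Continuous.subtype_mk (Continuous.div ?_ ?_ hden) _
      · have : Continuous fun p : I × Nz ℂ => (1 + ‖p.2.1‖)⁻¹ :=
          Continuous.inv₀ (by fun_prop) fun p => by positivity
        fun_prop
      · fun_prop
    · intro z
      refine Subtype.ext (Eq.trans ?_ (hu (gW k n i hn z.1) _).symm)
      have hz : rho z.1 = z.1 * (((1 + ‖z.1‖)⁻¹ : ℝ) : ℂ) := by
        rw [rho, div_eq_mul_inv]; push_cast; rfl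
      have : ∀ a : Fin (k+1), ell i (gW k n i hn z.1 a).1 / ell m (gW k n i hn z.1 a).1 =
          if a = 0 then rho z.1 / (rho z.1 - i + m) else 1 := by
        intro a
        rw [gW_ell, gW_ell]
        split_ifs <;> simp
      simp only [this, Finset.prod_ite_eq', Finset.mem_univ, if_true]
      simp [hz]
    · intro z
      refine Subtype.ext ?_
      show _ = z.1 / ((m : ℂ) - i)
      simp
      congr 1
      ring
  refine bound_of_loop (κ.comp u) γ ?_ Γ (C := UU (k+1) n m ∩ UU (k+1) n j) ?_ (inc {z : ℂ | z ≠ 0}) (fun z => rfl) (HZ_C 2) hx hc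
  · have h1 : ((γ.comp (κ.comp u))).Homotopic ((g.comp u).comp (γ.comp (κ.comp u))) := by
      simpa using hgu.symm.comp (ContinuousMap.Homotopic.refl (γ.comp (κ.comp u)))
    have h2 : ((g.comp u).comp (γ.comp (κ.comp u))).Homotopic (g.comp (η.comp (κ.comp u))) :=
      (ContinuousMap.Homotopic.refl g).comp (hγ.comp (ContinuousMap.Homotopic.refl (κ.comp u)))
    have h3 : g.comp (η.comp (κ.comp u)) = g.comp u := by
      rw [← ContinuousMap.comp_assoc η, hηκ, ContinuousMap.id_comp]
    rw [h3] at h2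
    exact h1.trans (h2.trans hgu)
  · exact fun z => ⟨gW_mem hn hmi.symm _, gW_mem hn hij _⟩

end loops

section surj
variable {k n : ℕ}

def Ym (d n m : ℕ) : Set (YY d n) := {y | ∃ j < m, y ∈ UU d n j}

lemma Ym_succ {d n : ℕ} (m : ℕ) : Ym d n (m+1) = Ym d n m ∪ UU d n m := by
  ext y
  constructor
  · rintro ⟨j, hj, h⟩
    rcases (Nat.lt_succ_iff.1 hj).lt_or_eq with hj | rfl
    · exact .inl ⟨j, hj, h⟩
    · exact .inr h
  · rintro (⟨j, hj, h⟩ | h)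
    · exact ⟨j, by omega, h⟩
    · exact ⟨m, by omega, h⟩

lemma Ym_mono {d n m m' : ℕ} (h : m ≤ m') : Ym d n m ⊆ Ym d n m' :=
  fun _ ⟨j, hj, hy⟩ => ⟨j, by omega, hy⟩

lemma Ym_open {d n : ℕ} (m : ℕ) : IsOpen (Ym d n m) := by
  induction m with
  | zero =>
    convert isOpen_empty
    ext y
    simp [Ym]
  | succ m ih =>
    rw [Ym_succ]
    exact ih.union (UU_open m)

lemma Ym_one {d n : ℕ} : Ym d n 1 = UU d n 0 := by
  ext y; simp [Ym]

lemma Ym_two {d n : ℕ} : Ym d n 2 = UU d n 0 ∪ UU d n 1 := by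
  rw [Ym_succ, Ym_one]

lemma Ym_top {d n : ℕ} : Ym d n (n * d + 1) = Set.univ :=
  Set.eq_univ_of_forall fun y => cover y

lemma HZ_UYm (hn : 1 ≤ n) {m : ℕ} (hm : 2 ≤ m) : HZ ↥(Ym (k+1) n m ∩ UU (k+1) n m) 2 := by
  have key : ∀ i, 1 ≤ i → i ≤ m → ∀ z ∈ Ch (Ym (k+1) n i ∩ UU (k+1) n m) 2, IsCyc z →
      Bd (Ym (k+1) n m ∩ UU (k+1) n m) z := by
    have hl : ∀ i < m, ∀ z ∈ Ch (UU (k+1) n i ∩ UU (k+1) n m) 2, IsCyc z →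
        Bd (Ym (k+1) n m ∩ UU (k+1) n m) z := by
      intro i hi z hz hc
      obtain ⟨j, hj, hij⟩ : ∃ j < m, i ≠ j := by
        by_cases h : i = 0
        · exact ⟨1, by omega, by omega⟩
        · exact ⟨0, by omega, h⟩
      rw [Set.inter_comm] at hz
      refine (loop_bound hn hi.ne' hij hz hc).mono ?_
      rintro y (⟨h1, h2⟩ | ⟨h1, h2⟩)
      · exact ⟨⟨i, hi, h2⟩, h1⟩
      · exact ⟨⟨j, hj, h2⟩, h1⟩
    intro i hi
    induction i, hi using Nat.le_induction with
    | base =>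
      intro h1 z hz hc
      rw [Ym_one] at hz
      exact hl 0 (by omega) z hz hc
    | succ i hi ih =>
      intro h1 z hz hc
      rw [Ym_succ, Set.union_inter_distrib_right] at hz
      obtain ⟨a, ha, b, hb, hca, hcb, hbd⟩ := mv_split ((Ym_open i).inter (UU_open m))
        ((UU_open i).inter (UU_open m)) (HZ_loc hn _ (by
          rintro y ⟨⟨⟨j, hj, h1⟩, h2⟩, h3, -⟩
          refine ⟨UU (k+1) n j ∩ (UU (k+1) n m ∩ UU (k+1) n i), _, m, ?_,
            isLoc_inter (isLoc_UU j) (isLoc_inter (isLoc_UU m) (isLoc_UU i)), by simp, h1, h2, h3⟩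
          rintro y ⟨h1, h2, h3⟩
          exact ⟨⟨⟨j, hj, h1⟩, h2⟩, h3, h2⟩)) hz hc
      have h2 : z = (z - a - b) + (a + b) := by abel
      rw [h2]
      refine (hbd.mono ?_).add ((ih (by omega) a ha hca).add (hl i (by omega) b hb hcb))
      rintro y (⟨h1, h2⟩ | ⟨h1, h2⟩)
      · exact ⟨Ym_mono (by omega) h1, h2⟩
      · exact ⟨⟨i, by omega, h1⟩, h2⟩
  exact HZ_iff.2 (key m (by omega) le_rfl)

lemma surj_Y2 (hn : 1 ≤ n) {m : ℕ} (hm : 2 ≤ m) : ∀ z ∈ Ch (Ym (k+1) n m) 3, IsCyc z →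
    ∃ z' ∈ Ch (Ym (k+1) n 2) 3, IsCyc z' ∧ Bd (Ym (k+1) n m) (z - z') := by
  induction m, hm using Nat.le_induction with
  | base =>
    intro z hz hc
    refine ⟨z, hz, hc, 0, Submodule.zero_mem _, ?_⟩
    simp
  | succ m hm ih =>
    intro z hz hc
    rw [Ym_succ] at hz
    obtain ⟨a, ha, b, hb, hca, hcb, hbd⟩ := mv_split (Ym_open m) (UU_open m) (HZ_UYm hn hm) hz hc
    obtain ⟨z', hz', hc', h⟩ := ih a ha hca
    refine ⟨z', hz', hc', ?_⟩
    have h2 : z - z' = (z - a - b) + ((a - z') + b) := by abel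
    rw [h2, Ym_succ]
    exact hbd.add ((h.mono Set.subset_union_left).add
      ((HZ_iff.1 (HZ_UU hn m 3) b hb hcb).mono Set.subset_union_right))

end surj
end SPH


namespace SPH
open scoped unitInterval

section proj
variable {N : ℕ}

/-- The coordinate of index `j`, zero if out of range. -/
def co (v : V N) (j : ℕ) : ℂ := if h : j < N + 1 then v ⟨j, h⟩ else 0

lemma co_smul (c : ℂ) (v : V N) (j : ℕ) : co (c • v) j = c * co v j := by
  unfold co; split_ifs <;> simp

@[fun_prop]
lemma co_cont (j : ℕ) : Continuous fun v : V N => co v j := by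
  unfold co; split_ifs <;> fun_prop

lemma co_of_lt (v : V N) {j : ℕ} (h : j < N + 1) : co v j = v ⟨j, h⟩ := dif_pos h

lemma co_val (v : V N) (i : Fin (N+1)) : co v i = v i := dif_pos i.2

def VV (N : ℕ) (j : ℕ) : Set (CP N) := cpq N '' {v | co v.1 j ≠ 0}

lemma mem_VV {j : ℕ} {v : Nz (V N)} : cpq N v ∈ VV N j ↔ co v.1 j ≠ 0 := by
  constructor
  · rintro ⟨w, hw, h⟩
    obtain ⟨c, hc, h⟩ := cpq_eq.1 h
    rw [h, co_smul]
    exact mul_ne_zero hc hw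
  · intro h
    exact ⟨v, h, rfl⟩

lemma VV_open (j : ℕ) : IsOpen (VV N j) :=
  (cpq_open N).isOpenMap _ (isOpen_ne.preimage (by fun_prop))

def Cm (N m : ℕ) : Set (CP N) := {y | ∃ j < m, y ∈ VV N j}

lemma Cm_succ (m : ℕ) : Cm N (m+1) = Cm N m ∪ VV N m := by
  ext y
  constructor
  · rintro ⟨j, hj, h⟩
    rcases (Nat.lt_succ_iff.1 hj).lt_or_eq with hj | rfl
    · exact .inl ⟨j, hj, h⟩
    · exact .inr h
  · rintro (⟨j, hj, h⟩ | h)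
    · exact ⟨j, by omega, h⟩
    · exact ⟨m, by omega, h⟩

lemma Cm_mono {m m' : ℕ} (h : m ≤ m') : Cm N m ⊆ Cm N m' :=
  fun _ ⟨j, hj, hy⟩ => ⟨j, by omega, hy⟩

lemma Cm_open (m : ℕ) : IsOpen (Cm N m) := by
  induction m with
  | zero =>
    convert isOpen_empty
    ext y
    simp [Cm]
  | succ m ih =>
    rw [Cm_succ]
    exact ih.union (VV_open m)

lemma Cm_two : Cm N 2 = VV N 0 ∪ VV N 1 := by
  rw [Cm_succ]
  congr 1
  ext y; simp [Cm]

lemma Cm_top : Cm N (N + 1) = Set.univ := by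
  refine Set.eq_univ_of_forall fun y => ?_
  obtain ⟨v, rfl⟩ := (cpq_open N).surjective y
  obtain ⟨i, hi⟩ := Function.ne_iff.1 v.2
  exact ⟨i, i.2, mem_VV.2 (by rwa [co_val])⟩

lemma HZ_Cm_VV {m : ℕ} (hm : 2 ≤ m) (hmN : m < N + 1) : HZ ↥(Cm N m ∩ VV N m) 3 := by
  set S := Cm N m ∩ VV N m with hSdef
  have hS : ∀ v : Nz (V N), cpq N v ∈ S ↔ (∃ j < m, co v.1 j ≠ 0) ∧ co v.1 m ≠ 0 := by
    intro v
    simp only [hSdef, Set.mem_inter_iff, mem_VV, Cm, Set.mem_ofPred_eq]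
  obtain ⟨f, hf⟩ := descend' (cpq_open N) S
    (fun v => (⟨fun i : Fin m => co v.1.1 i / co v.1.1 m, by
      obtain ⟨⟨j, hj, hj'⟩, hm'⟩ := (hS v.1).1 v.2
      intro h
      exact div_ne_zero hj' hm' (congrFun h ⟨j, hj⟩)⟩ : Nz (Fin m → ℂ))) (by
      refine Continuous.subtype_mk (continuous_pi fun i => ?_) _
      exact Continuous.div (by fun_prop) (by fun_prop) fun v => ((hS v.1).1 v.2).2) (by
      intro x y h
      obtain ⟨c, hc, h⟩ := cpq_eq.1 h
      refine Subtype.ext (funext fun i => ?_)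
      simp only [h, co_smul]
      rw [mul_div_mul_left _ _ hc])
  let gv : (Fin m → ℂ) → V N := fun w i => if h : (i : ℕ) < m then w ⟨i, h⟩ else if (i : ℕ) = m then 1 else 0
  have hgc : Continuous gv := by
    refine continuous_pi fun i => ?_
    simp only [gv]
    split_ifs <;> fun_prop
  have hgm : ∀ w, co (gv w) m = 1 := by
    intro w
    rw [co_of_lt _ hmN]
    simp [gv]
  have hgj : ∀ w (i : Fin m), co (gv w) i = w i := by
    intro w i
    rw [co_of_lt _ (i.2.trans hmN)]
    simp [gv]
  have hg0 : ∀ w, gv w ≠ 0 := by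
    intro w h
    have := hgm w
    rw [h] at this
    simp [co] at this
  let g : C(Nz (Fin m → ℂ), S) := ⟨fun w => ⟨cpq N ⟨gv w.1, hg0 _⟩, (hS _).2 (by
    obtain ⟨i, hi⟩ := Function.ne_iff.1 w.2
    refine ⟨⟨i, i.2, ?_⟩, ?_⟩
    · rw [hgj]; exact hi
    · rw [hgm]; exact one_ne_zero)⟩, by
      refine Continuous.subtype_mk ((cpq_open N).continuous.comp (Continuous.subtype_mk ?_ _)) _
      fun_prop⟩
  refine HZ_of_dom f g ?_ (HZ_Cm m hm)
  let L : I × V N → V N := fun p i => if (i : ℕ) ≤ m then p.2 i else ((1 - p.1 : ℝ) : ℂ) * p.2 i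
  have hLc : Continuous L := by
    refine continuous_pi fun i => ?_
    simp only [L]
    split_ifs <;> fun_prop
  have hLj : ∀ p, ∀ j ≤ m, co (L p) j = co p.2 j := by
    intro p j hj
    rw [co_of_lt _ (by omega), co_of_lt _ (by omega)]
    simp [L, hj]
  have hL0 : ∀ t, ∀ v : cpq N ⁻¹' S, L (t, v.1.1) ≠ 0 := by
    intro t v h
    have h1 := hLj (t, v.1.1) m le_rfl
    rw [h] at h1
    exact ((hS v.1).1 v.2).2 (h1.symm.trans (by simp [co]))
  refine ContinuousMap.Homotopic.symm (homotopic_of_descend (cpq_open N) S _ _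
    (fun p => ⟨cpq N ⟨L (p.1, p.2.1.1), hL0 _ _⟩, (hS _).2 (by
      obtain ⟨⟨j, hj, hj'⟩, hm'⟩ := (hS p.2.1).1 p.2.2
      refine ⟨⟨j, hj, ?_⟩, ?_⟩
      · rw [hLj _ _ hj.le]; exact hj'
      · rw [hLj _ _ le_rfl]; exact hm')⟩) ?_ ?_ ?_ ?_)
  · refine Continuous.subtype_mk ((cpq_open N).continuous.comp (Continuous.subtype_mk ?_ _)) _
    fun_prop
  · intro t x y h
    obtain ⟨c, hc, h⟩ := cpq_eq.1 h
    refine Subtype.ext (cpq_eq.2 ⟨c, hc, ?_⟩)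
    funext i
    simp only [L, h, Pi.smul_apply, smul_eq_mul]
    split_ifs
    · rfl
    · ring
  · intro x
    refine Subtype.ext (congrArg (cpq N) (Subtype.ext (funext fun i => ?_)))
    simp [L]
  · intro x
    refine Subtype.ext (Eq.trans ?_ (congrArg (fun w => (g w).1) (hf x.1 x.2)).symm)
    have hm' := ((hS x.1).1 x.2).2
    refine cpq_eq.2 ⟨(co x.1.1 m)⁻¹, inv_ne_zero hm', funext fun i => ?_⟩
    simp only [gv, L, Pi.smul_apply, smul_eq_mul]
    rcases lt_trichotomy (i : ℕ) m with h | h | h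
    · simp [h, h.le, co_val]
      field_simp
    · simp only [h, lt_irrefl, dif_neg, not_false_eq_true, if_true, le_refl]
      rw [← h, co_val] at hm'
      rw [← h, co_val, inv_mul_cancel₀ hm']
    · simp [h.not_gt, h.ne', h.not_ge]

lemma inj_C {m : ℕ} (hm : 2 ≤ m) (hmN : m ≤ N + 1) {z : Chain 3 (CP N)} (hz : z ∈ Ch (Cm N 2) 3)
    (h : Bd (Cm N m) z) : Bd (Cm N 2) z := by
  induction m, hm using Nat.le_induction with
  | base => exact h
  | succ m hm ih =>
    rw [Cm_succ] at h
    exact ih (by omega) (mv_inj (Cm_open m) (VV_open m) (HZ_Cm_VV hm (by omega))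
      (Ch_mono (Cm_mono hm) hz) h)

end proj

section inj

lemma inj_of_retract {X X' Z : Type} [TopologicalSpace X] [TopologicalSpace X'] [TopologicalSpace Z]
    {A : Set X} {A' : Set X'} (f : C(X, X')) (hf : ∀ x ∈ A, f x ∈ A') (u : C(A, Z)) (v : C(A', Z))
    (g : C(Z, A)) (huv : ∀ x : A, v ⟨f x.1, hf x.1 x.2⟩ = u x) (h : (g.comp u).Homotopic (.id A)) {n : ℕ}
    (x : Chain n X) (hx : x ∈ Ch A n) (hc : IsCyc x) (hb : Bd A' (cmap f x)) : Bd A x := by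
  obtain ⟨x, rfl⟩ := exists_lift hx
  have hc' := isCyc_inc.1 hc
  let f' : C(A, A') := ⟨fun x => ⟨f x.1, hf x.1 x.2⟩, by fun_prop⟩
  have e : f.comp (inc A) = (inc A').comp f' := rfl
  have e' : v.comp f' = u := ContinuousMap.ext huv
  rw [← cmap_comp, e, cmap_comp] at hb
  obtain ⟨w, hw⟩ := bd_inc.1 hb
  obtain ⟨w', hw'⟩ := homotopic_cyc h hc'
  refine bd_inc.2 ⟨cmap g (cmap v w) - w', ?_⟩
  rw [map_sub, ← hw', ← cmap_d, ← cmap_d, hw, ← cmap_comp v, e', cmap_id, cmap_comp]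
  abel

variable {k n : ℕ}

lemma exists_phi : ∃ φ : C(YY (k+1) n, CP (n * (k+1))), ∀ x : WW (k+1) n,
    ∃ v : Nz (V (n * (k+1))), φ (pq (k+1) n x) = cpq _ v ∧
      ∀ j < n * (k+1) + 1, co v.1 j = ∏ a, ell j (x a).1 := by
  let vv : WW (k+1) n → Nz (V (n * (k+1))) := fun x => ⟨fun j => ∏ a, ell (j : ℕ) (x a).1, by
    obtain ⟨t, ht, h⟩ := cover (pq (k+1) n x)
    intro h0
    have := congrFun h0 ⟨t, ht⟩
    exact (Finset.prod_ne_zero_iff.2 fun a _ => mem_UU.1 h a) this⟩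
  have hvv : Continuous vv := by
    refine Continuous.subtype_mk (continuous_pi fun j => ?_) _
    fun_prop
  let F : C(WW (k+1) n, CP (n * (k+1))) := ⟨fun x => cpq _ (vv x), (cpq_open _).continuous.comp hvv⟩
  let Q : C(WW (k+1) n, YY (k+1) n) := ⟨pq (k+1) n, pq_continuous _ _⟩
  have hQ : Topology.IsQuotientMap Q := (pq_open (k+1) n).isQuotientMap
  have h2 : Function.FactorsThrough F Q := by
    intro x y h
    obtain ⟨e, c, hc, h⟩ := pq_eq.1 h
    refine cpq_eq.2 ⟨∏ a, c a, Finset.prod_ne_zero_iff.2 fun a _ => hc a, funext fun j => ?_⟩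
    simp only [vv, h, map_smul, smul_eq_mul, Finset.prod_mul_distrib, Pi.smul_apply]
    congr 1
    exact Equiv.prod_comp e fun a => ell (j : ℕ) (x a).1
  refine ⟨hQ.lift F h2, fun x => ⟨vv x, ContinuousMap.congr_fun (hQ.lift_comp F h2) x, ?_⟩⟩
  intro j hj
  rw [co_of_lt _ hj]

lemma inj_Y (hn : 1 ≤ n) {z : Chain 3 (YY (k+1) n)} (hz : z ∈ Ch (Ym (k+1) n 2) 3) (hc : IsCyc z)
    (hb : Bd Set.univ z) : Bd (Ym (k+1) n 2) z := by
  obtain ⟨φ, hφ⟩ := exists_phi (k := k) (n := n)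
  have hN : 2 ≤ n * (k+1) + 1 := by
    have : 1 * 1 ≤ n * (k+1) := Nat.mul_le_mul hn (by omega)
    omega
  have hφm : ∀ j < n * (k+1) + 1, ∀ y ∈ UU (k+1) n j, φ y ∈ VV (n * (k+1)) j := by
    intro j hj y hy
    obtain ⟨x, rfl⟩ := (pq_open (k+1) n).surjective y
    obtain ⟨v, hv, hv'⟩ := hφ x
    rw [hv, mem_VV, hv' j hj]
    exact Finset.prod_ne_zero_iff.2 fun a _ => mem_UU.1 hy a
  have h1 : Bd (Cm (n * (k+1)) 2) (cmap φ z) := by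
    refine inj_C hN le_rfl ?_ ?_
    · refine cmap_mem φ ?_ hz
      rintro y ⟨j, hj, hy⟩
      exact ⟨j, hj, hφm j (by omega) y hy⟩
    · rw [Cm_top]
      exact hb.cmap φ fun _ _ => trivial
  rw [Cm_two] at h1
  rw [Ym_two] at hz ⊢
  obtain ⟨u, g, hu, -, hgu⟩ := ug (k := k) hn (s := 0) (t := 1) (by norm_num)
  have hv0 : ∀ v : cpq (n * (k+1)) ⁻¹' (VV (n * (k+1)) 0 ∩ VV (n * (k+1)) 1), co v.1.1 0 ≠ 0 :=
    fun v => mem_VV.1 v.2.1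
  obtain ⟨v, hv⟩ := descend' (cpq_open (n * (k+1))) (VV (n * (k+1)) 0 ∩ VV (n * (k+1)) 1)
    (fun v => (⟨co v.1.1 1 / co v.1.1 0, div_ne_zero (mem_VV.1 v.2.2) (hv0 v)⟩ : Nz ℂ)) (by
      refine Continuous.subtype_mk ?_ _
      exact Continuous.div (by fun_prop) (by fun_prop) hv0) (by
      intro x y h
      obtain ⟨c, hc, h⟩ := cpq_eq.1 h
      refine Subtype.ext ?_
      simp only [h, co_smul]
      rw [mul_div_mul_left _ _ hc])
  refine mv_five (UU_open 0) (UU_open 1) (VV_open 0) (VV_open 1) φ (hφm 0 (by omega)) (hφm 1 (by omega))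
    ?_ (HZ_UU hn 0 3) (HZ_UU hn 1 3) hz hc h1
  refine inj_of_retract (A' := VV (n * (k+1)) 0 ∩ VV (n * (k+1)) 1) φ (fun y hy => ⟨hφm 0 (by omega) y hy.1, hφm 1 (by omega) y hy.2⟩) u v g ?_ hgu
  rintro ⟨y, hy⟩
  obtain ⟨x, rfl⟩ := (pq_open (k+1) n).surjective y
  obtain ⟨w, hw, hw'⟩ := hφ x
  refine Subtype.ext ?_
  rw [hu x hy, Finset.prod_div_distrib, ← hw' 0 (by omega), ← hw' 1 (by omega)]
  have hmem : cpq (n * (k+1)) w ∈ VV (n * (k+1)) 0 ∩ VV (n * (k+1)) 1 := by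
    rw [← hw]
    exact ⟨hφm 0 (by omega) _ hy.1, hφm 1 (by omega) _ hy.2⟩
  refine Eq.trans ?_ (congrArg Subtype.val (hv w hmem))
  simp only [hw]

lemma IC_YY (hn : 1 ≤ n) : IC (YY (k+1) n) 3 := by
  have h := IC_Y2 (k := k) hn
  rw [← Ym_two] at h
  obtain ⟨ζ, hζ, hcζ, h1, h2⟩ := IC_iff.1 h
  have hN : 2 ≤ n * (k+1) + 1 := by
    have : 1 * 1 ≤ n * (k+1) := Nat.mul_le_mul hn (by omega)
    omega
  refine ⟨ζ, hcζ, fun z hz => ?_, fun m w hw => ?_⟩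
  · obtain ⟨z', hz', hc', hb⟩ := surj_Y2 (k := k) hn hN z (by rw [Ym_top]; exact Ch_univ z) hz
    obtain ⟨m, hm⟩ := h1 z' hz' hc'
    rw [Ym_top] at hb
    obtain ⟨w, -, hw⟩ := hb.add (hm.mono (Set.subset_univ _))
    refine ⟨m, w, ?_⟩
    rw [hw]
    abel
  · apply h2 m
    refine inj_Y hn (Submodule.smul_mem _ _ hζ) (hcζ.smul m) ⟨w, Ch_univ w, hw.symm⟩

end inj
end SPH

/-- **Corollary 3.7** (case `p = 0`, second assertion): for `d ≥ 1` and `n ≥ 1`,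
`H₂(SP^d(ℂP^n); ℤ) ≅ ℤ`. -/
theorem h_two_sp_cp (d n : ℕ) (hd : 1 ≤ d) (hn : 1 ≤ n) :
    Nonempty ((SingularHomology ℤ (SP (CP n) d) 2) ≃ₗ[ℤ] ℤ) := by
  obtain ⟨k, rfl⟩ := Nat.exists_eq_add_of_le' hd
  exact SPH.final_of_IC _ (SPH.IC_YY hn)
end

section
/- Fix n ≥ 0 and d ≥ 1, let p_0 = [0 : ⋯ : 0 : 1] ∈ ℂP^{n+1}, and let U_{0,d}(ℙ^{n+1}) denote the subspace of SP^d(ℂP^{n+1}) consisting of those unordered d-tuples none of whose entries equals p_0. Then the inclusion U_{0,d}(ℙ^{n+1}) ↪ SP^d(ℂP^{n+1}) is 2n-connected; in particular it induces isomorphisms π_k(U_{0,d}(ℙ^{n+1})) → π_k(SP^d(ℂP^{n+1})) for all 0 ≤ k ≤ 2n. -/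
open scoped Topology

/-- The point `p₀ = [0 : ⋯ : 0 : 1] ∈ ℂP^{n+1}`. -/
noncomputable def lastPoint (n : ℕ) : CP (n + 1) :=
  Projectivization.mk ℂ (Pi.single (Fin.last (n + 1)) (1 : ℂ))
    (fun h => one_ne_zero (α := ℂ) (by
      have := congrFun h (Fin.last (n + 1))
      rwa [Pi.single_eq_same] at this))

/-- An unordered `d`-tuple `s ∈ SP^d(X)` avoids `a : X` if none of its entries equals `a`. -/
def SPAvoids {X : Type} [TopologicalSpace X] {d : ℕ} (s : SP X d) (a : X) : Prop :=
  ∀ f : Fin d → X, Quotient.mk (SPSetoid X d) f = s → ∀ i, f i ≠ a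

/-- The map induced on homotopy groups (based homotopy classes of maps from the `N`-cube,
boundary to the basepoint) by a continuous map, given by postcomposition. -/
noncomputable def HomotopyGroup.inducedMap (N : Type) {X Y : Type}
    [TopologicalSpace X] [TopologicalSpace Y] (f : C(X, Y)) (x : X) :
    HomotopyGroup N X x → HomotopyGroup N Y (f x) :=
  Quotient.map
    (fun p => ⟨f.comp p.1, fun y hy => by
      simp only [ContinuousMap.comp_apply]
      rw [p.2 y hy]⟩)
    (fun p q h => h.map fun H => H.compContinuousMap f)

open scoped unitInterval
open Topology Topology.Homotopy

/-! ### Symmetric products -/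

/-- The quotient map `X^d → SP^d X`. -/
def spMk {X : Type} [TopologicalSpace X] {d : ℕ} (f : Fin d → X) : SP X d :=
  Quotient.mk (SPSetoid X d) f

theorem spMk_eq {X : Type} [TopologicalSpace X] {d : ℕ} {f g : Fin d → X} :
    spMk f = spMk g ↔ ∃ τ : Equiv.Perm (Fin d), f ∘ τ = g :=
  ⟨fun h => Quotient.exact h, fun h => Quotient.sound h⟩

theorem spMk_surj {X : Type} [TopologicalSpace X] {d : ℕ} :
    Function.Surjective (spMk : (Fin d → X) → SP X d) := Quotient.mk_surjective

theorem spMk_open {X : Type} [TopologicalSpace X] {d : ℕ} :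
    IsOpenQuotientMap (spMk : (Fin d → X) → SP X d) := by
  have hq : IsQuotientMap (spMk : (Fin d → X) → SP X d) := isQuotientMap_quot_mk
  refine ⟨spMk_surj, hq.continuous, ?_⟩
  intro W hW
  rw [← hq.isOpen_preimage]
  have : spMk ⁻¹' (spMk '' W) =
      ⋃ τ : Equiv.Perm (Fin d), (fun f : Fin d → X => f ∘ τ) ⁻¹' W := by
    ext f
    simp only [Set.mem_preimage, Set.mem_image, Set.mem_iUnion]
    constructor
    · rintro ⟨g, hg, h⟩
      obtain ⟨τ, hτ⟩ := spMk_eq.1 h.symm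
      exact ⟨τ, by rwa [hτ]⟩
    · rintro ⟨τ, hτ⟩
      exact ⟨_, hτ, (spMk_eq.2 ⟨τ, rfl⟩).symm⟩
  rw [this]
  exact isOpen_iUnion fun τ => hW.preimage (by fun_prop)

/-- All entries of the tuple `s` lie in `O`. -/
def SPAllIn {X : Type} [TopologicalSpace X] {d : ℕ} (s : SP X d) (O : Set X) : Prop :=
  ∀ f : Fin d → X, spMk f = s → ∀ i, f i ∈ O

theorem spAllIn_mk {X : Type} [TopologicalSpace X] {d : ℕ} (f : Fin d → X) (O : Set X) :
    SPAllIn (spMk f) O ↔ ∀ i, f i ∈ O := by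
  constructor
  · intro h; exact h f rfl
  · intro h g hg i
    obtain ⟨τ, rfl⟩ := spMk_eq.1 hg.symm
    exact h _

theorem spAllIn_isOpen {X : Type} [TopologicalSpace X] {d : ℕ} {O : Set X} (hO : IsOpen O) :
    IsOpen {s : SP X d | SPAllIn s O} := by
  rw [← spMk_open.isQuotientMap.isOpen_preimage]
  have : spMk ⁻¹' {s : SP X d | SPAllIn s O} = ⋂ i, (fun f : Fin d → X => f i) ⁻¹' O := by
    ext f; simp [spAllIn_mk]
  rw [this]
  exact isOpen_iInter_of_finite fun i => hO.preimage (continuous_apply i)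

theorem spAvoids_mk {X : Type} [TopologicalSpace X] {d : ℕ} (f : Fin d → X) (a : X) :
    SPAvoids (spMk f) a ↔ ∀ i, f i ≠ a := spAllIn_mk f {a}ᶜ

/-- Product of the values of a real function over an unordered tuple. -/
noncomputable def spProd {X : Type} [TopologicalSpace X] {d : ℕ} (e : X → ℝ) (s : SP X d) : ℝ :=
  Quotient.lift (fun f : Fin d → X => ∏ i, e (f i)) (by
    rintro f g ⟨τ, rfl⟩
    exact (Equiv.prod_comp τ (fun i => e (f i))).symm) s

theorem spProd_mk {X : Type} [TopologicalSpace X] {d : ℕ} (e : X → ℝ) (f : Fin d → X) :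
    spProd e (spMk f) = ∏ i, e (f i) := rfl

theorem spProd_continuous {X : Type} [TopologicalSpace X] {d : ℕ} {e : X → ℝ}
    (he : Continuous e) : Continuous (spProd e : SP X d → ℝ) := by
  rw [spMk_open.isQuotientMap.continuous_iff]
  change Continuous fun f : Fin d → X => ∏ i, e (f i)
  fun_prop

/-- Push forward of an unordered tuple by a map. -/
def spPush {X : Type} [TopologicalSpace X] {d : ℕ} (F : X → X) (s : SP X d) : SP X d :=
  Quotient.lift (fun f : Fin d → X => spMk (fun i => F (f i))) (by
    rintro f g ⟨τ, rfl⟩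
    exact spMk_eq.2 ⟨τ, rfl⟩) s

theorem spPush_mk {X : Type} [TopologicalSpace X] {d : ℕ} (F : X → X) (f : Fin d → X) :
    spPush F (spMk f) = spMk (fun i => F (f i)) := rfl

theorem spPush_continuous {X P : Type} [TopologicalSpace X] [TopologicalSpace P] {d : ℕ}
    {F : P → X → X} (hF : Continuous (fun q : P × X => F q.1 q.2)) :
    Continuous (fun q : P × SP X d => spPush (F q.1) q.2) := by
  have hq : IsOpenQuotientMap (Prod.map id spMk : P × (Fin d → X) → P × SP X d) :=
    IsOpenQuotientMap.id.prodMap spMk_open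
  rw [hq.isQuotientMap.continuous_iff]
  have h : Continuous fun q : P × (Fin d → X) => fun i => F q.1 (q.2 i) :=
    continuous_pi fun i => hF.comp (continuous_fst.prodMk ((continuous_apply i).comp continuous_snd))
  exact spMk_open.continuous.comp h

theorem spPush_continuous_comp {X P : Type} [TopologicalSpace X] [TopologicalSpace P] {d : ℕ}
    {F : P → X → X} (hF : Continuous (fun q : P × X => F q.1 q.2)) {G : P → SP X d}
    (hG : Continuous G) : Continuous (fun p : P => spPush (F p) (G p)) := by
  have h := (spPush_continuous (d := d) hF).comp (continuous_id.prodMk hG)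
  exact h

/-! ### Projective space -/

/-- The quotient map onto projective space. -/
noncomputable def cpMk {n : ℕ} (y : { y : Fin (n + 1 + 1) → ℂ // y ≠ 0 }) : CP (n + 1) :=
  Quotient.mk (projectivizationSetoid ℂ (Fin (n + 1 + 1) → ℂ)) y

theorem cpMk_eq {n : ℕ} {x y : { y : Fin (n + 1 + 1) → ℂ // y ≠ 0 }} :
    cpMk x = cpMk y ↔ ∃ c : ℂˣ, c • y.1 = x.1 := by
  constructor
  · intro h; exact Quotient.exact h
  · intro h; exact Quotient.sound h

theorem cpMk_surj {n : ℕ} : Function.Surjective (cpMk (n := n)) := Quotient.mk_surjective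

theorem cpMk_open {n : ℕ} : IsOpenQuotientMap (cpMk (n := n)) := by
  have hq : IsQuotientMap (cpMk (n := n)) := isQuotientMap_quot_mk
  refine ⟨cpMk_surj, hq.continuous, ?_⟩
  intro W hW
  rw [← hq.isOpen_preimage]
  have : cpMk ⁻¹' (cpMk '' W) =
      ⋃ c : ℂˣ, (fun y : { y : Fin (n + 1 + 1) → ℂ // y ≠ 0 } =>
        (⟨c • y.1, (smul_ne_zero_iff_ne c).2 y.2⟩ : { y : Fin (n + 1 + 1) → ℂ // y ≠ 0 })) ⁻¹' W := by
    ext f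
    simp only [Set.mem_preimage, Set.mem_image, Set.mem_iUnion]
    constructor
    · rintro ⟨g, hg, h⟩
      obtain ⟨c, hc⟩ := cpMk_eq.1 h
      refine ⟨c, ?_⟩
      convert hg
    · rintro ⟨c, hc⟩
      exact ⟨_, hc, cpMk_eq.2 ⟨c, rfl⟩⟩
  rw [this]
  refine isOpen_iUnion fun c => hW.preimage ?_
  refine Continuous.subtype_mk ?_ _
  exact continuous_subtype_val.const_smul c

theorem coord_continuous {n : ℕ} (i : Fin (n + 1 + 1)) :
    Continuous fun y : { y : Fin (n + 1 + 1) → ℂ // y ≠ 0 } => y.1 i :=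
  (continuous_apply i).comp continuous_subtype_val

theorem affinePart_continuous {n : ℕ} :
    Continuous fun y : { y : Fin (n + 1 + 1) → ℂ // y ≠ 0 } =>
      fun i : Fin (n + 1) => y.1 i.castSucc :=
  continuous_pi fun i => coord_continuous i.castSucc

/-- The translation `[z : u] ↦ [z + u v : u]` on vectors. -/
noncomputable def vecTr {n : ℕ} (v : Fin (n + 1) → ℂ) (y : Fin (n + 1 + 1) → ℂ) :
    Fin (n + 1 + 1) → ℂ :=
  Fin.snoc (α := fun _ => ℂ) (fun i : Fin (n + 1) => y i.castSucc + y (Fin.last _) * v i)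
    (y (Fin.last _))

theorem vecTr_last {n : ℕ} (v : Fin (n + 1) → ℂ) (y : Fin (n + 1 + 1) → ℂ) :
    vecTr v y (Fin.last _) = y (Fin.last _) := by simp [vecTr]

theorem vecTr_castSucc {n : ℕ} (v : Fin (n + 1) → ℂ) (y : Fin (n + 1 + 1) → ℂ) (i : Fin (n + 1)) :
    vecTr v y i.castSucc = y i.castSucc + y (Fin.last _) * v i := by simp [vecTr]

theorem vecTr_ne_zero {n : ℕ} (v : Fin (n + 1) → ℂ) (y : Fin (n + 1 + 1) → ℂ) (hy : y ≠ 0) :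
    vecTr v y ≠ 0 := by
  intro h
  apply hy
  have hl : y (Fin.last _) = 0 := by rw [← vecTr_last v y, h]; rfl
  funext i
  refine Fin.lastCases hl (fun i => ?_) i
  have := vecTr_castSucc v y i
  rw [h, hl] at this
  simpa using this.symm

/-- The translation `[z : u] ↦ [z + u v : u]` on projective space. -/
noncomputable def cpTr {n : ℕ} (v : Fin (n + 1) → ℂ) (x : CP (n + 1)) : CP (n + 1) :=
  Quotient.lift (fun y : { y : Fin (n + 1 + 1) → ℂ // y ≠ 0 } =>
      cpMk ⟨vecTr v y.1, vecTr_ne_zero v y.1 y.2⟩) (by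
    intro x y hxy
    obtain ⟨c, hc⟩ := cpMk_eq.1 (Quotient.sound hxy)
    refine cpMk_eq.2 ⟨c, ?_⟩
    funext i
    refine Fin.lastCases ?_ (fun i => ?_) i
    · simp [vecTr_last, ← hc]
    · simp only [Pi.smul_apply, vecTr_castSucc, ← hc, Units.smul_def, smul_eq_mul]
      ring) x

theorem cpTr_mk {n : ℕ} (v : Fin (n + 1) → ℂ) (y : { y : Fin (n + 1 + 1) → ℂ // y ≠ 0 }) :
    cpTr v (cpMk y) = cpMk ⟨vecTr v y.1, vecTr_ne_zero v y.1 y.2⟩ := rfl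

theorem cpTr_continuous {n : ℕ} :
    Continuous (fun q : (Fin (n + 1) → ℂ) × CP (n + 1) => cpTr q.1 q.2) := by
  have hq : IsOpenQuotientMap (Prod.map id cpMk :
      (Fin (n + 1) → ℂ) × _ → (Fin (n + 1) → ℂ) × CP (n + 1)) :=
    IsOpenQuotientMap.id.prodMap cpMk_open
  rw [hq.isQuotientMap.continuous_iff]
  refine cpMk_open.continuous.comp (Continuous.subtype_mk ?_ _)
  refine continuous_pi fun i => ?_
  refine Fin.lastCases ?_ (fun i => ?_) i
  · simp only [vecTr_last]
    exact (coord_continuous _).comp continuous_snd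
  · simp only [vecTr_castSucc]
    exact ((coord_continuous _).comp continuous_snd).add
      (((coord_continuous _).comp continuous_snd).mul
        ((continuous_apply i).comp continuous_fst))

theorem cpTr_zero {n : ℕ} (x : CP (n + 1)) : cpTr 0 x = x := by
  obtain ⟨y, rfl⟩ := cpMk_surj x
  rw [cpTr_mk]
  refine cpMk_eq.2 ⟨1, ?_⟩
  funext i
  refine Fin.lastCases ?_ (fun i => ?_) i
  · simp [vecTr_last]
  · simp [vecTr_castSucc]

theorem cpMk_eq_last {n : ℕ} (y : { y : Fin (n + 1 + 1) → ℂ // y ≠ 0 }) :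
    cpMk y = lastPoint n ↔ ∀ i : Fin (n + 1), y.1 i.castSucc = 0 := by
  have hl : lastPoint n = cpMk ⟨Pi.single (Fin.last (n + 1)) (1 : ℂ), fun h => one_ne_zero (α := ℂ) (by
      have := congrFun h (Fin.last (n + 1))
      rwa [Pi.single_eq_same] at this)⟩ := rfl
  rw [hl, cpMk_eq]
  constructor
  · rintro ⟨c, hc⟩ i
    rw [← hc]
    simp
  · intro h
    have hu : y.1 (Fin.last _) ≠ 0 := by
      intro hu
      apply y.2
      funext i
      exact Fin.lastCases hu h i
    refine ⟨Units.mk0 _ hu, ?_⟩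
    funext i
    refine Fin.lastCases ?_ (fun i => ?_) i
    · simp [Units.smul_def]
    · simp [h]

theorem max_pos_of_ne_zero {n : ℕ} (y : { y : Fin (n + 1 + 1) → ℂ // y ≠ 0 }) :
    0 < max ‖y.1 (Fin.last _)‖ ‖fun i : Fin (n + 1) => y.1 i.castSucc‖ := by
  rw [lt_max_iff]
  by_contra! h
  apply y.2
  have h2 := norm_le_zero_iff.1 h.2
  funext i
  exact Fin.lastCases (norm_le_zero_iff.1 h.1) (fun i => congrFun h2 i) i

/-- Bounded distance-like function to the last point: `‖z‖ / max |u| ‖z‖`. -/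
noncomputable def cpE {n : ℕ} (x : CP (n + 1)) : ℝ :=
  Quotient.lift (fun y : { y : Fin (n + 1 + 1) → ℂ // y ≠ 0 } =>
      ‖fun i : Fin (n + 1) => y.1 i.castSucc‖ /
        max ‖y.1 (Fin.last _)‖ ‖fun i : Fin (n + 1) => y.1 i.castSucc‖) (by
    intro x y hxy
    obtain ⟨c, hc⟩ := cpMk_eq.1 (Quotient.sound hxy)
    have h1 : (fun i : Fin (n + 1) => x.1 i.castSucc) =
        (c : ℂ) • (fun i : Fin (n + 1) => y.1 i.castSucc) := by
      funext i; simp [← hc, Units.smul_def]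
    have h2 : x.1 (Fin.last _) = (c : ℂ) • y.1 (Fin.last _) := by
      simp [← hc, Units.smul_def]
    have hc0 : ‖(c : ℂ)‖ ≠ 0 := by simp
    simp only [h1, h2, norm_smul]
    rw [← mul_max_of_nonneg _ _ (norm_nonneg _), mul_div_mul_left _ _ hc0]) x

theorem cpE_mk {n : ℕ} (y : { y : Fin (n + 1 + 1) → ℂ // y ≠ 0 }) :
    cpE (cpMk y) = ‖fun i : Fin (n + 1) => y.1 i.castSucc‖ /
        max ‖y.1 (Fin.last _)‖ ‖fun i : Fin (n + 1) => y.1 i.castSucc‖ := rfl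

theorem cpE_continuous {n : ℕ} : Continuous (cpE (n := n)) := by
  rw [cpMk_open.isQuotientMap.continuous_iff]
  change Continuous fun y : { y : Fin (n + 1 + 1) → ℂ // y ≠ 0 } =>
    ‖fun i : Fin (n + 1) => y.1 i.castSucc‖ /
        max ‖y.1 (Fin.last _)‖ ‖fun i : Fin (n + 1) => y.1 i.castSucc‖
  refine Continuous.div affinePart_continuous.norm
    ((coord_continuous _).norm.max affinePart_continuous.norm) fun y => (max_pos_of_ne_zero y).ne'

theorem cpE_nonneg {n : ℕ} (x : CP (n + 1)) : 0 ≤ cpE x := by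
  obtain ⟨y, rfl⟩ := cpMk_surj x
  rw [cpE_mk]; positivity

theorem cpE_le_one {n : ℕ} (x : CP (n + 1)) : cpE x ≤ 1 := by
  obtain ⟨y, rfl⟩ := cpMk_surj x
  rw [cpE_mk]
  exact div_le_one_of_le₀ (le_max_right _ _) (max_pos_of_ne_zero y).le

theorem cpE_ne_zero {n : ℕ} (x : CP (n + 1)) (hx : x ≠ lastPoint n) : cpE x ≠ 0 := by
  obtain ⟨y, rfl⟩ := cpMk_surj x
  rw [cpE_mk]
  intro h
  rw [div_eq_zero_iff, or_iff_left (max_pos_of_ne_zero y).ne', norm_eq_zero] at h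
  exact hx ((cpMk_eq_last y).2 fun i => congrFun h i)

/-- Truncated affine coordinate `z ū / max(|u|, ‖z‖)²`. -/
noncomputable def cpPsi {n : ℕ} (x : CP (n + 1)) : Fin (n + 1) → ℂ :=
  Quotient.lift (fun y : { y : Fin (n + 1 + 1) → ℂ // y ≠ 0 } => fun i : Fin (n + 1) =>
      y.1 i.castSucc * (starRingEnd ℂ) (y.1 (Fin.last _)) /
        ((max ‖y.1 (Fin.last _)‖ ‖fun i : Fin (n + 1) => y.1 i.castSucc‖ : ℝ) : ℂ) ^ 2) (by
    intro x y hxy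
    obtain ⟨c, hc⟩ := cpMk_eq.1 (Quotient.sound hxy)
    have h1 : (fun i : Fin (n + 1) => x.1 i.castSucc) =
        (c : ℂ) • (fun i : Fin (n + 1) => y.1 i.castSucc) := by
      funext i; simp [← hc, Units.smul_def]
    have h2 : x.1 (Fin.last _) = (c : ℂ) • y.1 (Fin.last _) := by
      simp [← hc, Units.smul_def]
    have hc0 : (c : ℂ) * (starRingEnd ℂ) (c : ℂ) ≠ 0 := by simp
    funext i
    have h3 := congrFun h1 i
    simp only [Pi.smul_apply] at h3
    simp only [h3, h1, h2, norm_smul]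
    rw [← mul_max_of_nonneg _ _ (norm_nonneg _), smul_eq_mul, smul_eq_mul, map_mul]
    push_cast
    rw [mul_pow, ← Complex.mul_conj']
    refine Eq.trans ?_ (mul_div_mul_left _ _ hc0)
    congr 1
    ring) x

theorem cpPsi_mk {n : ℕ} (y : { y : Fin (n + 1 + 1) → ℂ // y ≠ 0 }) :
    cpPsi (cpMk y) = fun i : Fin (n + 1) => y.1 i.castSucc * (starRingEnd ℂ) (y.1 (Fin.last _)) /
        ((max ‖y.1 (Fin.last _)‖ ‖fun i : Fin (n + 1) => y.1 i.castSucc‖ : ℝ) : ℂ) ^ 2 := rfl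

theorem cpPsi_continuous {n : ℕ} : Continuous (cpPsi (n := n)) := by
  rw [cpMk_open.isQuotientMap.continuous_iff]
  refine continuous_pi fun i => ?_
  change Continuous fun y : { y : Fin (n + 1 + 1) → ℂ // y ≠ 0 } =>
    y.1 i.castSucc * (starRingEnd ℂ) (y.1 (Fin.last _)) /
        ((max ‖y.1 (Fin.last _)‖ ‖fun i : Fin (n + 1) => y.1 i.castSucc‖ : ℝ) : ℂ) ^ 2
  refine Continuous.div ?_ ?_ fun y => ?_
  · exact (coord_continuous _).mul (Complex.continuous_conj.comp (coord_continuous _))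
  · exact (Complex.continuous_ofReal.comp
      ((coord_continuous _).norm.max affinePart_continuous.norm)).pow 2
  · have := (max_pos_of_ne_zero y).ne'
    simpa using this

/-- If a translation by a small vector hits the last point, we know where it came from. -/
theorem cpTr_eq_last {n : ℕ} (v : Fin (n + 1) → ℂ) (hv : ‖v‖ < 1) (x : CP (n + 1))
    (h : cpTr v x = lastPoint n) : cpE x = ‖v‖ ∧ cpPsi x = -v := by
  obtain ⟨y, rfl⟩ := cpMk_surj x
  rw [cpTr_mk, cpMk_eq_last] at h
  simp only [vecTr_castSucc] at h
  have hz : (fun i : Fin (n + 1) => y.1 i.castSucc) = (-y.1 (Fin.last _)) • v := by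
    funext i
    have := h i
    simp only [Pi.smul_apply, smul_eq_mul]
    linear_combination this
  have hu : y.1 (Fin.last _) ≠ 0 := by
    intro hu
    apply y.2
    rw [hu] at hz
    funext i
    refine Fin.lastCases hu (fun i => ?_) i
    simpa using congrFun hz i
  have hu' : ‖y.1 (Fin.last _)‖ ≠ 0 := by simpa using hu
  have hm : max ‖y.1 (Fin.last _)‖ ‖fun i : Fin (n + 1) => y.1 i.castSucc‖ =
      ‖y.1 (Fin.last _)‖ := by
    rw [hz, norm_smul, norm_neg]
    exact max_eq_left (mul_le_of_le_one_right (norm_nonneg _) hv.le)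
  constructor
  · rw [cpE_mk, hm, hz, norm_smul, norm_neg]
    field_simp
  · rw [cpPsi_mk, hm]
    funext i
    have h3 := congrFun hz i
    simp only [Pi.smul_apply, smul_eq_mul] at h3
    rw [← Complex.mul_conj', h3, Pi.neg_apply]
    have : (starRingEnd ℂ) (y.1 (Fin.last _)) ≠ 0 := by simpa using hu
    field_simp

/-! ### General position -/

/-- Collapse the `ε`-ball around `q` to the point `q`. -/
theorem exists_collapse {V : Type} [NormedAddCommGroup V] [NormedSpace ℝ V] (q : V) {ε : ℝ}
    (hε : 0 < ε) : ∃ τ : V → V, Continuous τ ∧ (∀ z, ‖τ z - z‖ ≤ ε) ∧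
      ∀ z ∈ Metric.ball q ε, τ z = q := by
  refine ⟨fun z => z - (ε / max ε ‖z - q‖) • (z - q), ?_, ?_, ?_⟩
  · have : ∀ z : V, max ε ‖z - q‖ ≠ 0 := fun z => (lt_max_of_lt_left hε).ne'
    have h2 : Continuous fun z => ε / max ε ‖z - q‖ :=
      Continuous.div continuous_const (by fun_prop) this
    fun_prop
  · intro z
    have hp : 0 < max ε ‖z - q‖ := lt_max_of_lt_left hε
    rw [sub_sub_cancel_left, norm_neg, norm_smul, Real.norm_of_nonneg (by positivity),
      div_mul_eq_mul_div, div_le_iff₀ hp]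
    exact mul_le_mul_of_nonneg_left (le_max_right _ _) hε.le
  · intro z hz
    rw [mem_ball_iff_norm] at hz
    simp [max_eq_left hz.le, hε.ne']

theorem exists_theta {V : Type} [NormedAddCommGroup V] [NormedSpace ℝ V] (P : Set V)
    (hP : P.Finite) : ∀ δ : ℝ, 0 < δ → ∃ (θ : V → V) (O : Set V), Continuous θ ∧ IsOpen O ∧ P ⊆ O ∧
      (θ '' O).Finite ∧ ∀ z, ‖θ z - z‖ ≤ δ := by
  induction P, hP using Set.Finite.induction_on with
  | empty => exact fun δ hδ => ⟨id, ∅, continuous_id, isOpen_empty, by simp, by simp,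
      fun z => by simpa using hδ.le⟩
  | @insert p P _ _ ih =>
    intro δ hδ
    obtain ⟨θ, O, hθ, hO, hPO, hfin, hd⟩ := ih (δ / 2) (by positivity)
    obtain ⟨τ, hτ, hτd, hτq⟩ := exists_collapse (θ p) (half_pos hδ)
    refine ⟨τ ∘ θ, O ∪ θ ⁻¹' Metric.ball (θ p) (δ / 2), hτ.comp hθ,
      hO.union (Metric.isOpen_ball.preimage hθ), ?_, ?_, ?_⟩
    · rintro x (rfl | hx)
      · right
        exact Metric.mem_ball_self (half_pos hδ)
      · exact Or.inl (hPO hx)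
    · rw [Set.image_union]
      refine Set.Finite.union ?_ ?_
      · rw [Set.image_comp]; exact hfin.image _
      · refine (Set.finite_singleton (θ p)).subset ?_
        rintro _ ⟨z, hz, rfl⟩
        exact hτq _ hz
    · intro z
      calc ‖(τ ∘ θ) z - z‖ = ‖(τ (θ z) - θ z) + (θ z - z)‖ := by simp
        _ ≤ δ / 2 + δ / 2 := (norm_add_le _ _).trans (add_le_add (hτd _) (hd _))
        _ = δ := by ring

open scoped Manifold ContDiff

/-- The general position lemma: approximating the coordinate `ψ` by `h` so that along the
multivalued map `g`, the values of `h` avoid `0`. -/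
theorem exists_general_position {X V E K : Type} [TopologicalSpace X]
    [NormedAddCommGroup V] [NormedSpace ℝ V] [FiniteDimensional ℝ V]
    [NormedAddCommGroup E] [NormedSpace ℝ E] [FiniteDimensional ℝ E]
    [TopologicalSpace K] [CompactSpace K] (j : K → E) (hj : IsInducing j)
    (hdim : Module.finrank ℝ E < Module.finrank ℝ V) {d : ℕ} (g : C(K, SP X d))
    (ψ : X → V) (hψ : Continuous ψ) (δ : ℝ) (hδ : 0 < δ) :
    ∃ h : K → X → V, Continuous (fun q : K × X => h q.1 q.2) ∧
      (∀ t x, ‖h t x - ψ x‖ < δ) ∧ ∀ t, SPAllIn (g t) {x | h t x ≠ 0} := by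
  have hloc : ∀ t0 : K, ∃ (θ : V → V) (O : Set V) (N : Set E), Continuous θ ∧ (θ '' O).Finite ∧
      (∀ z, ‖θ z - z‖ ≤ δ / 2) ∧ IsOpen N ∧ j t0 ∈ N ∧
      ∀ t, j t ∈ N → SPAllIn (g t) (ψ ⁻¹' O) := by
    intro t0
    obtain ⟨f, hf⟩ := spMk_surj (g t0)
    obtain ⟨θ, O, hθ, hO, hPO, hfin, hd⟩ :=
      exists_theta (Set.range (ψ ∘ f)) (Set.finite_range _) (δ / 2) (half_pos hδ)
    have hop : IsOpen (g ⁻¹' {s | SPAllIn s (ψ ⁻¹' O)}) :=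
      (spAllIn_isOpen (hO.preimage hψ)).preimage g.continuous
    obtain ⟨N, hN, hNe⟩ := hj.isOpen_iff.1 hop
    refine ⟨θ, O, N, hθ, hfin, hd, hN, ?_, ?_⟩
    · have : t0 ∈ j ⁻¹' N := by
        rw [hNe]
        change SPAllIn (g t0) _
        rw [← hf, spAllIn_mk]
        exact fun i => hPO ⟨i, rfl⟩
      exact this
    · intro t ht
      have : t ∈ j ⁻¹' N := ht
      rw [hNe] at this
      exact this
  choose θ O N hθ hfin hd hN hmem hall using hloc
  have hcomp : IsCompact (Set.range j) := isCompact_range hj.continuous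
  obtain ⟨T, hT⟩ := hcomp.elim_finite_subcover N hN (by
    rintro _ ⟨t, rfl⟩
    exact Set.mem_iUnion.2 ⟨t, hmem t⟩)
  obtain ⟨lam, hlam⟩ := SmoothPartitionOfUnity.exists_isSubordinate 𝓘(ℝ, E)
    hcomp.isClosed (fun a : T => N a.1) (fun a => hN _) (by
      intro x hx
      obtain ⟨t, ht⟩ := Set.mem_iUnion.1 (hT hx)
      obtain ⟨ht1, ht2⟩ := Set.mem_iUnion.1 ht
      exact Set.mem_iUnion.2 ⟨⟨t, ht1⟩, ht2⟩)
  have hsum : ∀ t : K, ∑ a : T, lam a (j t) = 1 := by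
    intro t
    rw [← finsum_eq_sum_of_fintype]
    exact lam.sum_eq_one ⟨t, rfl⟩
  let h0 : K → X → V := fun t x => ∑ a : T, lam a (j t) • θ a.1 (ψ x)
  have hlc : ∀ a, ContDiff ℝ 1 (fun e => lam a e) := fun a =>
    ((lam a).contMDiff.contDiff).of_le (by exact_mod_cast le_top)
  -- the bad set
  let C : T → Set V := fun a => insert 0 (θ a.1 '' O a.1)
  have hC : ∀ a, (C a).Finite := fun a => (hfin a.1).insert 0
  have : ∀ a, Finite (C a) := fun a => (hC a).to_subtype
  let bad : Set V := ⋃ c : (∀ a, C a), Set.range (fun e : E => ∑ a : T, lam a e • (c a : V))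
  have hbad : Dense badᶜ := by
    apply dense_compl_of_dimH_lt_finrank
    refine lt_of_le_of_lt (b := (Module.finrank ℝ E : ENNReal)) ?_ (by exact_mod_cast hdim)
    rw [dimH_iUnion]
    refine iSup_le fun c => ?_
    apply ContDiff.dimH_range_le
    exact ContDiff.sum fun a _ => (hlc a).smul contDiff_const
  obtain ⟨v, hvb, hv⟩ := hbad.exists_dist_lt 0 (half_pos hδ)
  rw [dist_zero_left] at hv
  refine ⟨fun t x => h0 t x - v, ?_, ?_, ?_⟩
  · refine Continuous.sub ?_ continuous_const
    refine continuous_finsetSum _ fun a _ => ?_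
    refine Continuous.smul ?_ ?_
    · exact (hlc a).continuous.comp (hj.continuous.comp continuous_fst)
    · exact (hθ a.1).comp (hψ.comp continuous_snd)
  · intro t x
    have e1 : h0 t x - ψ x = ∑ a : T, lam a (j t) • (θ a.1 (ψ x) - ψ x) := by
      simp only [smul_sub, Finset.sum_sub_distrib, ← Finset.sum_smul, hsum, one_smul, h0]
    have e2 : ‖h0 t x - ψ x‖ ≤ δ / 2 := by
      rw [e1]
      calc _ ≤ ∑ a : T, lam a (j t) * (δ / 2) := by
            refine norm_sum_le_of_le _ fun a _ => ?_
            rw [norm_smul, Real.norm_of_nonneg (lam.nonneg a _)]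
            exact mul_le_mul_of_nonneg_left (hd _ _) (lam.nonneg a _)
        _ = δ / 2 := by rw [← Finset.sum_mul, hsum, one_mul]
    calc ‖h0 t x - v - ψ x‖ = ‖(h0 t x - ψ x) - v‖ := by congr 1; abel
      _ ≤ ‖h0 t x - ψ x‖ + ‖v‖ := norm_sub_le _ _
      _ < δ := by linarith
  · intro t f hf i hzero
    apply hvb
    have hv0 : h0 t (f i) = v := sub_eq_zero.1 hzero
    classical
    refine Set.mem_iUnion.2 ⟨fun a => if hm : j t ∈ N a.1 then
      ⟨θ a.1 (ψ (f i)), Or.inr ⟨_, hall a.1 t hm f hf i, rfl⟩⟩ else ⟨0, Or.inl rfl⟩, j t, ?_⟩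
    rw [← hv0]
    refine Finset.sum_congr rfl fun a _ => ?_
    by_cases hm : j t ∈ N a.1
    · simp [hm]
    · have : lam a (j t) = 0 := by
        by_contra hne
        exact hm (hlam a (subset_tsupport _ hne))
      simp [this]

/-- The deformation lemma. -/
theorem exists_deformation {n d : ℕ} {E K : Type}
    [NormedAddCommGroup E] [NormedSpace ℝ E] [FiniteDimensional ℝ E]
    [TopologicalSpace K] [CompactSpace K] (j : K → E) (hj : IsInducing j)
    (hdim : Module.finrank ℝ E ≤ 2 * n + 1) (g : C(K, SP (CP (n + 1)) d))
    (B : Set K) (hB : IsClosed B) (hgB : ∀ t ∈ B, SPAvoids (g t) (lastPoint n)) :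
    ∃ H : C(I × K, SP (CP (n + 1)) d), (∀ t, H (0, t) = g t) ∧
      (∀ s, ∀ t ∈ B, H (s, t) = g t) ∧ ∀ t, SPAvoids (H (1, t)) (lastPoint n) := by
  have hr : Continuous fun t => spProd cpE (g t) :=
    (spProd_continuous cpE_continuous).comp g.continuous
  obtain ⟨δ, hδ, hδ1, hδB⟩ : ∃ δ : ℝ, 0 < δ ∧ δ ≤ 1 ∧ ∀ t ∈ B, 2 * δ ≤ spProd cpE (g t) := by
    have hpos : ∀ t ∈ B, 0 < spProd cpE (g t) := by
      intro t ht
      have h1 := hgB t ht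
      obtain ⟨f, hf⟩ := spMk_surj (g t)
      rw [← hf, spAvoids_mk] at h1
      rw [← hf, spProd_mk]
      exact Finset.prod_pos fun i _ =>
        lt_of_le_of_ne (cpE_nonneg _) (cpE_ne_zero _ (h1 i)).symm
    obtain ⟨ε, hε, hεB⟩ := hB.isCompact.exists_forall_le' (a := (0 : ℝ)) hr.continuousOn hpos
    refine ⟨min 1 (ε / 2), by positivity, min_le_left _ _, fun t ht => ?_⟩
    have := hεB t ht
    have h2 := min_le_right 1 (ε / 2)
    linarith
  have hfin : Module.finrank ℝ E < Module.finrank ℝ (Fin (n + 1) → ℂ) := by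
    rw [Module.finrank_pi_fintype]
    simp [Complex.finrank_real_complex]
    omega
  obtain ⟨h, hh, hclose, hne⟩ := exists_general_position j hj hfin g
    (cpPsi (n := n)) cpPsi_continuous δ hδ
  let κ : K → ℝ := fun t => max 0 (min 1 (2 - spProd cpE (g t) / δ))
  have hκ : Continuous κ := by fun_prop
  have hκ0 : ∀ t, 0 ≤ κ t := fun t => le_max_left _ _
  have hκ1 : ∀ t, κ t ≤ 1 := fun t => max_le zero_le_one (min_le_left _ _)
  have hκB : ∀ t ∈ B, κ t = 0 := by
    intro t ht
    have h1 : 2 ≤ spProd cpE (g t) / δ := by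
      rw [le_div_iff₀ hδ]; exact hδB t ht
    exact max_eq_left ((min_le_right _ _).trans (by linarith))
  have hκone : ∀ t, spProd cpE (g t) ≤ δ → κ t = 1 := by
    intro t ht
    have h1 : spProd cpE (g t) / δ ≤ 1 := by
      rw [div_le_iff₀ hδ]; simpa using ht
    have h2 : min 1 (2 - spProd cpE (g t) / δ) = 1 := min_eq_left (by linarith)
    change max 0 (min 1 (2 - spProd cpE (g t) / δ)) = 1
    rw [h2]; simp
  let F : I × K → CP (n + 1) → CP (n + 1) := fun p x =>
    cpTr (((p.1 : ℝ) * κ p.2) • (h p.2 x - cpPsi x)) x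
  have hF : Continuous fun q : (I × K) × CP (n + 1) => F q.1 q.2 := by
    refine cpTr_continuous.comp (Continuous.prodMk ?_ continuous_snd)
    have c1 : Continuous fun q : (I × K) × CP (n + 1) => (q.1.1 : ℝ) * κ q.1.2 := by fun_prop
    have c2 : Continuous fun q : (I × K) × CP (n + 1) => h q.1.2 q.2 :=
      hh.comp (continuous_fst.snd.prodMk continuous_snd)
    have c3 : Continuous fun q : (I × K) × CP (n + 1) => cpPsi q.2 :=
      cpPsi_continuous.comp continuous_snd
    exact c1.smul (c2.sub c3)
  have hzero : ∀ (s : I) (t : K), (s : ℝ) * κ t = 0 → spPush (F (s, t)) (g t) = g t := by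
    intro s t hst
    obtain ⟨f, hf⟩ := spMk_surj (g t)
    rw [← hf, spPush_mk]
    congr 1
    funext i
    simp only [F, hst, zero_smul, cpTr_zero]
  have hcont : Continuous fun p : I × K => spPush (F p) (g p.2) :=
    spPush_continuous_comp hF (g.continuous.comp continuous_snd)
  refine ⟨⟨fun p => spPush (F p) (g p.2), ?_⟩, ?_, ?_, ?_⟩
  · exact hcont
  · intro t
    exact hzero 0 t (by simp)
  · intro s t ht
    exact hzero s t (by simp [hκB t ht])
  · intro t
    change SPAvoids (spPush (F (1, t)) (g t)) (lastPoint n)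
    obtain ⟨f, hf⟩ := spMk_surj (g t)
    have hnet := hne t f hf
    rw [← hf, spPush_mk, spAvoids_mk]
    intro i hi
    simp only [F, Set.Icc.coe_one, one_mul] at hi
    have hn : ‖κ t • (h t (f i) - cpPsi (f i))‖ < δ := by
      rw [norm_smul, Real.norm_of_nonneg (hκ0 t)]
      exact lt_of_le_of_lt (mul_le_of_le_one_left (norm_nonneg _) (hκ1 t)) (hclose _ _)
    obtain ⟨he, hp⟩ := cpTr_eq_last _ (hn.trans_le hδ1) _ hi
    have hle : spProd cpE (g t) ≤ δ := by
      rw [← hf, spProd_mk]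
      refine le_trans ?_ (he.trans_lt hn).le
      rw [← Finset.mul_prod_erase _ _ (Finset.mem_univ i)]
      exact mul_le_of_le_one_right (cpE_nonneg _)
        (Finset.prod_le_one (fun _ _ => cpE_nonneg _) fun _ _ => cpE_le_one _)
    rw [hκone t hle, one_smul] at hp
    apply hnet i
    have : h t (f i) - cpPsi (f i) = - cpPsi (f i) := (neg_eq_iff_eq_neg.2 hp).symm
    simpa using this

theorem isClosed_cube_boundary (k : ℕ) : IsClosed (Cube.boundary (Fin k)) := by
  have : Cube.boundary (Fin k) = ⋃ i, {y : Fin k → I | y i = 0 ∨ y i = 1} := by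
    ext y; simp [Cube.boundary]
  rw [this]
  refine isClosed_iUnion_of_finite fun i => ?_
  exact (isClosed_eq (continuous_apply i) continuous_const).union
    (isClosed_eq (continuous_apply i) continuous_const)

theorem isInducing_cube (k : ℕ) :
    IsInducing (fun (y : Fin k → I) (i : Fin k) => (y i : ℝ)) :=
  IsInducing.piMap (fun _ : Fin k => IsInducing.subtypeVal)

/-- **Lemma 3.10** (case `p = 0`): the inclusion `U_{0,d}(ℙ^{n+1}) ↪ SP^d(ℂP^{n+1})` of the
subspace of unordered `d`-tuples avoiding `p₀ = [0 : ⋯ : 0 : 1]` is `2n`-connected: it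
induces isomorphisms on homotopy groups `π_k` for all `0 ≤ k ≤ 2n` (at every basepoint). -/
theorem inclusion_U_sp_cp_connected (n d : ℕ) (hd : 1 ≤ d) :
    ∀ k : ℕ, k ≤ 2 * n →
      ∀ u : { s : SP (CP (n + 1)) d // SPAvoids s (lastPoint n) },
        Function.Bijective
          (HomotopyGroup.inducedMap (Fin k)
            (⟨Subtype.val, continuous_subtype_val⟩ :
              C({ s : SP (CP (n + 1)) d // SPAvoids s (lastPoint n) }, SP (CP (n + 1)) d))
            u) := by
  intro k hk u
  constructor
  · intro a b
    refine Quotient.inductionOn₂ a b ?_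
    intro p q hpq
    obtain ⟨G⟩ := Quotient.exact hpq
    let B : Set (I × (Fin k → I)) :=
      {x | x.1 = 0 ∨ x.1 = 1 ∨ x.2 ∈ Cube.boundary (Fin k)}
    have hB : IsClosed B :=
      (isClosed_eq continuous_fst continuous_const).union
        ((isClosed_eq continuous_fst continuous_const).union
          ((isClosed_cube_boundary k).preimage continuous_snd))
    have hG0 : ∀ y, G (0, y) = (p.1 y).1 := fun y => G.apply_zero y
    have hG1 : ∀ y, G (1, y) = (q.1 y).1 := fun y => G.apply_one y
    have hGb : ∀ s, ∀ y ∈ Cube.boundary (Fin k), G (s, y) = (p.1 y).1 := fun s y hy => G.eq_fst s hy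
    obtain ⟨H, -, H2, H3⟩ := exists_deformation (n := n) (d := d)
      (Prod.map Subtype.val (fun (y : Fin k → I) (i : Fin k) => (y i : ℝ)) :
        I × (Fin k → I) → ℝ × (Fin k → ℝ))
      (IsInducing.subtypeVal.prodMap (isInducing_cube k))
      (by simp; omega) G.toContinuousMap B hB (by
        rintro ⟨s, y⟩ (h | h | h)
        · simp only at h
          subst h
          exact (hG0 y).symm ▸ (p.1 y).2
        · simp only at h
          subst h
          exact (hG1 y).symm ▸ (q.1 y).2
        · exact (hGb s y h).symm ▸ (p.1 y).2)
    refine Quotient.sound ⟨⟨⟨⟨fun x => ⟨H (1, x), H3 x⟩, ?_⟩, ?_, ?_⟩, ?_⟩⟩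
    · exact Continuous.subtype_mk (by fun_prop) _
    · intro y
      exact Subtype.ext ((H2 1 (0, y) (Or.inl rfl)).trans (hG0 y))
    · intro y
      exact Subtype.ext ((H2 1 (1, y) (Or.inr (Or.inl rfl))).trans (hG1 y))
    · intro s y hy
      exact Subtype.ext ((H2 1 (s, y) (Or.inr (Or.inr hy))).trans (hGb s y hy))
  · intro b
    refine Quotient.inductionOn b ?_
    intro p
    obtain ⟨H, H1, H2, H3⟩ := exists_deformation (n := n) (d := d)
      (fun (y : Fin k → I) (i : Fin k) => (y i : ℝ)) (isInducing_cube k)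
      (by simp; omega) p.1 _ (isClosed_cube_boundary k) (by
        intro y hy
        rw [p.2 y hy]
        exact u.2)
    refine ⟨Quotient.mk _ ⟨⟨fun y => ⟨H (1, y), H3 y⟩,
      Continuous.subtype_mk (by fun_prop) _⟩, ?_⟩, ?_⟩
    · intro y hy
      exact Subtype.ext ((H2 1 y hy).trans (p.2 y hy))
    · refine Quotient.sound (Setoid.symm ?_)
      refine ⟨⟨⟨H, ?_, ?_⟩, ?_⟩⟩
      · exact H1
      · intro y; rfl
      · intro s y hy
        exact H2 s y hy
end
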